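/- arXiv:2102.04203 — 2 statements merged into one kernel-verified Lean document; each statement's English description precedes it below -/
import Mathlib

section
/- Let G be a (possibly infinite) graph and let T ⊆ V(G) be countable such that there is no X ⊆ V(G)∖T for which d_G(X) is an odd natural number. Assume that for each t ∈ T there is a system 𝒫_t of pairwise edge-disjoint T-paths covering all the edges incident with t. Then there exists a single system 𝒫 of pairwise edge-disjoint T-paths covering all the edges incident with any t ∈ T. -/
/-!
Common definitions: multigraphs (parallel edges allowed, no loops), walks,
paths, cuts, waves and related notions used in the statements below.
-/

universe u v

/-- A multigraph with vertex type `V` and edge type `E`: every edge is assigned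
an unordered pair of *distinct* end-vertices (parallel edges allowed, no loops). -/
structure Multigraph (V : Type u) (E : Type v) : Type (max u v) where
  inc : E → Sym2 V
  not_isDiag : ∀ e, ¬ (inc e).IsDiag

namespace Multigraph

variable {V : Type u} {E : Type v}

/-- Walks in a multigraph, recorded together with the edges they traverse. -/
inductive Walk (G : Multigraph V E) : V → V → Type (max u v)
  | nil (v : V) : Walk G v v
  | cons {u v w : V} (e : E) (he : G.inc e = s(u, v)) (p : Walk G v w) : Walk G u w

namespace Walk

variable {G : Multigraph V E}

/-- The list of vertices visited by a walk. -/
def support : ∀ {u w : V}, G.Walk u w → List V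
  | _, _, .nil v => [v]
  | u, _, .cons _ _ p => u :: p.support

/-- The list of edges traversed by a walk. -/
def edges : ∀ {u w : V}, G.Walk u w → List E
  | _, _, .nil _ => []
  | _, _, .cons e _ p => e :: p.edges

end Walk

/-- `δ_G(v)`: the set of edges incident with the vertex `v`. -/
def inci (G : Multigraph V E) (v : V) : Set E := {e | v ∈ G.inc e}

/-- `δ_G(X)`: the set of edges with exactly one end-vertex in `X`. -/
def cut (G : Multigraph V E) (X : Set V) : Set E :=
  {e | ∃ x y, G.inc e = s(x, y) ∧ x ∈ X ∧ y ∉ X}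

/-- Connectedness of a multigraph. -/
def Connected (G : Multigraph V E) : Prop := ∀ u v : V, Nonempty (G.Walk u v)

/-- A `T`-path: a path connecting two distinct vertices of `T`
with no internal vertex in `T`. -/
structure TPath (G : Multigraph V E) (T : Set V) : Type (max u v) where
  first : V
  last : V
  walk : G.Walk first last
  first_mem : first ∈ T
  last_mem : last ∈ T
  ne : first ≠ last
  support_nodup : walk.support.Nodup
  internal : ∀ x ∈ walk.support, x ∈ T → x = first ∨ x = last

/-- A system of pairwise edge-disjoint `T`-paths. -/
def TPathDisjoint (G : Multigraph V E) {T : Set V} (P : Set (G.TPath T)) : Prop :=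
  ∀ p ∈ P, ∀ q ∈ P, p ≠ q → ∀ e, e ∈ p.walk.edges → e ∉ q.walk.edges

/-- An `st`-path: a path from `s` to `t` (no internal vertex is `s` or `t`,
which is automatic as the vertices of a path are distinct). -/
structure STPath (G : Multigraph V E) (s t : V) : Type (max u v) where
  walk : G.Walk s t
  support_nodup : walk.support.Nodup

/-- A system of pairwise edge-disjoint `st`-paths. -/
def STPathDisjoint (G : Multigraph V E) {s t : V} (P : Set (G.STPath s t)) : Prop :=
  ∀ p ∈ P, ∀ q ∈ P, p ≠ q → ∀ e, e ∈ p.walk.edges → e ∉ q.walk.edges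

/-- A nontrivial path starting at `s`. -/
structure SPath (G : Multigraph V E) (s : V) : Type (max u v) where
  last : V
  walk : G.Walk s last
  support_nodup : walk.support.Nodup
  edges_ne_nil : walk.edges ≠ []

/-- A system of pairwise edge-disjoint paths starting at `s`. -/
def SPathDisjoint (G : Multigraph V E) {s : V} (W : Set (G.SPath s)) : Prop :=
  ∀ p ∈ W, ∀ q ∈ W, p ≠ q → ∀ e, e ∈ p.walk.edges → e ∉ q.walk.edges

/-- The set of last edges of a system of paths starting at `s`. -/
def lastEdges (G : Multigraph V E) {s : V} (W : Set (G.SPath s)) : Set E :=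
  {e | ∃ p ∈ W, p.walk.edges.getLast? = some e}

/-- `C` is a cut separating `A` from `B`. -/
def SepCut (G : Multigraph V E) (A B : Set V) (C : Set E) : Prop :=
  ∃ X : Set V, A ⊆ X ∧ (∀ b ∈ B, b ∉ X) ∧ C = G.cut X

/-- `C` is a `⊆`-minimal cut separating `A` from `B`. -/
def IsMinSepCut (G : Multigraph V E) (A B : Set V) (C : Set E) : Prop :=
  G.SepCut A B C ∧ ∀ D : Set E, G.SepCut A B D → D ⊆ C → D = C

/-- An `s`-`B`-wave: a system of pairwise edge-disjoint paths starting at `s`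
whose set of last edges is a `⊆`-minimal cut separating `s` from `B`. -/
def IsWave (G : Multigraph V E) (s : V) (B : Set V) (W : Set (G.SPath s)) : Prop :=
  G.SPathDisjoint W ∧ G.IsMinSepCut {s} B (G.lastEdges W)

/-- An Erdős–Menger `st`-cut: an `st`-cut which is orthogonal to some system of
pairwise edge-disjoint `st`-paths, i.e. it consists of exactly one edge chosen
from each path of the system. -/
def IsEMCut (G : Multigraph V E) (s t : V) (C : Set E) : Prop :=
  (∃ X : Set V, s ∈ X ∧ t ∉ X ∧ C = G.cut X) ∧
  ∃ P : Set (G.STPath s t), G.STPathDisjoint P ∧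
    (∀ p ∈ P, ∃! e, e ∈ C ∧ e ∈ p.walk.edges) ∧
    (∀ e ∈ C, ∃ p ∈ P, e ∈ p.walk.edges)

/-- The order `≼` on `st`-cuts: the `s`-side of `C` is contained in the
`s`-side of `D` (in a connected graph the `s`-side is unique). -/
def CutLE (G : Multigraph V E) (s t : V) (C D : Set E) : Prop :=
  ∃ X Y : Set V, s ∈ X ∧ t ∉ X ∧ C = G.cut X ∧ s ∈ Y ∧ t ∉ Y ∧ D = G.cut Y ∧ X ⊆ Y

/-- A cut of the form `C_W` for some `st`-wave `W`. -/
def IsWaveCut (G : Multigraph V E) (s t : V) (C : Set E) : Prop :=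
  ∃ W : Set (G.SPath s), G.IsWave s {t} W ∧ G.lastEdges W = C

/-- Deletion of a set of edges. -/
def deleteEdges (G : Multigraph V E) (F : Set E) : Multigraph V {e : E // e ∉ F} where
  inc e := G.inc e.1
  not_isDiag e := G.not_isDiag e.1

open Classical in
/-- Contraction of the vertex set `X` to the vertex `s` (edges inside `X` are
deleted, edges leaving `X` are redirected to `s`). -/
noncomputable def contract (G : Multigraph V E) (X : Set V) (s : V) :
    Multigraph V {e : E // ¬ (Sym2.map (fun v => if v ∈ X then s else v) (G.inc e)).IsDiag} where
  inc e := Sym2.map (fun v => if v ∈ X then s else v) (G.inc e.1)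
  not_isDiag e := e.2

/-- Reachability inside a set `S` of vertices. -/
def ReachableIn (G : Multigraph V E) (S : Set V) (x y : V) : Prop :=
  ∃ p : G.Walk x y, ∀ z ∈ p.support, z ∈ S

/-- `Y` is (the vertex set of) a connected component of the subgraph of `G`
induced by `S`. -/
def IsComponentOf (G : Multigraph V E) (Y S : Set V) : Prop :=
  Y.Nonempty ∧ Y ⊆ S ∧ ∀ x ∈ Y, ∀ y ∈ S, (G.ReachableIn S x y ↔ y ∈ Y)

/-- A cycle in a multigraph (a closed walk with distinct edges whose
vertices are distinct except that the first one equals the last one). -/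
structure Cycle (G : Multigraph V E) : Type (max u v) where
  base : V
  walk : G.Walk base base
  edges_ne_nil : walk.edges ≠ []
  edges_nodup : walk.edges.Nodup
  support_tail_nodup : walk.support.tail.Nodup

/-- A graph is Eulerian if its edge set can be partitioned into
edge sets of cycles. -/
def IsEulerian (G : Multigraph V E) : Prop :=
  ∃ C : Set G.Cycle,
    (∀ c ∈ C, ∀ d ∈ C, c ≠ d → ∀ e, e ∈ c.walk.edges → e ∉ d.walk.edges) ∧
    ∀ e : E, ∃ c ∈ C, e ∈ c.walk.edges

/-- A `T`-partition: a family `{A t : t ∈ T}` of pairwise disjoint vertex sets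
with `A t ∩ T = {t}`. -/
def IsTPartition (T : Set V) (A : V → Set V) : Prop :=
  (∀ t ∈ T, A t ∩ T = {t}) ∧
  ∀ t₁ ∈ T, ∀ t₂ ∈ T, t₁ ≠ t₂ → Disjoint (A t₁) (A t₂)

end Multigraph

/-!
Call `t ∈ T` linked if edge-disjoint trails, one through every edge at `t`, lead from `t` to other
vertices of `T`; such trails form a fan. The heart of the proof is that every edge `e` at `s ∈ T`
begins a trail to another vertex of `T` whose deletion keeps all vertices of `T` linked. Let `e`
and `f` be the first edges of a route of the fan at `s`, say `e = sv` and `f = vw` with `v ∉ T`.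

* If the vertices of `T` other than `s` stay linked when `e` is deleted, split off `e` and `f` into
  a single edge `sw`, which shortens the route. Linkages survive by parity: if a fan has one open
  route, not yet ending in `T`, and the open end cannot be joined to `T` by unused edges, then its
  component of unused edges has an infinite cut, since the cut would otherwise be odd. So infinitely
  many other routes are available for switching, no route need be opened twice, and the fans
  converge to a fan without open route.
* If some `t` ceases to be linked, take the fan of `t` with its route through `e` cut off at `v`.
  The residual graph of this fan does not lead from `v` to `T`, so the vertices it reaches,
  together with `t`, form a set `X` with `X ∩ T = {t}` whose boundary is orthogonal to the fan.
  Delete `e` and the open route back to `t`: the fans of the other vertices of `T` can be completed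
  inside `X` along the fan of `t`.

For countably many edges such trails are deleted one after the other. In general, identify `T` to
one vertex. The edge set is partitioned into countable sets without odd cuts, by a transfinite
sequence of hulls closed under maximal families of disjoint finite connectors. The coarser partition
which also respects the routes of one fan for each `t ∈ T` still has countable classes, as `T` is
countable, and every class satisfies the hypotheses.
-/

namespace LovaszCherkassky

variable {V : Type u} {E : Type v}

section Walks

/-- `IsChainFrom S u l`: the list `l` of steps (an edge together with the vertex it leads to)
starts at `u` and each of its steps satisfies `S`. -/
def IsChainFrom (S : V → E → V → Prop) : V → List (E × V) → Prop
  | _, [] => True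
  | u, (e, x) :: l => S u e x ∧ IsChainFrom S x l

/-- The vertex at which a list of steps from `u` ends. -/
def endpoint : V → List (E × V) → V
  | u, [] => u
  | _, (_, x) :: l => endpoint x l

/-- The edges of a list of steps. -/
def edges (l : List (E × V)) : List E := l.map Prod.fst

/-- The vertices of a list of steps, without the starting vertex. -/
def verts (l : List (E × V)) : List V := l.map Prod.snd

/-- Walks from `u` in the graph whose edges have the ends given by `inc`. The map `inc` is kept
apart from the edge type, and may have loops, so that splitting off and contracting only
change `inc`. -/
abbrev IsWalk (inc : E → Sym2 V) (u : V) (l : List (E × V)) : Prop :=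
  IsChainFrom (fun u e x => inc e = s(u, x)) u l

variable {S S' : V → E → V → Prop} {inc inc' : E → Sym2 V} {u x : V} {e : E} {l m : List (E × V)}
  {p : E × V}

@[simp] lemma edges_nil : edges ([] : List (E × V)) = [] := rfl

@[simp] lemma verts_nil : verts ([] : List (E × V)) = [] := rfl

@[simp] lemma edges_cons : edges (p :: l) = p.1 :: edges l := rfl

@[simp] lemma verts_cons : verts (p :: l) = p.2 :: verts l := rfl

@[simp] lemma edges_append : edges (l ++ m) = edges l ++ edges m := List.map_append

@[simp] lemma verts_append : verts (l ++ m) = verts l ++ verts m := List.map_append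

@[simp] lemma endpoint_nil : endpoint u ([] : List (E × V)) = u := rfl

@[simp] lemma endpoint_cons : endpoint u (p :: l) = endpoint p.2 l := rfl

@[simp] lemma endpoint_append : endpoint u (l ++ m) = endpoint (endpoint u l) m := by
  induction l generalizing u with
  | nil => rfl
  | cons _ _ ih => exact ih

@[simp] lemma isChainFrom_nil : IsChainFrom S u [] := trivial

@[simp] lemma isChainFrom_cons : IsChainFrom S u (p :: l) ↔ S u p.1 p.2 ∧ IsChainFrom S p.2 l :=
  Iff.rfl

@[simp] lemma isChainFrom_append :
    IsChainFrom S u (l ++ m) ↔ IsChainFrom S u l ∧ IsChainFrom S (endpoint u l) m := by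
  induction l generalizing u with
  | nil => simp
  | cons p l ih => simp [ih, and_assoc]

lemma edges_subset (h : l ⊆ m) : edges l ⊆ edges m := List.map_subset _ h

lemma endpoint_mem_cons_verts : endpoint u l ∈ u :: verts l := by
  induction l generalizing u with
  | nil => simp
  | cons p l ih => exact List.mem_cons_of_mem _ ih

lemma endpoint_mem_verts (h : l ≠ []) : endpoint u l ∈ verts l := by
  cases l with
  | nil => exact absurd rfl h
  | cons p l => exact endpoint_mem_cons_verts

lemma exists_append_of_mem_verts (u : V) (h : x ∈ verts l) :
    ∃ a b, l = a ++ b ∧ endpoint u a = x ∧ a ≠ [] := by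
  obtain ⟨p, hp, rfl⟩ := List.mem_map.1 h
  obtain ⟨a, b, rfl⟩ := List.append_of_mem hp
  exact ⟨a ++ [p], b, by simp, by simp, by simp⟩

lemma exists_append_of_mem_edges (h : e ∈ edges l) : ∃ a x b, l = a ++ (e, x) :: b := by
  obtain ⟨p, hp, rfl⟩ := List.mem_map.1 h
  obtain ⟨a, b, rfl⟩ := List.append_of_mem hp
  exact ⟨a, p.2, b, rfl⟩

lemma IsChainFrom.mono (h : IsChainFrom S u l)
    (hS : ∀ u, ∀ p ∈ l, S u p.1 p.2 → S' u p.1 p.2) : IsChainFrom S' u l := by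
  induction l generalizing u with
  | nil => trivial
  | cons p l ih =>
    exact ⟨hS _ _ List.mem_cons_self h.1, ih h.2 fun u q hq => hS u q (List.mem_cons_of_mem _ hq)⟩

lemma IsWalk.congr (h : IsWalk inc u l) (hinc : ∀ e ∈ edges l, inc e = inc' e) :
    IsWalk inc' u l :=
  IsChainFrom.mono h fun _ _ hp hS => hinc _ (List.mem_map_of_mem hp) ▸ hS

lemma IsChainFrom.exists_loopErasure (h : IsChainFrom S u l) :
    ∃ m, IsChainFrom S u m ∧ endpoint u m = endpoint u l ∧ m ⊆ l ∧ (u :: verts m).Nodup := by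
  classical
  induction l generalizing u with
  | nil => exact ⟨[], by simp⟩
  | cons p l ih =>
    obtain ⟨m, hm, hend, hsub, hnd⟩ := ih h.2
    by_cases hu : u ∈ p.2 :: verts m
    · rcases List.mem_cons.1 hu with rfl | hu
      · exact ⟨m, hm, hend, List.subset_cons_of_subset _ hsub, hnd⟩
      obtain ⟨a, b, rfl, rfl, -⟩ := exists_append_of_mem_verts p.2 hu
      rw [isChainFrom_append] at hm
      rw [endpoint_append] at hend
      refine ⟨b, hm.2, hend, ?_, ?_⟩
      · exact List.subset_cons_of_subset _ fun q hq => hsub (List.mem_append_right _ hq)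
      · rw [verts_append, ← List.cons_append] at hnd
        have hdisj := List.nodup_append.1 hnd
        exact List.nodup_cons.2
          ⟨fun hb => hdisj.2.2 _ endpoint_mem_cons_verts _ hb rfl, hdisj.2.1⟩
    · exact ⟨p :: m, ⟨h.1, hm⟩, hend, List.cons_subset_cons _ hsub, List.nodup_cons.2 ⟨hu, hnd⟩⟩

lemma IsWalk.mem_cons_verts (h : IsWalk inc u l) (he : e ∈ edges l) (hx : x ∈ inc e) :
    x ∈ u :: verts l := by
  obtain ⟨a, y, b, rfl⟩ := exists_append_of_mem_edges he
  simp only [isChainFrom_append, isChainFrom_cons] at h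
  rw [h.2.1] at hx
  rcases Sym2.mem_iff.1 hx with rfl | rfl
  · have := endpoint_mem_cons_verts (u := u) (l := a)
    simp only [List.mem_cons, verts_append, List.mem_append] at this ⊢
    tauto
  · simp

lemma IsWalk.edges_nodup (h : IsWalk inc u l) (hnd : (u :: verts l).Nodup) :
    (edges l).Nodup := by
  induction l generalizing u with
  | nil => simp
  | cons p l ih =>
    obtain ⟨hu, hnd⟩ := List.nodup_cons.1 hnd
    refine List.nodup_cons.2 ⟨fun hp => hu ?_, ih h.2 hnd⟩
    exact IsWalk.mem_cons_verts h.2 hp (h.1 ▸ Sym2.mem_mk_left _ _)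

lemma IsWalk.exists_reverse (h : IsWalk inc u l) :
    ∃ m, IsWalk inc (endpoint u l) m ∧ endpoint (endpoint u l) m = u ∧
      edges m = (edges l).reverse ∧ endpoint u l :: verts m = (u :: verts l).reverse := by
  induction l generalizing u with
  | nil => exact ⟨[], by simp⟩
  | cons p l ih =>
    obtain ⟨m, hm, hend, hedges, hverts⟩ := ih h.2
    refine ⟨m ++ [(p.1, u)], ?_, by simp, by simp [hedges], ?_⟩
    · simp only [endpoint_cons, isChainFrom_append, hend]
      exact ⟨hm, h.1.trans Sym2.eq_swap, trivial⟩
    · simp only [endpoint_cons, verts_append, ← List.cons_append, hverts]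
      simp

end Walks

section Cuts

/-- `δ(X)` for the graph given by `inc`; for a multigraph `G` this is `G.cut X`. -/
def cut (inc : E → Sym2 V) (X : Set V) : Set E :=
  {e | ∃ x y, inc e = s(x, y) ∧ x ∈ X ∧ y ∉ X}

/-- No set of vertices avoiding `T` has an odd finite cut in the subgraph with edge set `A`. -/
def EvenCuts (inc : E → Sym2 V) (A : Set E) (T : Set V) : Prop :=
  ∀ X ⊆ Tᶜ, (A ∩ cut inc X).Finite → Even (A ∩ cut inc X).ncard

variable {inc inc' : E → Sym2 V} {A : Set E} {T X : Set V} {u x : V} {e : E}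
  {l : List (E × V)}

lemma mem_cut_iff (h : inc e = s(u, x)) : e ∈ cut inc X ↔ ¬(u ∈ X ↔ x ∈ X) := by
  constructor
  · rintro ⟨a, b, hab, ha, hb⟩
    rcases Sym2.eq_iff.1 (h.symm.trans hab) with ⟨rfl, rfl⟩ | ⟨rfl, rfl⟩ <;> tauto
  · intro hn
    by_cases hu : u ∈ X
    · exact ⟨u, x, h, hu, by tauto⟩
    · exact ⟨x, u, h.trans Sym2.eq_swap, by tauto, hu⟩

lemma mem_cut_congr (h : inc e = inc' e) : e ∈ cut inc X ↔ e ∈ cut inc' X := by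
  simp only [cut, Set.mem_ofPred_eq, h]

lemma even_ncard_insert_inter {B C : Set E} (he : e ∉ B) (hB : (B ∩ C).Finite) :
    Even (insert e B ∩ C).ncard ↔ (Even (B ∩ C).ncard ↔ e ∉ C) := by
  by_cases hC : e ∈ C
  · rw [Set.insert_inter_of_mem hC, Set.ncard_insert_of_notMem (fun h => he h.1) hB,
      Nat.even_add_one]
    tauto
  · rw [Set.insert_inter_of_notMem hC]
    tauto

lemma IsWalk.even_ncard_cut_iff (h : IsWalk inc u l) (hnd : (edges l).Nodup) (X : Set V) :
    Even ({e | e ∈ edges l} ∩ cut inc X).ncard ↔ (u ∈ X ↔ endpoint u l ∈ X) := by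
  induction l generalizing u with
  | nil => simp
  | cons p l ih =>
    obtain ⟨hp, hnd⟩ : p.1 ∉ edges l ∧ (edges l).Nodup := List.nodup_cons.1 hnd
    have hset : {e | e ∈ edges (p :: l)} = insert p.1 {e | e ∈ edges l} := by
      ext
      simp
    have hfin : ({e | e ∈ edges l} ∩ cut inc X).Finite := (List.finite_toSet _).inter_of_left _
    rw [hset, even_ncard_insert_inter (B := {e | e ∈ edges l}) hp hfin,
      ih h.2 hnd, mem_cut_iff h.1, endpoint_cons]
    tauto

lemma even_ncard_of_forall_inter {ι : Type*} {D : Set E} (hD : D.Finite) {C : ι → Set E}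
    (hC : ∀ i j e, e ∈ C i → e ∈ C j → i = j) (hcover : D ⊆ ⋃ i, C i)
    (heven : ∀ i, Even (D ∩ C i).ncard) : Even D.ncard := by
  induction hn : D.ncard using Nat.strong_induction_on generalizing D with
  | _ n ih =>
    subst hn
    rcases D.eq_empty_or_nonempty with rfl | ⟨e, he⟩
    · simp
    obtain ⟨i, hi⟩ := Set.mem_iUnion.1 (hcover he)
    have hsplit := Set.ncard_inter_add_ncard_sdiff_eq_ncard D (C i) hD
    rw [← hsplit]
    refine (heven i).add (ih _ ?_ hD.sdiff (Set.sdiff_subset.trans hcover) (fun j => ?_) rfl)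
    · exact Set.ncard_lt_ncard ⟨Set.sdiff_subset, fun h => (h he).2 hi⟩ hD
    · by_cases hij : j = i
      · subst hij
        simp
      · have hset : (D \ C i) ∩ C j = D ∩ C j := by
          ext h
          exact ⟨fun hh => ⟨hh.1.1, hh.2⟩,
            fun hh => ⟨⟨hh.1, fun hi => hij (hC _ _ h hh.2 hi)⟩, hh.2⟩⟩
        exact hset ▸ heven j

end Cuts

section Fans

/-- The edges of the edge set `A` incident with `t`. -/
def edgesAt (inc : E → Sym2 V) (A : Set E) (t : V) : Set E := {e ∈ A | t ∈ inc e}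

/-- A trail in `A` which starts at `t` with the edge `e` and does not return to `t`. -/
structure IsRoute (inc : E → Sym2 V) (A : Set E) (t : V) (e : E) (l : List (E × V)) : Prop where
  isWalk : IsWalk inc t l
  head : (edges l).head? = some e
  nodup : (edges l).Nodup
  notMem : t ∉ verts l
  subset : ∀ h ∈ edges l, h ∈ A

/-- A `t`-fan in `A`: edge-disjoint routes starting at `t`, one through every edge of `A` at `t`,
by which it is indexed. -/
structure IsFan (inc : E → Sym2 V) (A : Set E) (t : V) (W : E → List (E × V)) : Prop where
  route : ∀ e ∈ edgesAt inc A t, IsRoute inc A t e (W e)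
  eq_of_mem : ∀ i ∈ edgesAt inc A t, ∀ j ∈ edgesAt inc A t, ∀ h,
    h ∈ edges (W i) → h ∈ edges (W j) → i = j

/-- Some `t`-fan in `A` has all its routes ending in `T`. -/
def Linked (inc : E → Sym2 V) (A : Set E) (T : Set V) (t : V) : Prop :=
  ∃ W, IsFan inc A t W ∧ ∀ e ∈ edgesAt inc A t, endpoint t (W e) ∈ T

/-- A `t`-fan all of whose routes, with the possible exception of `W g`, end in `T`. -/
structure IsOpenFan (inc : E → Sym2 V) (A : Set E) (T : Set V) (t : V) (W : E → List (E × V))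
    (g : E) : Prop extends IsFan inc A t W where
  mem : g ∈ edgesAt inc A t
  endpoint_mem : ∀ e ∈ edgesAt inc A t, e ≠ g → endpoint t (W e) ∈ T

/-- The edges of `A` on no route of the fan `W`. -/
def unused (inc : E → Sym2 V) (A : Set E) (t : V) (W : E → List (E × V)) : Set E :=
  {h ∈ A | ∀ e ∈ edgesAt inc A t, h ∉ edges (W e)}

variable {inc : E → Sym2 V} {A : Set E} {T : Set V} {t x : V} {e g h : E}
  {l m a b : List (E × V)} {W : E → List (E × V)}

namespace IsRoute

lemma ne_nil (hl : IsRoute inc A t e l) : l ≠ [] := by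
  rintro rfl
  simpa using hl.head

lemma mem_edges (hl : IsRoute inc A t e l) : e ∈ edges l := List.mem_of_mem_head? hl.head

lemma endpoint_ne (hl : IsRoute inc A t e l) : endpoint t l ≠ t :=
  fun h => hl.notMem (h ▸ endpoint_mem_verts hl.ne_nil)

lemma of_append (hl : IsRoute inc A t e (a ++ b)) (ha : a ≠ []) : IsRoute inc A t e a where
  isWalk := (isChainFrom_append.1 hl.isWalk).1
  head := by
    obtain ⟨p, a, rfl⟩ := List.exists_cons_of_ne_nil ha
    exact hl.head
  nodup := (List.nodup_append.1 (edges_append ▸ hl.nodup)).1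
  notMem h := hl.notMem (by simp [h])
  subset h hh := hl.subset h (by simp [hh])

lemma append (hl : IsRoute inc A t e l) (hm : IsWalk inc (endpoint t l) m)
    (hnd : (edges m).Nodup) (hdisj : ∀ h ∈ edges l, h ∉ edges m) (ht : t ∉ verts m)
    (hsub : ∀ h ∈ edges m, h ∈ A) : IsRoute inc A t e (l ++ m) where
  isWalk := isChainFrom_append.2 ⟨hl.isWalk, hm⟩
  head := by
    obtain ⟨p, l, rfl⟩ := List.exists_cons_of_ne_nil hl.ne_nil
    exact hl.head
  nodup := by
    rw [edges_append, List.nodup_append]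
    exact ⟨hl.nodup, hnd, fun h hh h' hh' heq => hdisj h hh (heq ▸ hh')⟩
  notMem h := by
    rw [verts_append, List.mem_append] at h
    exact h.elim hl.notMem ht
  subset h hh := by
    rw [edges_append, List.mem_append] at hh
    exact hh.elim (hl.subset h) (hsub h)

lemma eq_nil_of_mem (hl : IsRoute inc A t e (a ++ (h, x) :: b)) (ht : t ∈ inc h) : a = [] := by
  by_contra ha
  obtain ⟨-, hstep, -⟩ := isChainFrom_append.1 hl.isWalk
  rw [hstep] at ht
  rcases Sym2.mem_iff.1 ht with h' | h'
  · exact (hl.of_append ha).endpoint_ne h'.symm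
  · exact hl.notMem (by simp [h'])

lemma eq_of_mem (hl : IsRoute inc A t e l) (hh : h ∈ edges l) (ht : t ∈ inc h) : h = e := by
  obtain ⟨a, x, b, rfl⟩ := exists_append_of_mem_edges hh
  obtain rfl := hl.eq_nil_of_mem ht
  simpa using hl.head

end IsRoute

lemma IsFan.start_notMem_of_mem_unused (hW : IsFan inc A t W) (hh : h ∈ unused inc A t W) :
    t ∉ inc h :=
  fun ht => hh.2 h ⟨hh.1, ht⟩ (hW.route h ⟨hh.1, ht⟩).mem_edges

lemma IsFan.start_notMem_verts (hW : IsFan inc A t W) (hm : IsWalk inc x m)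
    (hsub : ∀ h ∈ edges m, h ∈ unused inc A t W) : t ∉ verts m := by
  intro ht
  obtain ⟨a, b, rfl, hend, ha⟩ := exists_append_of_mem_verts x ht
  obtain ⟨a, ⟨h, y⟩, rfl⟩ := List.eq_nil_or_concat' a |>.resolve_left ha
  simp only [isChainFrom_append, isChainFrom_cons] at hm
  have hy : y = t := by simpa using hend
  exact hW.start_notMem_of_mem_unused (hsub h (by simp)) (hm.1.2.1 ▸ hy ▸ Sym2.mem_mk_right _ _)

open Classical in
lemma IsFan.update_insert (hW : IsFan inc A t W) (hl : IsRoute inc (insert g A) t g l)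
    (hdisj : ∀ e ∈ edgesAt inc A t, e ≠ g → ∀ h ∈ edges l, h ∉ edges (W e)) :
    IsFan inc (insert g A) t (Function.update W g l) := by
  have hold : ∀ e ∈ edgesAt inc (insert g A) t, e ≠ g → e ∈ edgesAt inc A t := fun e he heg =>
    ⟨he.1.resolve_left heg, he.2⟩
  refine ⟨fun e he => ?_, fun i hi j hj h hhi hhj => ?_⟩
  · by_cases heg : e = g
    · subst heg
      simpa using hl
    · have hroute := hW.route e (hold e he heg)
      rw [Function.update_of_ne heg]
      exact { hroute with subset := fun h hh => Or.inr (hroute.subset h hh) }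
  · by_cases hig : i = g <;> by_cases hjg : j = g
    · rw [hig, hjg]
    · subst hig
      simp only [Function.update_self, Function.update_of_ne hjg] at hhi hhj
      exact absurd hhj (hdisj j (hold j hj hjg) hjg h hhi)
    · subst hjg
      simp only [Function.update_self, Function.update_of_ne hig] at hhi hhj
      exact absurd hhi (hdisj i (hold i hi hig) hig h hhj)
    · simp only [Function.update_of_ne hig, Function.update_of_ne hjg] at hhi hhj
      exact hW.eq_of_mem i (hold i hi hig) j (hold j hj hjg) h hhi hhj

open Classical in
lemma IsFan.update (hW : IsFan inc A t W) (hg : g ∈ A) (hl : IsRoute inc A t g l)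
    (hdisj : ∀ e ∈ edgesAt inc A t, e ≠ g → ∀ h ∈ edges l, h ∉ edges (W e)) :
    IsFan inc A t (Function.update W g l) := by
  rw [← Set.insert_eq_of_mem hg] at hl ⊢
  exact hW.update_insert hl hdisj

namespace IsOpenFan

open Classical in
lemma update (hW : IsOpenFan inc A T t W g) (hl : IsRoute inc A t g l)
    (hdisj : ∀ e ∈ edgesAt inc A t, e ≠ g → ∀ h ∈ edges l, h ∉ edges (W e)) :
    IsOpenFan inc A T t (Function.update W g l) g where
  toIsFan := hW.toIsFan.update hW.mem.1 hl hdisj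
  mem := hW.mem
  endpoint_mem e he heg := by
    simpa [heg] using hW.endpoint_mem e he heg

open Classical in
lemma truncate (hW : IsOpenFan inc A T t W g) (hg : W g = a ++ b) (ha : a ≠ []) :
    IsOpenFan inc A T t (Function.update W g a) g := by
  refine hW.update ((hg ▸ hW.route g hW.mem).of_append ha) fun e he heg h hh hh' => heg ?_
  exact hW.eq_of_mem e he g hW.mem h hh' (by simp [hg, hh])

open Classical in
lemma extend (hW : IsOpenFan inc A T t W g) (hm : IsWalk inc (endpoint t (W g)) m)
    (hnd : (edges m).Nodup) (hsub : ∀ h ∈ edges m, h ∈ unused inc A t W) :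
    IsOpenFan inc A T t (Function.update W g (W g ++ m)) g := by
  refine hW.update ((hW.route g hW.mem).append hm hnd
    (fun h hh hh' => (hsub h hh').2 g hW.mem hh) (hW.start_notMem_verts hm hsub)
    fun h hh => (hsub h hh).1) fun e he heg h hh hh' => ?_
  rw [edges_append, List.mem_append] at hh
  exact hh.elim (fun hh => heg (hW.eq_of_mem e he g hW.mem h hh' hh))
    fun hh => (hsub h hh).2 e he hh'

open Classical in
lemma switch {i : E} (hW : IsOpenFan inc A T t W g) (hi : i ∈ edgesAt inc A t) (hig : i ≠ g)
    (hWi : W i = a ++ b) (ha : a ≠ []) (hend : endpoint t a = endpoint t (W g)) :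
    IsOpenFan inc A T t (Function.update (Function.update W i a) g (W g ++ b)) i := by
  have hroute : IsRoute inc A t i (a ++ b) := hWi ▸ hW.route i hi
  obtain ⟨-, hb⟩ := isChainFrom_append.1 hroute.isWalk
  have hnd := List.nodup_append.1 (edges_append ▸ hroute.nodup)
  have hdisj : ∀ h, h ∈ edges (W g) → h ∉ edges (W i) := fun h hg h' =>
    hig (hW.eq_of_mem i hi g hW.mem h h' hg)
  have hfan : IsFan inc A t (Function.update W i a) :=
    hW.toIsFan.update hi.1 (hroute.of_append ha) fun e he hei h hh hh' =>
      hei (hW.eq_of_mem e he i hi h hh' (by simp [hWi, hh]))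
  refine ⟨hfan.update hW.mem.1 ((hW.route g hW.mem).append (hend ▸ hb) hnd.2.1 ?_ ?_ ?_) ?_, hi, ?_⟩
  · exact fun h hg h' => hdisj h hg (by simp [hWi, h'])
  · exact fun h' => hroute.notMem (by simp [h'])
  · exact fun h h' => hroute.subset h (by simp [h'])
  · intro e he heg h hh hh'
    rw [edges_append, List.mem_append] at hh
    by_cases hei : e = i
    · subst hei
      rw [Function.update_self] at hh'
      exact hh.elim (fun hg => hdisj h hg (by simp [hWi, hh'])) fun hb => hnd.2.2 h hh' h hb rfl
    · rw [Function.update_of_ne hei] at hh'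
      exact hh.elim (fun hg => heg (hW.eq_of_mem e he g hW.mem h hh' hg))
        fun hb => hei (hW.eq_of_mem e he i hi h hh' (by simp [hWi, hb]))
  · intro e he hei
    by_cases heg : e = g
    · subst heg
      rw [Function.update_self, endpoint_append, ← hend, ← endpoint_append, ← hWi]
      exact hW.endpoint_mem i hi hig
    · simpa [heg, hei] using hW.endpoint_mem e he heg

end IsOpenFan

end Fans

section Reach

/-- The vertices reached from `u` by chains of steps satisfying `S`. -/
def reach (S : V → E → V → Prop) (u : V) : Set V := {x | ∃ l, IsChainFrom S u l ∧ endpoint u l = x}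

variable {S : V → E → V → Prop} {u x y : V} {e : E} {l : List (E × V)}

lemma self_mem_reach : u ∈ reach S u := ⟨[], isChainFrom_nil, rfl⟩

lemma mem_reach_of_step (hx : x ∈ reach S u) (he : S x e y) : y ∈ reach S u := by
  obtain ⟨l, hl, rfl⟩ := hx
  exact ⟨l ++ [(e, y)], isChainFrom_append.2 ⟨hl, he, trivial⟩, by simp⟩

lemma IsChainFrom.forall_mem_edges {P : E → Prop} (h : IsChainFrom S u l)
    (hS : ∀ u e x, S u e x → P e) : ∀ e ∈ edges l, P e := by
  induction l generalizing u with
  | nil => simp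
  | cons p l ih =>
    intro e he
    rcases List.mem_cons.1 he with rfl | he
    · exact hS _ _ _ h.1
    · exact ih h.2 e he

end Reach

section ClosingFans

variable {inc : E → Sym2 V} {A : Set E} {T T' Y : Set V} {t x : V} {g : E}
  {W : E → List (E × V)}

lemma EvenCuts.mono (hA : EvenCuts inc A T) (hT : T ⊆ T') : EvenCuts inc A T' :=
  fun X hX => hA X (hX.trans (Set.compl_subset_compl.2 hT))

/-- The steps of the graph formed by the unused edges. -/
def UnusedStep (inc : E → Sym2 V) (A : Set E) (t : V) (W : E → List (E × V))
    (u : V) (h : E) (x : V) : Prop :=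
  inc h = s(u, x) ∧ h ∈ unused inc A t W

lemma notMem_cut_reach_unusedStep {h : E} (hh : h ∈ unused inc A t W) :
    h ∉ cut inc (reach (UnusedStep inc A t W) x) := by
  rintro ⟨a, b, hab, ha, hb⟩
  exact hb (mem_reach_of_step ha ⟨hab, hh⟩)

open Classical in
lemma IsOpenFan.exists_extend_to (hW : IsOpenFan inc A T t W g)
    (hx : x ∈ reach (UnusedStep inc A t W) (endpoint t (W g))) :
    ∃ l, IsOpenFan inc A T t (Function.update W g l) g ∧ endpoint t l = x := by
  obtain ⟨l, hl, rfl⟩ := hx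
  obtain ⟨m, hm, hend, -, hnd⟩ := hl.exists_loopErasure
  have hwalk : IsWalk inc (endpoint t (W g)) m := hm.mono fun _ _ _ h => h.1
  exact ⟨W g ++ m, hW.extend hwalk (hwalk.edges_nodup hnd)
    (hm.forall_mem_edges fun _ _ _ h => h.2), by rw [endpoint_append, hend]⟩

lemma IsFan.finite_inter_cut (hW : IsFan inc A t W) (htY : t ∉ Y)
    (hcover : ∀ h ∈ A ∩ cut inc Y, ∃ e ∈ edgesAt inc A t, h ∈ edges (W e))
    (hfin : {e ∈ edgesAt inc A t | ∃ x ∈ verts (W e), x ∈ Y}.Finite) : (A ∩ cut inc Y).Finite := by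
  refine (hfin.biUnion fun e _ => List.finite_toSet (edges (W e))).subset fun h hh => ?_
  obtain ⟨e, he, hhe⟩ := hcover h hh
  obtain ⟨x, y, hxy, hx, -⟩ := hh.2
  have hmem := (hW.route e he).isWalk.mem_cons_verts hhe (hxy ▸ Sym2.mem_mk_left x y)
  exact Set.mem_biUnion ⟨he, x, (List.mem_cons.1 hmem).resolve_left fun h => htY (h ▸ hx), hx⟩ hhe

/-- Every route other than `W g` starts and ends outside `Y` and so crosses its boundary evenly,
whereas `W g` crosses it oddly. -/
lemma IsOpenFan.infinite_meeting (hA : EvenCuts inc A T') (hT : T ⊆ T') (ht : t ∈ T')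
    (hW : IsOpenFan inc A T t W g) (hY : Y ⊆ T'ᶜ) (hg : endpoint t (W g) ∈ Y)
    (hunused : ∀ h ∈ unused inc A t W, h ∉ cut inc Y) :
    {e ∈ edgesAt inc A t | ∃ x ∈ verts (W e), x ∈ Y}.Infinite := by
  intro hfin
  have htY : t ∉ Y := fun h => hY h ht
  have hcover : ∀ h ∈ A ∩ cut inc Y, ∃ e ∈ edgesAt inc A t, h ∈ edges (W e) := by
    intro h hh
    by_contra! hn
    exact hunused h ⟨hh.1, hn⟩ hh.2
  have hD : (A ∩ cut inc Y).Finite := hW.finite_inter_cut htY hcover hfin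
  have hinter : ∀ e ∈ edgesAt inc A t,
      (A ∩ cut inc Y) ∩ {h | h ∈ edges (W e)} = {h | h ∈ edges (W e)} ∩ cut inc Y := by
    intro e he
    ext h
    exact ⟨fun hh => ⟨hh.2, hh.1.2⟩, fun hh => ⟨⟨(hW.route e he).subset h hh.1, hh.2⟩, hh.1⟩⟩
  have hparity := fun e he =>
    (hW.route e he).isWalk.even_ncard_cut_iff (hW.route e he).nodup Y
  have hodd := mt (hparity g hW.mem).1 (by tauto)
  have hrest : Even ((A ∩ cut inc Y) \ {h | h ∈ edges (W g)}).ncard := by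
    refine even_ncard_of_forall_inter hD.sdiff
      (C := fun e : {e ∈ edgesAt inc A t | e ≠ g} => {h | h ∈ edges (W e)})
      (fun i j h hi hj => Subtype.ext (hW.eq_of_mem i i.2.1 j j.2.1 h hi hj)) ?_ fun e => ?_
    · intro h hh
      obtain ⟨e, he, hhe⟩ := hcover h hh.1
      exact Set.mem_iUnion.2 ⟨⟨e, he, fun heg => hh.2 (heg ▸ hhe)⟩, hhe⟩
    · have hset : ((A ∩ cut inc Y) \ {h | h ∈ edges (W g)}) ∩ {h | h ∈ edges (W e)} =
          {h | h ∈ edges (W e)} ∩ cut inc Y := by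
        rw [← hinter e e.2.1]
        ext h
        exact ⟨fun hh => ⟨hh.1.1, hh.2⟩, fun hh => ⟨⟨hh.1, fun hhg =>
          e.2.2 (hW.eq_of_mem e e.2.1 g hW.mem h hh.2 hhg)⟩, hh.2⟩⟩
      rw [hset, hparity e e.2.1]
      exact iff_of_false htY fun h => hY h (hT (hW.endpoint_mem e e.2.1 e.2.2))
  have hall := hA Y hY hD
  rw [← Set.ncard_inter_add_ncard_sdiff_eq_ncard _ {h | h ∈ edges (W g)} hD, hinter g hW.mem,
    Nat.even_add] at hall
  exact hodd (hall.2 hrest)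

lemma IsOpenFan.exists_switch (hA : EvenCuts inc A T') (hT : T ⊆ T') (ht : t ∈ T')
    (hW : IsOpenFan inc A T t W g)
    (hno : ¬∃ W' g', IsOpenFan inc A T t W' g' ∧ endpoint t (W' g') ∈ T')
    (F : Finset E) (hgF : g ∈ F) :
    ∃ W' i, IsOpenFan inc A T t W' i ∧ i ∉ F ∧ ∀ e, e ≠ g → e ≠ i → W' e = W e := by
  classical
  have hY : reach (UnusedStep inc A t W) (endpoint t (W g)) ⊆ T'ᶜ := by
    intro x hx hxT
    obtain ⟨l, hl, rfl⟩ := hW.exists_extend_to hx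
    exact hno ⟨_, _, hl, by rwa [Function.update_self]⟩
  obtain ⟨i, ⟨hi, x, hxi, hx⟩, hiF⟩ := (hW.infinite_meeting hA hT ht hY self_mem_reach
    fun h => notMem_cut_reach_unusedStep).exists_notMem_finset F
  have hig : i ≠ g := fun h => hiF (h ▸ hgF)
  obtain ⟨a, b, hWi, rfl, ha⟩ := exists_append_of_mem_verts t hxi
  obtain ⟨l, hl, hend⟩ := hW.exists_extend_to hx
  refine ⟨_, i, hl.switch hi hig (by simpa [hig] using hWi) ha (by simp [hend]), hiF, ?_⟩
  intro e heg hei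
  simp [heg, hei]

/-- A sequence of open fans in which no route is open twice converges pointwise, and the limit
has no open route left. -/
lemma Linked.of_injective_seq {W : ℕ → E → List (E × V)} {g : ℕ → E}
    (hW : ∀ n, IsOpenFan inc A T t (W n) (g n)) (hg : Function.Injective g)
    (hstep : ∀ n e, e ≠ g n → e ≠ g (n + 1) → W (n + 1) e = W n e) : Linked inc A T t := by
  have hconst : ∀ e, ∃ l, ∀ᶠ n in Filter.atTop, W n e = l ∧ e ≠ g n := by
    intro e
    obtain ⟨N, hN⟩ : ∃ N, ∀ n ≥ N, e ≠ g n := by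
      by_cases he : ∃ n, g n = e
      · obtain ⟨k, rfl⟩ := he
        exact ⟨k + 1, fun n hn h => (Nat.lt_of_succ_le hn).ne (hg h)⟩
      · exact ⟨0, fun n _ h => he ⟨n, h.symm⟩⟩
    refine ⟨W N e, Filter.eventually_atTop.2 ⟨N, fun n hn => ⟨?_, hN n hn⟩⟩⟩
    induction n, hn using Nat.le_induction with
    | base => rfl
    | succ n hn ih => rw [hstep n e (hN n hn) (hN _ (Nat.le_succ_of_le hn)), ih]
  choose L hL using hconst
  refine ⟨L, ⟨fun e he => ?_, fun i hi j hj h hhi hhj => ?_⟩, fun e he => ?_⟩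
  · obtain ⟨n, hn, -⟩ := (hL e).exists
    exact hn ▸ (hW n).route e he
  · obtain ⟨n, ⟨hni, -⟩, hnj, -⟩ := ((hL i).and (hL j)).exists
    exact (hW n).eq_of_mem i hi j hj h (hni ▸ hhi) (hnj ▸ hhj)
  · obtain ⟨n, hn, hne⟩ := (hL e).exists
    exact hn ▸ (hW n).endpoint_mem e he hne

theorem IsOpenFan.exists_endpoint_mem (hA : EvenCuts inc A T') (hT : T ⊆ T') (ht : t ∈ T')
    (hW : IsOpenFan inc A T t W g) :
    ∃ W' g', IsOpenFan inc A T t W' g' ∧ endpoint t (W' g') ∈ T' := by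
  classical
  by_contra hno
  let State := {σ : (E → List (E × V)) × E × Finset E //
    IsOpenFan inc A T t σ.1 σ.2.1 ∧ σ.2.1 ∈ σ.2.2}
  have hnext : ∀ σ : State, ∃ τ : State, τ.1.2.1 ∉ σ.1.2.2 ∧ σ.1.2.2 ⊆ τ.1.2.2 ∧
      ∀ e, e ≠ σ.1.2.1 → e ≠ τ.1.2.1 → τ.1.1 e = σ.1.1 e := by
    rintro ⟨⟨W, g, F⟩, hW, hgF⟩
    obtain ⟨W', i, hW', hiF, hWW'⟩ := hW.exists_switch hA hT ht hno F hgF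
    exact ⟨⟨⟨W', i, insert i F⟩, hW', F.mem_insert_self i⟩, hiF, F.subset_insert i, hWW'⟩
  choose next hnew hmono hkeep using hnext
  let σ : ℕ → State := Nat.rec ⟨⟨W, g, {g}⟩, hW, by simp⟩ fun _ => next
  have hF : Monotone fun n => (σ n).1.2.2 := monotone_nat_of_le_succ fun n => hmono (σ n)
  have hinj : Function.Injective fun n => (σ n).1.2.1 := by
    refine Function.Injective.of_lt_imp_ne fun m n hmn h => ?_
    obtain ⟨n, rfl⟩ := Nat.exists_eq_succ_of_ne_zero (Nat.ne_zero_of_lt hmn)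
    have hmem := hF (Nat.le_of_lt_succ hmn) (σ m).2.2
    exact hnew (σ n) (h ▸ hmem)
  obtain ⟨W', hW', hend⟩ := Linked.of_injective_seq (fun n => (σ n).2.1) hinj fun n => hkeep (σ n)
  exact hno ⟨W', g, ⟨hW', hW.mem, fun e he _ => hend e he⟩, hT (hend g hW.mem)⟩

end ClosingFans

section Splitting

variable {inc inc' : E → Sym2 V} {A A' : Set E} {T : Set V} {s t v w x y : V} {e f g : E}
  {l : List (E × V)} {W : E → List (E × V)}

lemma IsRoute.transfer (hl : IsRoute inc A t e l)
    (hsub : ∀ h ∈ edges l, h ∈ A' ∧ inc h = inc' h) : IsRoute inc' A' t e l where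
  isWalk := hl.isWalk.congr fun h hh => (hsub h hh).2
  head := hl.head
  nodup := hl.nodup
  notMem := hl.notMem
  subset h hh := (hsub h hh).1

lemma IsFan.transfer (hW : IsFan inc A t W) (hat : edgesAt inc' A' t ⊆ edgesAt inc A t)
    (hsub : ∀ e ∈ edgesAt inc' A' t, ∀ h ∈ edges (W e), h ∈ A' ∧ inc h = inc' h) :
    IsFan inc' A' t W where
  route e he := (hW.route e (hat he)).transfer (hsub e he)
  eq_of_mem i hi j hj := hW.eq_of_mem i (hat hi) j (hat hj)

lemma Linked.transfer (hL : Linked inc A T t) (hA : A ⊆ A') (hinc : ∀ h ∈ A, inc h = inc' h)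
    (hat : edgesAt inc' A' t ⊆ edgesAt inc A t) : Linked inc' A' T t := by
  obtain ⟨W, hW, hend⟩ := hL
  refine ⟨W, hW.transfer hat fun e he h hh => ?_, fun e he => hend e (hat he)⟩
  have hhA := (hW.route e (hat he)).subset h hh
  exact ⟨hA hhA, hinc h hhA⟩

lemma IsOpenFan.linked (hW : IsOpenFan inc A T t W g) (hg : endpoint t (W g) ∈ T) :
    Linked inc A T t := by
  refine ⟨W, hW.toIsFan, fun e he => ?_⟩
  by_cases heg : e = g
  · exact heg ▸ hg
  · exact hW.endpoint_mem e he heg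

lemma edgesAt_sdiff_singleton (ht : t ∉ inc e) : edgesAt inc (A \ {e}) t = edgesAt inc A t := by
  ext h
  exact ⟨fun hh => ⟨hh.1.1, hh.2⟩, fun hh => ⟨⟨hh.1, fun hhe => ht (hhe ▸ hh.2)⟩, hh.2⟩⟩

open Classical in
lemma IsOpenFan.exists_sdiff_singleton (hW : IsOpenFan inc A T t W g) (he : inc e = s(x, y))
    (ht : t ∉ inc e) (heg : e ∈ edges (W g)) :
    ∃ l, IsOpenFan inc (A \ {e}) T t (Function.update W g l) g ∧
      (endpoint t l = x ∨ endpoint t l = y) := by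
  have hat := edgesAt_sdiff_singleton (A := A) ht
  have hroute := hW.route g hW.mem
  obtain ⟨a, z, b, hWg⟩ := exists_append_of_mem_edges heg
  rw [hWg] at hroute
  have ha : a ≠ [] := by
    rintro rfl
    exact ht (hroute.isWalk.1 ▸ Sym2.mem_mk_left _ _)
  have hae : e ∉ edges a := by
    have hnd := hroute.nodup
    rw [edges_append, List.nodup_append] at hnd
    exact fun h => hnd.2.2 e h e (by simp) rfl
  have htrunc := hW.truncate hWg ha
  refine ⟨a, ⟨htrunc.toIsFan.transfer hat.subset fun i hi h hh => ?_, hat ▸ hW.mem,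
    fun i hi => htrunc.endpoint_mem i (hat ▸ hi)⟩, ?_⟩
  · rw [hat] at hi
    refine ⟨⟨(htrunc.route i hi).subset h hh, ?_⟩, rfl⟩
    rintro rfl
    by_cases hig : i = g
    · subst hig
      exact hae (by simpa using hh)
    · rw [Function.update_of_ne hig] at hh
      exact hig (hW.eq_of_mem i hi g hW.mem h hh heg)
  · have hstep := hroute.isWalk
    simp only [isChainFrom_append, isChainFrom_cons, he] at hstep
    exact (Sym2.eq_iff.1 hstep.2.1).imp (fun h => h.1.symm) fun h => h.2.symm

lemma Linked.sdiff_singleton_or (hL : Linked inc A T t) (he : inc e = s(x, y)) (ht : t ∉ inc e) :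
    Linked inc (A \ {e}) T t ∨
      ∃ W g, IsOpenFan inc (A \ {e}) T t W g ∧ (endpoint t (W g) = x ∨ endpoint t (W g) = y) := by
  classical
  obtain ⟨W, hW, hend⟩ := hL
  by_cases hused : ∃ g ∈ edgesAt inc A t, e ∈ edges (W g)
  · obtain ⟨g, hg, heg⟩ := hused
    have hopen : IsOpenFan inc A T t W g := ⟨hW, hg, fun e he _ => hend e he⟩
    obtain ⟨l, hl, hend⟩ := hopen.exists_sdiff_singleton he ht heg
    exact Or.inr ⟨_, g, hl, by rwa [Function.update_self]⟩
  · push Not at hused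
    have hat := edgesAt_sdiff_singleton (A := A) ht
    refine Or.inl ⟨W, hW.transfer hat.subset fun i hi h hh => ?_, fun i hi => hend i (hat ▸ hi)⟩
    rw [hat] at hi
    exact ⟨⟨(hW.route i hi).subset h hh, fun hhe => hused i hi (hhe ▸ hh)⟩, rfl⟩

/-- Two edges `e = sv` and `f = vw` of `A` with `s ∈ T` and `v ∉ T`, which can be split off at `v`,
that is, replaced by a single edge `sw`. -/
structure SplitPair (inc : E → Sym2 V) (A : Set E) (T : Set V) (s v w : V) (e f : E) : Prop where
  inc_left : inc e = s(s, v)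
  inc_right : inc f = s(v, w)
  left_mem : e ∈ A
  right_mem : f ∈ A
  ne : e ≠ f
  start_mem : s ∈ T
  mid_notMem : v ∉ T
  start_ne : s ≠ w

open Classical in
/-- Splitting off reuses the name of `e` for the new edge `sw`; the edge `f` is to be deleted. -/
noncomputable def splitInc (inc : E → Sym2 V) (s w : V) (e : E) : E → Sym2 V :=
  Function.update inc e s(s, w)

lemma splitInc_self : splitInc inc s w e e = s(s, w) := by simp [splitInc]

lemma splitInc_of_ne (h : g ≠ e) : splitInc inc s w e g = inc g := by simp [splitInc, h]

namespace SplitPair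

variable {X : Set V} (hp : SplitPair inc A T s v w e f)
include hp

lemma insert_sdiff : insert e ((A \ {e}) \ {f}) = A \ {f} := by
  ext h
  by_cases hh : h = e
  · simp [hh, hp.left_mem, hp.ne]
  · simp [hh]

lemma insert_insert_sdiff : insert f (insert e ((A \ {e}) \ {f})) = A := by
  rw [hp.insert_sdiff, Set.insert_sdiff_singleton, Set.insert_eq_of_mem hp.right_mem]

lemma even_ncard_cut_iff (hX : X ⊆ Tᶜ) (hfin : ((A \ {e}) \ {f} ∩ cut inc X).Finite) :
    Even (A ∩ cut inc X).ncard ↔ (Even ((A \ {e}) \ {f} ∩ cut inc X).ncard ↔ w ∉ X) := by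
  have hs : s ∉ X := fun h => hX h hp.start_mem
  have hfin' : (insert e ((A \ {e}) \ {f}) ∩ cut inc X).Finite :=
    (hfin.insert e).subset fun h hh => hh.1.imp_right fun hA => ⟨hA, hh.2⟩
  conv_lhs => rw [← hp.insert_insert_sdiff]
  rw [even_ncard_insert_inter (by simp [hp.ne.symm]) hfin', even_ncard_insert_inter (by simp) hfin,
    mem_cut_iff hp.inc_left, mem_cut_iff hp.inc_right]
  tauto

lemma finite_cut (hfin : ((A \ {e}) \ {f} ∩ cut inc X).Finite) : (A ∩ cut inc X).Finite := by
  refine ((hfin.insert e).insert f).subset ?_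
  rintro h ⟨hA, hc⟩
  rw [← hp.insert_insert_sdiff] at hA
  rcases hA with rfl | rfl | hA
  exacts [Or.inl rfl, Or.inr (Or.inl rfl), Or.inr (Or.inr ⟨hA, hc⟩)]

lemma evenCuts_sdiff (hA : EvenCuts inc A T) : EvenCuts inc ((A \ {e}) \ {f}) (insert w T) := by
  intro X hX hfin
  have hXT : X ⊆ Tᶜ := fun x hx hxT => hX hx (Or.inr hxT)
  exact (((hp.even_ncard_cut_iff hXT hfin).1 (hA X hXT (hp.finite_cut hfin))).2
    fun hw => hX hw (Or.inl rfl))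

lemma evenCuts_split (hA : EvenCuts inc A T) : EvenCuts (splitInc inc s w e) (A \ {f}) T := by
  intro X hX hfin
  have hs : s ∉ X := fun h => hX h hp.start_mem
  have hcut : (A \ {e}) \ {f} ∩ cut (splitInc inc s w e) X = (A \ {e}) \ {f} ∩ cut inc X := by
    ext h
    exact and_congr_right fun hh => mem_cut_congr (splitInc_of_ne hh.1.2)
  have hfin' : ((A \ {e}) \ {f} ∩ cut inc X).Finite :=
    hcut ▸ hfin.subset
      (Set.inter_subset_inter_left _ (Set.sdiff_subset_sdiff_left Set.sdiff_subset))
  have heven := (hp.even_ncard_cut_iff hX hfin').1 (hA X hX (hp.finite_cut hfin'))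
  rw [← hp.insert_sdiff, even_ncard_insert_inter (by simp) (hcut ▸ hfin'), hcut, heven,
    mem_cut_iff splitInc_self]
  tauto

lemma edgesAt_split (hts : t ≠ s) (htw : t ≠ w) :
    edgesAt (splitInc inc s w e) (A \ {f}) t ⊆ edgesAt inc ((A \ {e}) \ {f}) t := by
  rintro h ⟨⟨hA, hf⟩, ht⟩
  have he : h ≠ e := by
    rintro rfl
    rw [splitInc_self, Sym2.mem_iff] at ht
    exact ht.elim hts htw
  exact ⟨⟨⟨hA, he⟩, hf⟩, splitInc_of_ne (inc := inc) he ▸ ht⟩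

lemma transfer_split (hW : IsFan inc ((A \ {e}) \ {f}) t W) (hts : t ≠ s) (htw : t ≠ w) :
    IsFan (splitInc inc s w e) (A \ {f}) t W := by
  have hat := hp.edgesAt_split hts htw
  refine hW.transfer hat fun i hi h hh => ?_
  have hmem := (hW.route i (hat hi)).subset h hh
  exact ⟨⟨hmem.1.1, hmem.2⟩, (splitInc_of_ne hmem.1.2).symm⟩

/-- The case `t = w`: the new edge `sw` is a route by itself and replaces the one through `f`. -/
lemma linked_split_end (hL : Linked inc (A \ {e}) T w) :
    Linked (splitInc inc s w e) (A \ {f}) T w := by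
  classical
  obtain ⟨W, hW, hend⟩ := hL
  have hf : f ∈ edgesAt inc (A \ {e}) w :=
    ⟨⟨hp.right_mem, hp.ne.symm⟩, hp.inc_right ▸ Sym2.mem_mk_right _ _⟩
  have hat : edgesAt (splitInc inc s w e) ((A \ {e}) \ {f}) w ⊆ edgesAt inc (A \ {e}) w :=
    fun i hi => ⟨hi.1.1, splitInc_of_ne (inc := inc) hi.1.1.2 ▸ hi.2⟩
  have hfan : IsFan (splitInc inc s w e) ((A \ {e}) \ {f}) w W := by
    refine hW.transfer hat fun i hi h hh => ?_
    have hmem := (hW.route i (hat hi)).subset h hh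
    refine ⟨⟨hmem, ?_⟩, (splitInc_of_ne hmem.2).symm⟩
    rintro rfl
    exact hi.1.2 ((hW.route i (hat hi)).eq_of_mem hh hf.2).symm
  rw [← hp.insert_sdiff]
  refine ⟨Function.update W e [(e, s)], hfan.update_insert ?_ fun i hi _ h hh h' => ?_,
    fun i hi => ?_⟩
  · exact ⟨⟨splitInc_self.trans Sym2.eq_swap, trivial⟩, rfl, by simp,
      by simpa using hp.start_ne.symm, by simp⟩
  · obtain rfl : h = e := by simpa using hh
    exact ((hfan.route i hi).subset h h').1.2 rfl
  · by_cases hie : i = e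
    · subst hie
      simpa using hp.start_mem
    · rw [Function.update_of_ne hie]
      exact hend i (hat ⟨hi.1.resolve_left hie, hi.2⟩)

lemma linked_split_of_endpoint_eq (hW : IsOpenFan inc ((A \ {e}) \ {f}) T t W g)
    (hend : endpoint t (W g) = w) (hts : t ≠ s) (htw : t ≠ w) :
    Linked (splitInc inc s w e) (A \ {f}) T t := by
  classical
  have hat := hp.edgesAt_split hts htw
  have hg := hW.mem
  have hW' : IsOpenFan (splitInc inc s w e) (A \ {f}) T t W g :=
    ⟨hp.transfer_split hW.toIsFan hts htw,
      ⟨⟨hg.1.1.1, hg.1.2⟩, (splitInc_of_ne (inc := inc) hg.1.1.2).symm ▸ hg.2⟩,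
      fun i hi => hW.endpoint_mem i (hat hi)⟩
  have hstep : splitInc inc s w e e = s(endpoint t (W g), s) := by
    rw [hend, splitInc_self, Sym2.eq_swap]
  refine (hW'.extend (m := [(e, s)]) ⟨hstep, trivial⟩ (by simp) fun h hh => ?_).linked
    (by simpa using hp.start_mem)
  obtain rfl : h = e := by simpa using hh
  exact ⟨⟨hp.left_mem, hp.ne⟩, fun i hi hmem => ((hW.route i (hat hi)).subset _ hmem).1.2 rfl⟩

theorem linked_split (hA : EvenCuts inc A T) (ht : t ∈ T) (hts : t ≠ s)
    (hL : Linked inc (A \ {e}) T t) : Linked (splitInc inc s w e) (A \ {f}) T t := by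
  by_cases htw : t = w
  · subst htw
    exact hp.linked_split_end hL
  have htf : t ∉ inc f := by
    rw [hp.inc_right, Sym2.mem_iff]
    rintro (rfl | rfl)
    exacts [hp.mid_notMem ht, htw rfl]
  have hlift : Linked inc ((A \ {e}) \ {f}) T t → Linked (splitInc inc s w e) (A \ {f}) T t := by
    rintro ⟨W, hW, hend⟩
    exact ⟨W, hp.transfer_split hW hts htw, fun i hi => hend i (hp.edgesAt_split hts htw hi)⟩
  rcases hL.sdiff_singleton_or hp.inc_right htf with hL | ⟨W, g, hW, -⟩
  · exact hlift hL
  obtain ⟨W, g, hW, hend⟩ :=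
    hW.exists_endpoint_mem (hp.evenCuts_sdiff hA) (Set.subset_insert w T) (Or.inr ht)
  rcases hend with hend | hend
  · exact hp.linked_split_of_endpoint_eq hW hend hts htw
  · exact hlift (hW.linked hend)

end SplitPair

end Splitting

section Residual

/-- The list of steps `l` from `u` uses the edge `h` in the direction from `a` to `b`. -/
def Traverses : V → List (E × V) → V → E → V → Prop
  | _, [], _, _, _ => False
  | u, p :: l, a, h, b => (u = a ∧ p = (h, b)) ∨ Traverses p.2 l a h b

/-- Some route of the fan `W` uses the edge `h` in the direction from `a` to `b`. -/
def UsedAs (inc : E → Sym2 V) (A : Set E) (t : V) (W : E → List (E × V)) (a : V) (h : E) (b : V) :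
    Prop :=
  ∃ e ∈ edgesAt inc A t, Traverses t (W e) a h b

/-- The steps `u → x` of the residual graph of the fan `W`, in which the used edges can be
traversed in the opposite direction only, and `t` is not entered. -/
def ResidualStep (inc : E → Sym2 V) (A : Set E) (t : V) (W : E → List (E × V))
    (u : V) (h : E) (x : V) : Prop :=
  inc h = s(u, x) ∧ h ∈ A ∧ x ≠ t ∧ ¬UsedAs inc A t W u h x

variable {inc : E → Sym2 V} {A : Set E} {T X : Set V} {t u x y a b : V} {e g h : E}
  {l m : List (E × V)} {W : E → List (E × V)}

@[simp] lemma traverses_append :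
    Traverses u (l ++ m) a h b ↔ Traverses u l a h b ∨ Traverses (endpoint u l) m a h b := by
  induction l generalizing u with
  | nil => simp [Traverses]
  | cons p l ih => simp [Traverses, ih, or_assoc]

@[simp] lemma traverses_cons :
    Traverses u ((e, x) :: l) a h b ↔ (u = a ∧ e = h ∧ x = b) ∨ Traverses x l a h b := by
  simp [Traverses]

@[simp] lemma not_traverses_nil : ¬Traverses u ([] : List (E × V)) a h b := id

lemma Traverses.exists_append (hl : Traverses u l a h b) :
    ∃ l₁ l₂, l = l₁ ++ (h, b) :: l₂ ∧ endpoint u l₁ = a := by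
  induction l generalizing u with
  | nil => exact hl.elim
  | cons p l ih =>
    rcases hl with ⟨rfl, rfl⟩ | hl
    · exact ⟨[], l, rfl, rfl⟩
    · obtain ⟨l₁, l₂, rfl, hend⟩ := ih hl
      exact ⟨p :: l₁, l₂, rfl, hend⟩

lemma Traverses.mem_edges (hl : Traverses u l a h b) : h ∈ edges l := by
  obtain ⟨l₁, l₂, rfl, -⟩ := hl.exists_append
  simp

lemma exists_traverses (u : V) (hh : h ∈ edges l) : ∃ a b, Traverses u l a h b := by
  obtain ⟨l₁, b, l₂, rfl⟩ := exists_append_of_mem_edges hh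
  exact ⟨endpoint u l₁, b, by simp⟩

lemma Traverses.eq_of_nodup {a' b' : V} (hnd : (edges l).Nodup) (h₁ : Traverses u l a h b)
    (h₂ : Traverses u l a' h b') : a = a' ∧ b = b' := by
  induction l generalizing u with
  | nil => exact h₁.elim
  | cons p l ih =>
    obtain ⟨hp, hnd⟩ : p.1 ∉ edges l ∧ (edges l).Nodup := List.nodup_cons.1 hnd
    rcases h₁ with ⟨rfl, rfl⟩ | h₁ <;> rcases h₂ with ⟨h₂, h₂'⟩ | h₂
    · exact ⟨h₂, congrArg Prod.snd h₂'⟩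
    · exact absurd h₂.mem_edges hp
    · subst h₂'
      exact absurd h₁.mem_edges hp
    · exact ih hnd h₁ h₂

lemma IsWalk.inc_eq_of_traverses (hl : IsWalk inc u l) (h' : Traverses u l a h b) :
    inc h = s(a, b) := by
  obtain ⟨l₁, l₂, rfl, rfl⟩ := h'.exists_append
  exact (isChainFrom_append.1 hl).2.1

lemma IsFan.eq_of_usedAs {a' b' : V} (hW : IsFan inc A t W) (h₁ : UsedAs inc A t W a h b)
    (h₂ : UsedAs inc A t W a' h b') : a = a' ∧ b = b' := by
  obtain ⟨i, hi, h₁⟩ := h₁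
  obtain ⟨j, hj, h₂⟩ := h₂
  obtain rfl := hW.eq_of_mem i hi j hj h h₁.mem_edges h₂.mem_edges
  exact h₁.eq_of_nodup (hW.route i hi).nodup h₂

open Classical in
lemma UsedAs.of_update (h' : UsedAs inc A t (Function.update W g l) a h b) :
    UsedAs inc A t W a h b ∨ Traverses t l a h b := by
  obtain ⟨i, hi, htrav⟩ := h'
  by_cases hig : i = g
  · subst hig
    exact Or.inr (by simpa using htrav)
  · exact Or.inl ⟨i, hi, by simpa [hig] using htrav⟩

lemma ResidualStep.unused_or_usedAs (hW : IsFan inc A t W) (hstep : ResidualStep inc A t W u h x) :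
    h ∈ unused inc A t W ∨ UsedAs inc A t W x h u := by
  obtain ⟨hinc, hA, -, hnot⟩ := hstep
  by_cases hunused : h ∈ unused inc A t W
  · exact Or.inl hunused
  obtain ⟨i, hi, hhi⟩ : ∃ i ∈ edgesAt inc A t, h ∈ edges (W i) := by
    by_contra! hn
    exact hunused ⟨hA, hn⟩
  obtain ⟨a, b, htrav⟩ := exists_traverses t hhi
  rcases Sym2.eq_iff.1 (hinc.symm.trans ((hW.route i hi).isWalk.inc_eq_of_traverses htrav))
    with ⟨rfl, rfl⟩ | ⟨rfl, rfl⟩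
  exacts [absurd ⟨i, hi, htrav⟩ hnot, Or.inr ⟨i, hi, htrav⟩]

/-- One residual step from the open end, by extending, truncating or switching the open route. -/
lemma IsOpenFan.exists_residualStep (hW : IsOpenFan inc A T t W g)
    (hstep : ResidualStep inc A t W (endpoint t (W g)) h x) :
    ∃ W' g', IsOpenFan inc A T t W' g' ∧ endpoint t (W' g') = x ∧
      ∀ a k b, k ≠ h → UsedAs inc A t W' a k b → UsedAs inc A t W a k b := by
  classical
  rcases hstep.unused_or_usedAs hW.toIsFan with hunused | ⟨i, hi, htrav⟩
  · refine ⟨_, g, hW.extend (m := [(h, x)]) ⟨hstep.1, trivial⟩ (by simp) (by simpa using hunused),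
      by simp, fun a k b hk hused => ?_⟩
    rcases hused.of_update with hused | hused
    · exact hused
    · exact ⟨g, hW.mem, by simpa [hk.symm] using hused⟩
  obtain ⟨l₁, l₂, hWi, rfl⟩ := htrav.exists_append
  have hl₁ : l₁ ≠ [] := by
    rintro rfl
    exact hstep.2.2.1 rfl
  have hprefix : ∀ {a k b}, Traverses t l₁ a k b → UsedAs inc A t W a k b := fun hk =>
    ⟨i, hi, by rw [hWi]; simp [hk]⟩
  by_cases hig : i = g
  · subst hig
    exact ⟨_, i, hW.truncate hWi hl₁, by simp, fun a k b _ hused =>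
      hused.of_update.elim id hprefix⟩
  · have hswitch := hW.switch (a := l₁ ++ [(h, endpoint t (W g))]) (b := l₂) hi hig (by simp [hWi])
      (by simp) (by simp)
    refine ⟨_, i, hswitch.truncate (a := l₁) (b := [(h, endpoint t (W g))]) (by simp [hig]) hl₁,
      by simp, fun a k b hk hused => ?_⟩
    rcases hused.of_update with hused | hused
    · rcases hused.of_update with hused | hused
      · rcases hused.of_update with hused | hused
        · exact hused
        · exact hprefix (by simpa [hk.symm] using hused)
      · rcases traverses_append.1 hused with hused | hused
        · exact ⟨g, hW.mem, hused⟩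
        · exact ⟨i, hi, by rw [hWi]; simp [hused]⟩
    · exact hprefix hused

lemma IsOpenFan.exists_endpoint_of_residual_chain (hW : IsOpenFan inc A T t W g)
    (hl : IsChainFrom (ResidualStep inc A t W) (endpoint t (W g)) l) (hnd : (edges l).Nodup) :
    ∃ W' g', IsOpenFan inc A T t W' g' ∧ endpoint t (W' g') = endpoint (endpoint t (W g)) l := by
  induction l generalizing W g with
  | nil => exact ⟨W, g, hW, rfl⟩
  | cons p l ih =>
    obtain ⟨hp, hnd⟩ : p.1 ∉ edges l ∧ (edges l).Nodup := List.nodup_cons.1 hnd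
    obtain ⟨W', g', hW', hend, hused⟩ := hW.exists_residualStep hl.1
    rw [endpoint_cons, ← hend]
    refine ih hW' (hend ▸ hl.2.mono fun u q hq hstep => ?_) hnd
    have hqp : q.1 ≠ p.1 := fun h => hp (h ▸ List.mem_map_of_mem hq)
    exact ⟨hstep.1, hstep.2.1, hstep.2.2.1, fun h => hstep.2.2.2 (hused _ _ _ hqp h)⟩

lemma IsOpenFan.exists_endpoint_of_mem_reach (hW : IsOpenFan inc A T t W g)
    (hx : x ∈ reach (ResidualStep inc A t W) (endpoint t (W g))) :
    ∃ W' g', IsOpenFan inc A T t W' g' ∧ endpoint t (W' g') = x := by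
  obtain ⟨l, hl, rfl⟩ := hx
  obtain ⟨m, hm, hend, -, hnd⟩ := hl.exists_loopErasure
  have hwalk : IsWalk inc (endpoint t (W g)) m := hm.mono fun _ _ _ h => h.1
  rw [← hend]
  exact hW.exists_endpoint_of_residual_chain hm (hwalk.edges_nodup hnd)

/-- A set `X` with `X ∩ T = {t}` whose boundary is orthogonal to the fan `W`: every edge of `A`
leaving `X` is used outwards, and no edge is used inwards. -/
structure IsBarrier (inc : E → Sym2 V) (A : Set E) (T : Set V) (t : V) (W : E → List (E × V))
    (X : Set V) : Prop where
  mem : t ∈ X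
  eq_of_mem : ∀ x ∈ X, x ∈ T → x = t
  used_out : ∀ h ∈ A, ∀ u x, inc h = s(u, x) → u ∈ X → x ∉ X → UsedAs inc A t W u h x
  mem_of_usedAs : ∀ u h x, UsedAs inc A t W u h x → x ∈ X → u ∈ X

/-- If the residual graph does not lead from the open end to `T`, then the set reached, together
with `t`, is a barrier. -/
lemma IsOpenFan.linked_or_exists_isBarrier (hW : IsOpenFan inc A T t W g) :
    Linked inc A T t ∨ ∃ X, IsBarrier inc A T t W X ∧ endpoint t (W g) ∈ X := by
  set R := reach (ResidualStep inc A t W) (endpoint t (W g))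
  by_cases hmeet : ∃ x ∈ R, x ∈ T
  · obtain ⟨x, hx, hxT⟩ := hmeet
    obtain ⟨W', g', hW', rfl⟩ := hW.exists_endpoint_of_mem_reach hx
    exact Or.inl (hW'.linked hxT)
  push Not at hmeet
  refine Or.inr ⟨insert t R, ⟨Or.inl rfl, ?_, ?_, ?_⟩, Or.inr self_mem_reach⟩
  · exact fun x hx hxT => hx.resolve_right fun hxR => hmeet x hxR hxT
  · intro h hh u x hinc hu hx
    rcases hu with rfl | hu
    · have hat : h ∈ edgesAt inc A u := ⟨hh, hinc ▸ Sym2.mem_mk_left _ _⟩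
      obtain ⟨y, m, hWh⟩ : ∃ y m, W h = (h, y) :: m := by
        obtain ⟨a, y, b, hWh⟩ := exists_append_of_mem_edges (hW.route h hat).mem_edges
        obtain rfl := (hWh ▸ hW.route h hat).eq_nil_of_mem hat.2
        exact ⟨y, b, hWh⟩
      have hstep : inc h = s(u, y) := (hWh ▸ (hW.route h hat).isWalk).1
      obtain rfl : x = y := Sym2.congr_right.1 (hinc.symm.trans hstep)
      exact ⟨h, hat, by rw [hWh]; simp⟩
    · by_contra hnot
      exact hx (Or.inr (mem_reach_of_step hu ⟨hinc, hh, fun h => hx (Or.inl h), hnot⟩))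
  · rintro u h x hused hx
    obtain ⟨e, he, htrav⟩ := hused
    have hroute := hW.route e he
    have hxR : x ∈ R := by
      refine hx.resolve_left ?_
      rintro rfl
      obtain ⟨l₁, l₂, hWe, -⟩ := htrav.exists_append
      exact hroute.notMem (by simp [hWe])
    by_contra hu
    refine hu (Or.inr (mem_reach_of_step hxR
      ⟨(hroute.isWalk.inc_eq_of_traverses htrav).trans Sym2.eq_swap,
      hroute.subset h htrav.mem_edges, fun h => hu (Or.inl h), fun hback => hu ?_⟩))
    obtain ⟨rfl, -⟩ := hW.eq_of_usedAs ⟨e, he, htrav⟩ hback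
    exact hx

end Residual

section Rerouting

/-- The edge `h` occurs in `l` before the first step leaving `X`, which is along the edge `k`. -/
def PrecedesExit (X : Set V) (l : List (E × V)) (h k : E) : Prop :=
  ∃ l₁ u l₂, l = l₁ ++ (k, u) :: l₂ ∧ (∀ x ∈ verts l₁, x ∈ X) ∧ u ∉ X ∧ h ∈ edges l₁

variable {inc : E → Sym2 V} {A B : Set E} {T X : Set V} {s t t' x : V} {e g h i k : E}
  {l a b : List (E × V)} {W : E → List (E × V)}

lemma exists_append_first {P : V → Prop} (hx : x ∈ verts l) (hP : P x) :
    ∃ a k y b, l = a ++ (k, y) :: b ∧ P y ∧ ∀ z ∈ verts a, ¬P z := by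
  classical
  obtain ⟨p, hp, rfl⟩ := List.mem_map.1 hx
  obtain ⟨⟨k, y⟩, hq⟩ := Option.isSome_iff_exists.1
    (List.find?_isSome (xs := l) (p := fun q => decide (P q.2)) |>.2 ⟨p, hp, by simpa using hP⟩)
  obtain ⟨hy, a, b, rfl, ha⟩ := List.find?_eq_some_iff_append.1 hq
  refine ⟨a, k, y, b, rfl, by simpa using hy, fun z hz => ?_⟩
  obtain ⟨q, hq, rfl⟩ := List.mem_map.1 hz
  simpa using ha q hq

lemma PrecedesExit.eq {h' k' : E} (h₁ : PrecedesExit X l h k) (h₂ : PrecedesExit X l h' k') :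
    k = k' := by
  classical
  have hfind : ∀ {h k}, PrecedesExit X l h k →
      (l.find? fun q => decide (q.2 ∉ X)).map Prod.fst = some k := by
    rintro h k ⟨l₁, u, l₂, rfl, hl₁, hu, -⟩
    have hnone : (l₁.find? fun q => decide (q.2 ∉ X)) = none :=
      List.find?_eq_none.2 fun q hq => by simpa using hl₁ q.2 (List.mem_map_of_mem hq)
    rw [List.find?_append, hnone]
    simp [hu]
  exact Option.some.inj ((hfind h₁).symm.trans (hfind h₂))

/-- A route ending in `T` is followed up to its first vertex in `X ∪ T`. -/
lemma IsRoute.exists_initial (hl : IsRoute inc A t i l) (hlT : endpoint t l ∈ T) (ht : t ∉ X) :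
    ∃ m, IsRoute inc A t i m ∧ edges m ⊆ edges l ∧ (∀ h ∈ edges m, ∃ y ∈ inc h, y ∉ X) ∧
      (∀ h ∈ edges m, h ≠ i → ∀ s ∈ T, ∀ x ∈ X, inc h ≠ s(s, x)) ∧
      (endpoint t m ∈ T ∨ endpoint t m ∈ X ∧
        ∃ k ∈ edges m, ∃ u, u ∉ X ∧ inc k = s(endpoint t m, u)) := by
  obtain ⟨a, k, x, b, rfl, hx, ha⟩ := exists_append_first (P := (· ∈ X ∪ T))
    (endpoint_mem_verts hl.ne_nil) (Or.inr hlT)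
  rw [List.append_cons] at hl
  have hm := hl.of_append (by simp)
  obtain ⟨hwalk, hk, -⟩ := isChainFrom_append.1 hm.isWalk
  have hstart : ∀ z ∈ t :: verts a, z ∉ X :=
    List.forall_mem_cons.2 ⟨ht, fun z hz h => ha z hz (Or.inl h)⟩
  have hu : endpoint t a ∉ X := hstart _ endpoint_mem_cons_verts
  have hcases : ∀ h ∈ edges (a ++ [(k, x)]), h ∈ edges a ∨ h = k := by simp
  refine ⟨_, hm, edges_subset (by simp), fun h hh => ?_, fun h hh hhi s hs y hy hinc => ?_, ?_⟩
  · rcases hcases h hh with hh | rfl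
    · exact ⟨_, (inc h).out_fst_mem,
        hstart _ (IsWalk.mem_cons_verts hwalk hh (inc h).out_fst_mem)⟩
    · exact ⟨_, hk ▸ Sym2.mem_mk_left _ _, hu⟩
  · rcases hcases h hh with hh | rfl
    · exact hstart y (IsWalk.mem_cons_verts hwalk hh (hinc ▸ Sym2.mem_mk_right _ _)) hy
    · rcases Sym2.eq_iff.1 (hinc.symm.trans hk) with ⟨rfl, -⟩ | ⟨-, rfl⟩
      · refine ha _ (endpoint_mem_verts ?_) (Or.inr hs)
        rintro rfl
        exact hhi (by simpa using hm.head)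
      · exact hu hy
  · rw [endpoint_append, endpoint_cons, endpoint_nil]
    exact hx.symm.imp_right fun hx => ⟨hx, k, by simp, _, hu, hk.trans Sym2.eq_swap⟩

namespace IsBarrier

lemma verts_subset (hX : IsBarrier inc B T t W X) (hi : i ∈ edgesAt inc B t) (hWi : W i = a ++ b)
    (hend : endpoint t a ∈ X) : ∀ x ∈ verts a, x ∈ X := by
  induction a using List.reverseRecOn generalizing b with
  | nil => simp
  | append_singleton a p ih =>
    have hp : p.2 ∈ X := by simpa using hend
    have ha : endpoint t a ∈ X := by
      refine hX.mem_of_usedAs _ p.1 p.2 ⟨i, hi, ?_⟩ hp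
      rw [hWi, traverses_append, traverses_append]
      exact Or.inl (Or.inr (Or.inl ⟨rfl, rfl⟩))
    rw [List.append_assoc] at hWi
    simpa [or_imp, forall_and, hp] using ih hWi ha

lemma inc_subset (hX : IsBarrier inc B T t W X) (hW : IsFan inc B t W) (hi : i ∈ edgesAt inc B t)
    (hWi : W i = a ++ b) (hend : endpoint t a ∈ X) (hh : h ∈ edges a) : ∀ y ∈ inc h, y ∈ X := by
  intro y hy
  have hwalk : IsWalk inc t a := (isChainFrom_append.1 (hWi ▸ (hW.route i hi).isWalk)).1
  rcases List.mem_cons.1 (hwalk.mem_cons_verts hh hy) with rfl | hy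
  exacts [hX.mem, hX.verts_subset hi hWi hend y hy]

lemma exists_return {u : V} (hX : IsBarrier inc B T t W X) (hW : IsOpenFan inc B T t W g)
    (hg : endpoint t (W g) ∈ X) (hk : UsedAs inc B t W x k u) (hx : x ∈ X) (hu : u ∉ X) :
    ∃ m, IsWalk inc x m ∧ endpoint x m = t ∧ (edges m).Nodup ∧ (∀ y ∈ verts m, y ∈ X) ∧
      ∃ j ∈ edgesAt inc B t, ∀ h ∈ edges m, h ∈ B \ {h | h ∈ edges (W g)} ∧
        (∀ y ∈ inc h, y ∈ X) ∧ h ∈ edges (W j) ∧ PrecedesExit X (W j) h k := by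
  obtain ⟨j, hj, htrav⟩ := hk
  obtain ⟨l₁, l₂, hWj, rfl⟩ := htrav.exists_append
  have hroute := hW.route j hj
  have hverts := hX.verts_subset hj hWj hx
  obtain ⟨m, hm, hmt, hedges, hmverts⟩ :=
    IsWalk.exists_reverse (isChainFrom_append.1 (hWj ▸ hroute.isWalk)).1
  have hnd := hWj ▸ hroute.nodup
  rw [edges_append, List.nodup_append] at hnd
  refine ⟨m, hm, hmt, by simpa [hedges] using hnd.1, fun y hy => ?_, j, hj, fun h hh => ?_⟩
  · have hy' : y ∈ t :: verts l₁ := by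
      rw [← List.mem_reverse, ← hmverts]
      exact List.mem_cons_of_mem _ hy
    exact (List.mem_cons.1 hy').elim (fun h => h ▸ hX.mem) (hverts y)
  · have hh₁ : h ∈ edges l₁ := by simpa [hedges] using hh
    have hhj : h ∈ edges (W j) := by simp [hWj, hh₁]
    refine ⟨⟨hroute.subset h hhj, fun hhg => hu ?_⟩, fun y hy => ?_, hhj, l₁, u, l₂, hWj, hverts,
      hu, hh₁⟩
    · obtain rfl := hW.eq_of_mem j hj g hW.mem h hhj hhg
      exact hX.verts_subset hj (List.append_nil _).symm hg u (by simp [hWj])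
    · exact hX.inc_subset hW.toIsFan hj hWj hx hh₁ y hy

variable (hX : IsBarrier inc (A \ {e}) T t W X) (hW : IsOpenFan inc (A \ {e}) T t W g)
  (hg : endpoint t (W g) ∈ X) (he : inc e = s(s, endpoint t (W g))) (hs : s ∈ T) (ht : t ∈ T)
include hX hW hg he hs ht

/-- A route which reaches `X` before `T` has entered `X` along an edge by which some route of `W`
leaves `X`; that route is followed back to `t`. -/
lemma exists_reroute (ht' : t' ∉ X) (hl : IsRoute inc A t' i l) (hlT : endpoint t' l ∈ T)
    (hie : i ≠ e) :
    ∃ m, IsRoute inc ((A \ {e}) \ {h | h ∈ edges (W g)}) t' i m ∧ endpoint t' m ∈ T ∧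
      ∀ h ∈ edges m, (h ∈ edges l ∧ ∃ y ∈ inc h, y ∉ X) ∨ ((∀ y ∈ inc h, y ∈ X) ∧
        ∃ j ∈ edgesAt inc (A \ {e}) t, ∃ k ∈ edges l, h ∈ edges (W j) ∧
          PrecedesExit X (W j) h k) := by
  obtain ⟨a, ha, hal, hout, hne, hend⟩ := hl.exists_initial hlT ht'
  have hroute : IsRoute inc ((A \ {e}) \ {h | h ∈ edges (W g)}) t' i a := by
    refine ha.transfer fun h hh => ⟨⟨⟨ha.subset h hh, ?_⟩, fun hhg => ?_⟩, rfl⟩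
    · rintro rfl
      exact hne h hh hie.symm s hs _ hg he
    · obtain ⟨y, hy, hyX⟩ := hout h hh
      exact hyX (hX.inc_subset hW.toIsFan hW.mem (List.append_nil _).symm hg hhg y hy)
  rcases hend with hend | ⟨hend, k, hka, u, hu, hk⟩
  · exact ⟨a, hroute, hend, fun h hh => Or.inl ⟨hal hh, hout h hh⟩⟩
  obtain ⟨m, hm, hmt, hmnd, hmX, j, hj, hspec⟩ :=
    hX.exists_return hW hg (hX.used_out k (hroute.subset k hka).1 _ u hk hend hu) hend hu
  refine ⟨a ++ m, hroute.append hm hmnd ?_ (fun h => ht' (hmX t' h)) fun h hh => (hspec h hh).1,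
    by rwa [endpoint_append, hmt], fun h hh => ?_⟩
  · intro h hh hhm
    obtain ⟨y, hy, hyX⟩ := hout h hh
    exact hyX ((hspec h hhm).2.1 y hy)
  · rw [edges_append, List.mem_append] at hh
    exact hh.imp (fun hh => ⟨hal hh, hout h hh⟩)
      fun hh => ⟨(hspec h hh).2.1, j, hj, k, hal hka, (hspec h hh).2.2⟩

lemma linked_sdiff_of_notMem (ht' : t' ∉ X) (hL : Linked inc A T t') :
    Linked inc ((A \ {e}) \ {h | h ∈ edges (W g)}) T t' := by
  classical
  obtain ⟨P, hP, hPT⟩ := hL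
  have hat : ∀ i ∈ edgesAt inc ((A \ {e}) \ {h | h ∈ edges (W g)}) t', i ∈ edgesAt inc A t' :=
    fun i hi => ⟨hi.1.1.1, hi.2⟩
  choose! R hR hRT hspec using fun i
      (hi : i ∈ edgesAt inc ((A \ {e}) \ {h | h ∈ edges (W g)}) t') =>
    hX.exists_reroute hW hg he hs ht ht' (hP.route i (hat i hi)) (hPT i (hat i hi)) hi.1.1.2
  refine ⟨R, ⟨hR, fun i hi j hj h hhi hhj => ?_⟩, hRT⟩
  rcases hspec i hi h hhi with ⟨hi', y, hy, hyX⟩ | ⟨hin, i', hi', k, hk, hhi', hexit⟩ <;>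
    rcases hspec j hj h hhj with ⟨hj', z, hz, hzX⟩ | ⟨hin', j', hj', k', hk', hhj', hexit'⟩
  · exact hP.eq_of_mem i (hat i hi) j (hat j hj) h hi' hj'
  · exact absurd (hin' y hy) hyX
  · exact absurd (hin z hz) hzX
  · obtain rfl := hW.eq_of_mem i' hi' j' hj' h hhi' hhj'
    obtain rfl := hexit.eq hexit'
    exact hP.eq_of_mem i (hat i hi) j (hat j hj) k hk hk'

end IsBarrier

lemma IsOpenFan.linked_sdiff (hW : IsOpenFan inc A T t W g) :
    Linked inc (A \ {h | h ∈ edges (W g)}) T t := by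
  have hne : ∀ i ∈ edgesAt inc (A \ {h | h ∈ edges (W g)}) t, i ≠ g := by
    rintro i hi rfl
    exact hi.1.2 (hW.route i hW.mem).mem_edges
  have hat : edgesAt inc (A \ {h | h ∈ edges (W g)}) t ⊆ edgesAt inc A t :=
    fun i hi => ⟨hi.1.1, hi.2⟩
  refine ⟨W, hW.toIsFan.transfer hat fun i hi h hh => ⟨⟨?_, fun hhg => hne i hi ?_⟩, rfl⟩,
    fun i hi => hW.endpoint_mem i (hat hi) (hne i hi)⟩
  · exact (hW.route i (hat hi)).subset h hh
  · exact hW.eq_of_mem i (hat hi) g hW.mem h hh hhg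

end Rerouting

section RemovableTrails

/-- A trail in `A` which starts at `s` with the edge `e`, ends in `T`, and has no inner vertex in
`T`. -/
structure IsTTrail (inc : E → Sym2 V) (A : Set E) (T : Set V) (s : V) (e : E)
    (l : List (E × V)) : Prop extends IsRoute inc A s e l where
  endpoint_mem : endpoint s l ∈ T
  internal : ∀ x ∈ (verts l).dropLast, x ∉ T

/-- Some trail starting with `e` can be deleted so that all vertices of `T` stay linked. -/
def Removable (inc : E → Sym2 V) (A : Set E) (T : Set V) (s : V) (e : E) : Prop :=
  ∃ l, IsTTrail inc A T s e l ∧ ∀ t ∈ T, Linked inc (A \ {h | h ∈ edges l}) T t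

variable {inc : E → Sym2 V} {A : Set E} {T X : Set V} {s t v w x y : V} {e f g : E}
  {l m : List (E × V)} {W : E → List (E × V)}

lemma IsTTrail.evenCuts_sdiff (hl : IsTTrail inc A T s e l) (hs : s ∈ T) (hA : EvenCuts inc A T) :
    EvenCuts inc (A \ {h | h ∈ edges l}) T := by
  intro X hX hfin
  set L := {h | h ∈ edges l}
  have hLfin : (L ∩ cut inc X).Finite := (List.finite_toSet _).inter_of_left _
  have hL : Even (L ∩ cut inc X).ncard := (hl.isWalk.even_ncard_cut_iff hl.nodup X).2
    ⟨fun h => absurd hs (hX h), fun h => absurd hl.endpoint_mem (hX h)⟩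
  have hsplit : A ∩ cut inc X = (A \ L) ∩ cut inc X ∪ L ∩ cut inc X := by
    rw [← Set.union_inter_distrib_right, Set.sdiff_union_of_subset (show L ⊆ A from hl.subset)]
  have hdisj : Disjoint ((A \ L) ∩ cut inc X) (L ∩ cut inc X) :=
    Set.disjoint_sdiff_left.mono Set.inter_subset_left Set.inter_subset_left
  have heven := hA X hX (hsplit ▸ hfin.union hLfin)
  rw [hsplit, Set.ncard_union_eq hdisj hfin hLfin] at heven
  exact (Nat.even_add.1 heven).2 hL

lemma Linked.sdiff_singleton (hL : Linked inc A T t) (he : inc e = s(x, y)) (hx : x ∈ T)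
    (hy : y ∈ T) : Linked inc (A \ {e}) T t := by
  by_cases ht : t ∈ inc e
  · obtain ⟨W, hW, hend⟩ := hL
    have hat : edgesAt inc (A \ {e}) t ⊆ edgesAt inc A t := fun i hi => ⟨hi.1.1, hi.2⟩
    refine ⟨W, hW.transfer hat fun i hi h hh => ⟨⟨(hW.route i (hat hi)).subset h hh, ?_⟩, rfl⟩,
      fun i hi => hend i (hat hi)⟩
    rintro rfl
    exact hi.1.2 ((hW.route i (hat hi)).eq_of_mem hh ht).symm
  · rcases hL.sdiff_singleton_or he ht with hL | ⟨W, g, hW, hend | hend⟩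
    exacts [hL, hW.linked (hend ▸ hx), hW.linked (hend ▸ hy)]

lemma IsRoute.removable_of_endpoint_mem (hl : IsRoute inc A s e [(e, v)]) (hs : s ∈ T) (hv : v ∈ T)
    (hL : ∀ t ∈ T, Linked inc A T t) : Removable inc A T s e := by
  refine ⟨_, ⟨hl, hv, by simp⟩, fun t ht => ?_⟩
  have hset : {h | h ∈ edges [(e, v)]} = {e} := by
    ext
    simp
  exact hset ▸ (hL t ht).sdiff_singleton hl.isWalk.1 hs hv

lemma IsBarrier.removable (hX : IsBarrier inc (A \ {e}) T t W X)
    (hW : IsOpenFan inc (A \ {e}) T t W g) (hg : endpoint t (W g) ∈ X) (he : e ∈ A)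
    (hinc : inc e = s(s, endpoint t (W g))) (hs : s ∈ T) (ht : t ∈ T) (hst : s ≠ t)
    (hL : ∀ t ∈ T, Linked inc A T t) : Removable inc A T s e := by
  have hroute := hW.route g hW.mem
  obtain ⟨m, hm, hmt, hedges, hverts⟩ := hroute.isWalk.exists_reverse
  have hWX := hX.verts_subset hW.mem (List.append_nil _).symm hg
  have hmem : ∀ h, h ∈ edges m ↔ h ∈ edges (W g) := by simp [hedges]
  have hXT : ∀ x ∈ verts (W g), x ∉ T := fun x hx hxT =>
    hroute.notMem (hX.eq_of_mem x (hWX x hx) hxT ▸ hx)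
  have hset : A \ {h | h ∈ edges ((e, endpoint t (W g)) :: m)} =
      (A \ {e}) \ {h | h ∈ edges (W g)} := by
    ext h
    simp [hmem, and_assoc]
  refine ⟨(e, endpoint t (W g)) :: m, ⟨⟨⟨hinc, hm⟩, rfl, List.nodup_cons.2 ⟨fun h => ?_, ?_⟩,
    fun h => ?_, ?_⟩, ?_, fun x hx => ?_⟩, fun t' ht' => ?_⟩
  · exact (hroute.subset e ((hmem e).1 h)).2 rfl
  · exact (hedges ▸ List.nodup_reverse.2 hroute.nodup : (edges m).Nodup)
  · rw [verts_cons, hverts, List.mem_reverse, List.mem_cons] at h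
    exact h.elim hst fun h => hXT s h hs
  · exact List.forall_mem_cons.2 ⟨he, fun h hh => (hroute.subset h ((hmem h).1 hh)).1⟩
  · rwa [endpoint_cons, hmt]
  · rw [verts_cons, hverts, List.reverse_cons, List.dropLast_concat, List.mem_reverse] at hx
    exact hXT x hx
  · rw [hset]
    by_cases htt : t' = t
    · exact htt ▸ hW.linked_sdiff
    · exact hX.linked_sdiff_of_notMem hW hg hinc hs ht (fun h => htt (hX.eq_of_mem t' h ht'))
        (hL t' ht')

namespace SplitPair

variable (hp : SplitPair inc A T s v w e f)
include hp

open Classical in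
lemma isFan_split (hW : IsFan inc A s W) (hWe : W e = (e, v) :: (f, w) :: m) :
    IsFan (splitInc inc s w e) (A \ {f}) s (Function.update W e ((e, w) :: m)) := by
  have he : e ∈ edgesAt inc A s := ⟨hp.left_mem, hp.inc_left ▸ Sym2.mem_mk_left _ _⟩
  have hroute : IsRoute inc A s e ((e, v) :: (f, w) :: m) := hWe ▸ hW.route e he
  have hat : edgesAt (splitInc inc s w e) ((A \ {e}) \ {f}) s ⊆ edgesAt inc A s :=
    fun i hi => ⟨hi.1.1.1, splitInc_of_ne (inc := inc) hi.1.1.2 ▸ hi.2⟩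
  have hdisj : ∀ i ∈ edgesAt (splitInc inc s w e) ((A \ {e}) \ {f}) s, ∀ h ∈ edges (W i),
      h ∉ edges ((e, v) :: (f, w) :: m) := fun i hi h hh h' =>
    hi.1.1.2 (hW.eq_of_mem i (hat hi) e he h hh (hWe ▸ h'))
  have hfan : IsFan (splitInc inc s w e) ((A \ {e}) \ {f}) s W := by
    refine hW.transfer hat fun i hi h hh => ?_
    have hne := hdisj i hi h hh
    simp only [edges_cons, List.mem_cons, not_or] at hne
    exact ⟨⟨⟨(hW.route i (hat hi)).subset h hh, hne.1⟩, hne.2.1⟩, (splitInc_of_ne hne.1).symm⟩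
  obtain ⟨⟨-, hem⟩, hfm, hmnd⟩ : (e ≠ f ∧ e ∉ edges m) ∧ f ∉ edges m ∧ (edges m).Nodup := by
    simpa using hroute.nodup
  have hmwalk : IsWalk (splitInc inc s w e) w m :=
    IsWalk.congr hroute.isWalk.2.2 fun h hh =>
      (splitInc_of_ne (inc := inc) (s := s) (w := w) (ne_of_mem_of_not_mem hh hem)).symm
  rw [← hp.insert_sdiff]
  refine hfan.update_insert ⟨⟨splitInc_self, hmwalk⟩, rfl, List.nodup_cons.2 ⟨hem, hmnd⟩,
    fun h => hroute.notMem (List.mem_cons_of_mem _ h), ?_⟩ fun i hi _ h hh hhi => ?_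
  · rw [hp.insert_sdiff]
    exact List.forall_mem_cons.2 ⟨⟨hp.left_mem, hp.ne⟩, fun h hh =>
      ⟨hroute.subset h (List.mem_cons_of_mem _ (List.mem_cons_of_mem _ hh)),
        ne_of_mem_of_not_mem hh hfm⟩⟩
  · refine hdisj i hi h hhi ?_
    simp only [edges_cons, List.mem_cons] at hh ⊢
    tauto

lemma isTTrail_of_split (hsv : s ≠ v)
    (hl : IsTTrail (splitInc inc s w e) (A \ {f}) T s e ((e, w) :: m)) :
    IsTTrail inc A T s e ((e, v) :: (f, w) :: m) := by
  have hnd : e ∉ edges m ∧ (edges m).Nodup := by simpa using hl.nodup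
  have hsub : ∀ h ∈ edges m, h ∈ A ∧ h ≠ f := fun h hh => hl.subset h (List.mem_cons_of_mem _ hh)
  have hwalk : IsWalk inc w m :=
    IsWalk.congr hl.isWalk.2 fun h hh => splitInc_of_ne (ne_of_mem_of_not_mem hh hnd.1)
  have hfm : f ∉ edges m := fun h => (hsub f h).2 rfl
  refine ⟨⟨⟨hp.inc_left, hp.inc_right, hwalk⟩, rfl, ?_, ?_, ?_⟩, hl.endpoint_mem, ?_⟩
  · simpa [hp.ne, hfm] using hnd
  · simpa [hsv] using hl.notMem
  · simpa [hp.left_mem, hp.right_mem] using fun h hh => (hsub h hh).1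
  · simpa [hp.mid_notMem] using hl.internal

lemma removable_of_split (hsv : s ≠ v) (h : Removable (splitInc inc s w e) (A \ {f}) T s e) :
    Removable inc A T s e := by
  obtain ⟨l, hl, hL⟩ := h
  obtain ⟨x, m, rfl⟩ : ∃ x m, l = (e, x) :: m := by
    obtain ⟨⟨e', x⟩, m, rfl⟩ := List.exists_cons_of_ne_nil hl.ne_nil
    obtain rfl : e' = e := by simpa using hl.head
    exact ⟨x, m, rfl⟩
  obtain rfl : w = x := Sym2.congr_right.1 (splitInc_self.symm.trans hl.isWalk.1)
  have hset : (A \ {f}) \ {h | h ∈ edges ((e, w) :: m)} =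
      A \ {h | h ∈ edges ((e, v) :: (f, w) :: m)} := by
    ext h
    simp only [edges_cons, List.mem_cons, Set.mem_sdiff, Set.mem_singleton_iff, Set.mem_ofPred_eq]
    tauto
  have hinc : ∀ h ∈ A \ {h | h ∈ edges ((e, v) :: (f, w) :: m)}, splitInc inc s w e h = inc h :=
    fun h hh => splitInc_of_ne fun hhe => hh.2 (by simp [hhe])
  refine ⟨_, hp.isTTrail_of_split hsv hl, fun t ht => ?_⟩
  exact (hset ▸ hL t ht).transfer subset_rfl hinc fun i hi => ⟨hi.1, (hinc i hi.1).symm ▸ hi.2⟩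

open Classical in
lemma endpoint_mem_split (hWe : W e = (e, v) :: (f, w) :: m)
    (hend : ∀ i ∈ edgesAt inc A s, endpoint s (W i) ∈ T) :
    ∀ i ∈ edgesAt (splitInc inc s w e) (A \ {f}) s,
      endpoint s (Function.update W e ((e, w) :: m) i) ∈ T := by
  intro i hi
  by_cases hie : i = e
  · subst hie
    have he := hend i ⟨hp.left_mem, hp.inc_left ▸ Sym2.mem_mk_left _ _⟩
    simpa [hWe] using he
  · rw [Function.update_of_ne hie]
    exact hend i ⟨hi.1.1, splitInc_of_ne (inc := inc) hie ▸ hi.2⟩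

end SplitPair

lemma removable_of_not_linked_sdiff (hL : ∀ t ∈ T, Linked inc A T t) (he : e ∈ A)
    (hinc : inc e = s(s, v)) (hs : s ∈ T) (hv : v ∉ T) (ht : t ∈ T) (hts : t ≠ s)
    (hnot : ¬Linked inc (A \ {e}) T t) : Removable inc A T s e := by
  have hte : t ∉ inc e := by
    rw [hinc, Sym2.mem_iff]
    rintro (h | rfl)
    exacts [hts h, hv ht]
  obtain ⟨W, g, hW, rfl | rfl⟩ := ((hL t ht).sdiff_singleton_or hinc hte).resolve_left hnot
  · exact absurd (hW.linked hs) hnot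
  · obtain ⟨X, hX, hg⟩ := hW.linked_or_exists_isBarrier.resolve_left hnot
    exact hX.removable hW hg he hinc hs ht hts.symm hL

/-- If the other vertices of `T` stay linked when `e` is deleted, then `e` is split off with the
next edge of its route, which becomes shorter. -/
lemma IsFan.removable (hA : EvenCuts inc A T) (hL : ∀ t ∈ T, Linked inc A T t) (hs : s ∈ T)
    (hW : IsFan inc A s W) (hend : ∀ i ∈ edgesAt inc A s, endpoint s (W i) ∈ T)
    (he : e ∈ edgesAt inc A s) : Removable inc A T s e := by
  classical
  induction hn : (W e).length generalizing inc A W with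
  | zero => exact absurd (List.length_eq_zero_iff.1 hn) (hW.route e he).ne_nil
  | succ n ih =>
    have hroute := hW.route e he
    obtain ⟨⟨e', v⟩, l, hWe⟩ := List.exists_cons_of_ne_nil hroute.ne_nil
    rw [hWe] at hroute
    obtain rfl : e' = e := by simpa using hroute.head
    have hinc : inc e' = s(s, v) := hroute.isWalk.1
    by_cases hv : v ∈ T
    · have hstep := hroute.of_append (a := [(e', v)]) (b := l) (by simp)
      exact hstep.removable_of_endpoint_mem hs hv hL
    by_cases hsplit : ∀ t ∈ T, t ≠ s → Linked inc (A \ {e'}) T t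
    · obtain ⟨⟨f, w⟩, m, rfl⟩ := List.exists_cons_of_ne_nil
        (show l ≠ [] by rintro rfl; exact hv (by simpa [hWe] using hend e' he))
      have hp : SplitPair inc A T s v w e' f :=
        ⟨hinc, hroute.isWalk.2.1, he.1, hroute.subset f (by simp),
          fun h => by simpa [h] using hroute.nodup, hs, hv, fun h => hroute.notMem (by simp [h])⟩
      refine hp.removable_of_split (fun h => hroute.notMem (by simp [h]))
        (ih (hp.evenCuts_split hA) (fun t ht => ?_) (hp.isFan_split hW hWe)
          (hp.endpoint_mem_split hWe hend) ⟨⟨hp.left_mem, hp.ne⟩, by simp [splitInc_self]⟩ ?_)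
      · rcases eq_or_ne t s with rfl | hts
        · exact ⟨_, hp.isFan_split hW hWe, hp.endpoint_mem_split hWe hend⟩
        · exact hp.linked_split hA ht hts (hsplit t ht hts)
      · simpa [hWe] using hn
    · push Not at hsplit
      obtain ⟨t, ht, hts, hnot⟩ := hsplit
      exact removable_of_not_linked_sdiff hL he.1 hinc hs hv ht hts hnot

theorem removable_of_mem_edgesAt (hA : EvenCuts inc A T) (hL : ∀ t ∈ T, Linked inc A T t)
    (hs : s ∈ T) (he : e ∈ edgesAt inc A s) : Removable inc A T s e := by
  obtain ⟨W, hW, hend⟩ := hL s hs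
  exact hW.removable hA hL hs hend he

end RemovableTrails

section TrailSystems

/-- The hypotheses of the theorem for the subgraph with edge set `A`. -/
structure EvenLinked (inc : E → Sym2 V) (A : Set E) (T : Set V) : Prop where
  evenCuts : EvenCuts inc A T
  linked : ∀ t ∈ T, Linked inc A T t

/-- A system of edge-disjoint trails in `A` between vertices of `T`, given by their edge sets, which
covers all edges of `A` at `T`. -/
structure IsTrailSystem (inc : E → Sym2 V) (A : Set E) (T : Set V) (F : Set (Set E)) : Prop where
  disjoint : F.PairwiseDisjoint id
  exists_trail : ∀ D ∈ F, ∃ s ∈ T, ∃ e l, IsTTrail inc A T s e l ∧ D = {h | h ∈ edges l}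
  covers : ∀ t ∈ T, edgesAt inc A t ⊆ ⋃₀ F

variable {inc : E → Sym2 V} {A : Set E} {T : Set V} {s : V} {e : E} {l : List (E × V)}

lemma EvenLinked.exists_step (hA : EvenLinked inc A T) (e : E) :
    ∃ D, EvenLinked inc (A \ D) T ∧ ((∃ t ∈ T, e ∈ edgesAt inc A t) → e ∈ D) ∧
      (D.Nonempty → ∃ s ∈ T, ∃ e l, IsTTrail inc A T s e l ∧ D = {h | h ∈ edges l}) := by
  by_cases he : ∃ t ∈ T, e ∈ edgesAt inc A t
  · obtain ⟨s, hs, hes⟩ := he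
    obtain ⟨l, hl, hL⟩ := removable_of_mem_edgesAt hA.evenCuts hA.linked hs hes
    exact ⟨_, ⟨hl.evenCuts_sdiff hs hA.evenCuts, hL⟩, fun _ => hl.mem_edges,
      fun _ => ⟨s, hs, e, l, hl, rfl⟩⟩
  · exact ⟨∅, by simpa using hA, fun h => absurd h he, fun h => absurd h (by simp)⟩

lemma IsTTrail.mono {B : Set E} (hl : IsTTrail inc A T s e l) (hAB : A ⊆ B) :
    IsTTrail inc B T s e l :=
  ⟨hl.transfer fun h hh => ⟨hAB (hl.subset h hh), rfl⟩, hl.endpoint_mem, hl.internal⟩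

/-- Delete, one after the other, trails through the edges of the sequence. -/
lemma EvenLinked.exists_disjoint_trails (hA : EvenLinked inc A T) (enum : ℕ → E) :
    ∃ C : ℕ → Set E, Pairwise (Function.onFun Disjoint C) ∧
      (∀ n, (C n).Nonempty →
        ∃ s ∈ T, ∃ e l, IsTTrail inc A T s e l ∧ C n = {h | h ∈ edges l}) ∧
      ∀ n, (∃ t ∈ T, enum n ∈ edgesAt inc A t) → ∃ k, enum n ∈ C k := by
  choose D hD hcov htrail using fun B : {B // EvenLinked inc B T} => B.2.exists_step
  let B : ℕ → {B // EvenLinked inc B T} := fun n =>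
    n.rec ⟨A, hA⟩ fun n B => ⟨B \ D B (enum n), hD B (enum n)⟩
  let C : ℕ → Set E := fun n => D (B n) (enum n)
  have hmem : ∀ n h, h ∈ (B n).1 ↔ h ∈ A ∧ ∀ k < n, h ∉ C k := by
    intro n h
    induction n with
    | zero => simp [B]
    | succ n ih =>
      change h ∈ (B n).1 ∧ h ∉ C n ↔ _
      rw [ih, and_assoc, ← Nat.forall_lt_succ_right]
  have hsub : ∀ n, C n ⊆ (B n).1 := by
    intro n h hh
    obtain ⟨s, -, e, l, hl, hC⟩ := htrail (B n) (enum n) ⟨h, hh⟩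
    exact hl.subset h (hC.subset hh)
  refine ⟨C, ?_, fun n hn => ?_, fun n ⟨t, ht, he⟩ => ?_⟩
  · rw [pairwise_disjoint_on]
    exact fun m n hmn => Set.disjoint_right.2 fun h hh => ((hmem n h).1 (hsub n hh)).2 m hmn
  · obtain ⟨s, hs, e, l, hl, hC⟩ := htrail (B n) (enum n) hn
    exact ⟨s, hs, e, l, hl.mono fun h hh => ((hmem n h).1 hh).1, hC⟩
  · by_cases hn : enum n ∈ (B n).1
    · exact ⟨n, hcov (B n) (enum n) ⟨t, ht, hn, he.2⟩⟩
    · by_contra! hnot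
      exact hn ((hmem n _).2 ⟨he.1, fun k _ => hnot k⟩)

theorem EvenLinked.exists_isTrailSystem_of_countable (hA : EvenLinked inc A T) (hc : A.Countable) :
    ∃ F, IsTrailSystem inc A T F := by
  rcases A.eq_empty_or_nonempty with rfl | hne
  · exact ⟨∅, by simp, by simp, by simp [edgesAt]⟩
  obtain ⟨enum, henum⟩ := hc.exists_eq_range hne
  obtain ⟨C, hdisj, htrail, hcov⟩ := hA.exists_disjoint_trails enum
  refine ⟨{D | D ∈ Set.range C ∧ D.Nonempty}, ?_, ?_, ?_⟩
  · rintro _ ⟨⟨m, rfl⟩, -⟩ _ ⟨⟨n, rfl⟩, -⟩ hne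
    exact hdisj fun h => hne (h ▸ rfl)
  · rintro _ ⟨⟨n, rfl⟩, hn⟩
    exact htrail n hn
  · intro t ht h hh
    obtain ⟨n, rfl⟩ := henum.subset hh.1
    obtain ⟨k, hk⟩ := hcov n ⟨t, ht, hh⟩
    exact ⟨C k, ⟨⟨k, rfl⟩, _, hk⟩, hk⟩

end TrailSystems

section Cardinality

open Cardinal Ordinal

variable {α : Type v} {s : Set α} {μ : Cardinal.{v}} {o : Ordinal.{v}}

lemma exists_rank (s : Set α) :
    ∃ r : α → Ordinal.{v}, s.InjOn r ∧ ∀ a ∈ s, r a < (#s).ord := by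
  classical
  obtain ⟨lt, _, hlt⟩ := exists_ord_eq s
  refine ⟨fun a => if h : a ∈ s then typein lt ⟨a, h⟩ else 0, fun a ha b hb hab => ?_,
    fun a ha => ?_⟩
  · simp only [ha, hb, dif_pos] at hab
    exact congrArg Subtype.val (typein_injective lt hab)
  · simp only [ha, dif_pos, hlt]
    exact typein_lt_type lt _

lemma mk_setOf_rank_le {r : α → Ordinal.{v}} (hr : s.InjOn r) (ho : ω ≤ o) :
    #{a | a ∈ s ∧ r a ≤ o} ≤ o.card := by
  let f : {a | a ∈ s ∧ r a ≤ o} → Set.Iio (Order.succ o) :=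
    fun a => ⟨r a.1, Order.lt_succ_of_le a.2.2⟩
  have hf : Function.Injective f := fun a b hab =>
    Subtype.ext (hr a.2.1 b.2.1 (congrArg Subtype.val hab))
  have hle := lift_mk_le_lift_mk_of_injective hf
  rw [Cardinal.mk_Iio_ordinal, Cardinal.lift_lift, Cardinal.lift_le] at hle
  have ho' : ℵ₀ ≤ o.card := by simpa using card_le_card ho
  rwa [Order.succ_eq_add_one, card_add_one, add_one_eq ho'] at hle

lemma mk_biUnion_le_of_finite {β : Type*} {B : Set β} (hμ : ℵ₀ ≤ μ) (hB : B.Finite)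
    {C : β → Set α} (hC : ∀ i ∈ B, #(C i) ≤ μ) : #(⋃ i ∈ B, C i : Set α) ≤ μ := by
  induction B, hB using Set.Finite.induction_on with
  | empty => simp
  | insert _ _ ih =>
    rw [Set.biUnion_insert]
    exact (mk_union_le _ _).trans (add_le_of_le hμ (hC _ (Set.mem_insert _ _))
      (ih fun i hi => hC i (Set.mem_insert_of_mem _ hi)))

lemma mk_biUnion_finset_le (hμ : ℵ₀ ≤ μ) {Q : Set (Finset α)} (hQ : #Q ≤ μ) :
    #(⋃ q ∈ Q, (q : Set α) : Set α) ≤ μ :=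
  (mk_biUnion_le _ _).trans (mul_le_of_le hμ hQ (ciSup_le' fun _ => mk_le_aleph0.trans hμ))

/-- One round of closing `Y` under the finitary operation `J`. -/
def closureStep (J : Finset α → Set α) (Y : Set α) : Set α :=
  Y ∪ ⋃ Z : Finset Y, J (Z.map (Function.Embedding.subtype _))

lemma mk_closureStep_le (hμ : ℵ₀ ≤ μ) {J : Finset α → Set α} (hJ : ∀ Z, #(J Z) ≤ μ) {Y : Set α}
    (hY : #Y ≤ μ) : #(closureStep J Y) ≤ μ := by
  refine (mk_union_le _ _).trans (add_le_of_le hμ hY ((mk_iUnion_le _).trans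
    (mul_le_of_le hμ ?_ (ciSup_le' fun Z => hJ _))))
  rcases finite_or_infinite Y with hfin | hinf
  · exact mk_le_aleph0.trans hμ
  · rwa [mk_finset_of_infinite]

lemma subset_closureStep {J : Finset α → Set α} {Y : Set α} {Z : Finset α} (hZ : ↑Z ⊆ Y) :
    J Z ⊆ closureStep J Y := by
  classical
  have hZ' : (Z.subtype (· ∈ Y)).map (Function.Embedding.subtype _) = Z :=
    Finset.subtype_map_of_mem fun _ h => hZ h
  exact (Set.subset_iUnion_of_subset (Z.subtype (· ∈ Y)) (by rw [hZ'])).trans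
    Set.subset_union_right

lemma exists_closed_superset (hμ : ℵ₀ ≤ μ) {J : Finset α → Set α} (hJ : ∀ Z, #(J Z) ≤ μ)
    {Y : Set α} (hY : #Y ≤ μ) :
    ∃ Y' ⊇ Y, #Y' ≤ μ ∧ ∀ Z : Finset α, ↑Z ⊆ Y' → J Z ⊆ Y' := by
  let C : ℕ → Set α := fun n => (closureStep J)^[n] Y
  have hsucc : ∀ n, C (n + 1) = closureStep J (C n) := fun n => Function.iterate_succ_apply' _ _ _
  have hmono : Monotone C := monotone_nat_of_le_succ fun n => by
    rw [hsucc]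
    exact Set.subset_union_left
  have hcard : ∀ n, #(C n) ≤ μ := by
    intro n
    induction n with
    | zero => exact hY
    | succ n ih => exact hsucc n ▸ mk_closureStep_le hμ hJ ih
  refine ⟨⋃ n, C n, Set.subset_iUnion C 0, ?_, fun Z hZ => ?_⟩
  · have hle := mk_iUnion_le_lift C
    simp only [mk_nat, lift_aleph0, Cardinal.lift_uzero] at hle
    exact hle.trans (mul_le_of_le hμ hμ (ciSup_le' hcard))
  · obtain ⟨n, hn⟩ : ∃ n, ↑Z ⊆ C n :=
      hmono.directed_le.exists_mem_subset_of_finset_subset_biUnion hZ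
    exact (hsucc n ▸ subset_closureStep hn).trans (Set.subset_iUnion C (n + 1))

end Cardinality

section Connectors

/-- `x` and `y` lie in the same component of the subgraph with edge set `A`: no empty cut separates
them. -/
def Joined (inc : E → Sym2 V) (A : Set E) (x y : V) : Prop :=
  ∀ X : Set V, Disjoint A (cut inc X) → (x ∈ X ↔ y ∈ X)

/-- The vertices incident with an edge in `A`. -/
def support (inc : E → Sym2 V) (A : Set E) : Set V := {x | ∃ e ∈ A, x ∈ inc e}

/-- The finite subsets of `A` that join `x` and `y`; they stand in for paths. -/
def connectors (inc : E → Sym2 V) (A : Set E) (x y : V) : Set (Finset E) :=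
  {q | ↑q ⊆ A ∧ Joined inc ↑q x y}

/-- A maximal set of pairwise disjoint members of `C`. -/
structure IsMaxPacking {α : Type*} (C Q : Set (Finset α)) : Prop where
  subset : Q ⊆ C
  disjoint : Q.PairwiseDisjoint id
  mem_of_disjoint : ∀ q ∈ C, (∀ q' ∈ Q, Disjoint q q') → q ∈ Q

variable {inc : E → Sym2 V} {A B F : Set E} {X : Set V} {x y z : V} {e : E}

lemma exists_isMaxPacking {α : Type*} (C : Set (Finset α)) : ∃ Q, IsMaxPacking C Q := by
  obtain ⟨Q, hQ⟩ := zorn_subset {Q | Q ⊆ C ∧ Q.PairwiseDisjoint id} fun c hc hch =>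
    ⟨⋃₀ c, ⟨Set.sUnion_subset fun Q hQ => (hc hQ).1,
      (Set.pairwiseDisjoint_sUnion hch.directedOn).2 fun Q hQ => (hc hQ).2⟩,
      fun _ => Set.subset_sUnion_of_mem⟩
  refine ⟨Q, hQ.prop.1, hQ.prop.2, fun q hq hdisj => ?_⟩
  have hins : insert q Q ∈ {Q | Q ⊆ C ∧ Q.PairwiseDisjoint id} :=
    ⟨Set.insert_subset hq hQ.prop.1, hQ.prop.2.insert fun q' hq' _ => hdisj q' hq'⟩
  exact hQ.le_of_ge hins (Set.subset_insert _ _) (Set.mem_insert _ _)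

lemma exists_inc_eq (inc : E → Sym2 V) (e : E) : ∃ x y, inc e = s(x, y) :=
  ⟨_, _, (Quot.out_eq (inc e)).symm⟩

lemma finite_support (inc : E → Sym2 V) (Z : Finset E) : (support inc (Z : Set E)).Finite := by
  have hsupp : support inc (Z : Set E) = ⋃ e ∈ Z, {x | x ∈ inc e} := by
    ext
    simp [support]
  rw [hsupp]
  refine Z.finite_toSet.biUnion fun e _ => ?_
  obtain ⟨a, b, he⟩ := exists_inc_eq inc e
  exact (Set.toFinite {a, b}).subset fun x hx => Sym2.mem_iff.1 (he ▸ hx)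

lemma support_mono (hAB : A ⊆ B) : support inc A ⊆ support inc B :=
  fun _ ⟨e, he, hx⟩ => ⟨e, hAB he, hx⟩

lemma Joined.refl : Joined inc A x x := fun _ _ => Iff.rfl

lemma Joined.symm (h : Joined inc A x y) : Joined inc A y x := fun X hX => (h X hX).symm

lemma Joined.trans (hxy : Joined inc A x y) (hyz : Joined inc A y z) : Joined inc A x z :=
  fun X hX => (hxy X hX).trans (hyz X hX)

lemma Joined.mono (h : Joined inc A x y) (hAB : A ⊆ B) : Joined inc B x y :=
  fun X hX => h X (hX.mono_left hAB)

lemma Joined.of_mem (he : e ∈ A) (hinc : inc e = s(x, y)) : Joined inc A x y := fun X hX => by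
  simpa [mem_cut_iff hinc] using Set.disjoint_left.1 hX he

lemma Joined.exists_mem_cut (h : Joined inc A x y) (hx : x ∈ X) (hy : y ∉ X) :
    ∃ e ∈ A, e ∈ cut inc X := by
  by_contra! hdisj
  exact hy ((h X (Set.disjoint_left.2 hdisj)).1 hx)

lemma Joined.exists_connector (h : Joined inc A x y) : ∃ q, q ∈ connectors inc A x y := by
  classical
  refine (h {z | ∃ q, q ∈ connectors inc A x z} (Set.disjoint_left.2 ?_)).1
    ⟨∅, by simp, Joined.refl⟩
  rintro e he ⟨a, b, hab, ⟨q, hq, ha⟩, hb⟩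
  refine hb ⟨insert e q, ?_, (ha.mono (by simp)).trans (Joined.of_mem (e := e) (by simp) hab)⟩
  rw [Finset.coe_insert]
  exact Set.insert_subset he hq

lemma EvenCuts.sdiff_of_not_joined (hA : EvenCuts inc A ∅)
    (hsep : ∀ X, (A \ F ∩ cut inc X).Finite → ∀ x ∈ support inc F, ∀ y ∈ support inc F,
      x ∈ X → y ∉ X → ¬Joined inc (A \ F) x y) : EvenCuts inc (A \ F) ∅ := by
  intro X _ hfin
  let P : Set V := {z | ∃ x ∈ support inc F, x ∈ X ∧ Joined inc (A \ F) z x}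
  have hPmem : ∀ a b, Joined inc (A \ F) a b → (a ∈ P ↔ b ∈ P) := fun a b hab =>
    ⟨fun ⟨x, hx, hxX, hax⟩ => ⟨x, hx, hxX, hab.symm.trans hax⟩,
      fun ⟨x, hx, hxX, hbx⟩ => ⟨x, hx, hxX, hab.trans hbx⟩⟩
  -- `X ∆ P` has the same cut as `X` in `A \ F` and is disjoint from the support of `F`.
  have hF' : ∀ a ∈ support inc F, a ∈ X ↔ a ∈ P := fun a ha =>
    ⟨fun haX => ⟨a, ha, haX, Joined.refl⟩, fun ⟨x, hx, hxX, hax⟩ => by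
      by_contra haX
      exact hsep X hfin x hx a ha hxX haX hax.symm⟩
  have hcut : A \ F ∩ cut inc X = A ∩ cut inc {z | ¬(z ∈ X ↔ z ∈ P)} := by
    ext e
    obtain ⟨a, b, hab⟩ := exists_inc_eq inc e
    simp only [Set.mem_inter_iff, Set.mem_sdiff, mem_cut_iff hab, Set.mem_ofPred_eq]
    by_cases heA : e ∈ A
    · by_cases heF : e ∈ F
      · have ha := hF' a ⟨e, heF, hab ▸ Sym2.mem_mk_left a b⟩
        have hb := hF' b ⟨e, heF, hab ▸ Sym2.mem_mk_right a b⟩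
        tauto
      · have hP := hPmem a b (Joined.of_mem ⟨heA, heF⟩ hab)
        tauto
    · tauto
  rw [hcut] at hfin ⊢
  exact hA _ (by simp) hfin

lemma EvenCuts.of_joined (hB : EvenCuts inc B ∅) (hAB : A ⊆ B)
    (hjoin : ∀ x ∈ support inc A, ∀ y ∈ support inc A, ∀ C : Finset E, ↑C ⊆ A →
      Joined inc (B \ C) x y → Joined inc (A \ C) x y) : EvenCuts inc A ∅ := by
  intro X _ hfin
  obtain ⟨C, hC⟩ := hfin.exists_finset_coe
  have hCA : ↑C ⊆ A := hC ▸ Set.inter_subset_left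
  let Y : Set V := {z | ∃ y ∈ support inc A, y ∈ X ∧ Joined inc (B \ C) z y}
  have hcut : A ∩ cut inc X = B ∩ cut inc Y := by
    ext e
    constructor
    · rintro ⟨heA, a, b, hab, haX, hbX⟩
      refine ⟨hAB heA, a, b, hab, ⟨a, ⟨e, heA, hab ▸ Sym2.mem_mk_left a b⟩, haX, Joined.refl⟩, ?_⟩
      rintro ⟨y, hy, hyX, hby⟩
      obtain ⟨h, hh, hhX⟩ := (hjoin b ⟨e, heA, hab ▸ Sym2.mem_mk_right a b⟩ y hy C hCA
        hby).symm.exists_mem_cut hyX hbX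
      exact hh.2 (hC.symm.subset ⟨hh.1, hhX⟩)
    · rintro ⟨heB, a, b, hab, ⟨y, hy, hyX, hay⟩, hb⟩
      rw [← hC]
      by_contra heC
      have hab' : Joined inc (B \ C) a b := Joined.of_mem ⟨heB, heC⟩ hab
      exact hb ⟨y, hy, hyX, hab'.symm.trans hay⟩
  rw [hcut] at hfin ⊢
  exact hB Y (by simp) hfin

end Connectors

section Packings

open Cardinal

variable {inc : E → Sym2 V} {A F : Set E} {X : Set V} {x y : V}
  {Q : Set (Finset E)}

lemma mk_le_of_pairwiseDisjoint (hQ : Q.PairwiseDisjoint id) {Y : Set E}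
    (hY : ∀ q ∈ Q, ∃ e ∈ q, e ∈ Y) : #Q ≤ #Y := by
  choose f hfq hfY using fun q : Q => hY q q.2
  refine mk_le_of_injective (f := fun q => (⟨f q, hfY q⟩ : Y)) fun q q' h => Subtype.ext ?_
  have h' : f q = f q' := congrArg Subtype.val h
  exact hQ.elim_finset q.2 q'.2 (f q) (hfq q) (h' ▸ hfq q')

lemma IsMaxPacking.not_joined_sdiff (hQ : IsMaxPacking (connectors inc A x y) Q)
    (hF : (∀ q ∈ Q, ↑q ⊆ F) ∨ max ℵ₀ #F < #Q) (hX : (A \ F ∩ cut inc X).Finite) (hx : x ∈ X)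
    (hy : y ∉ X) : ¬Joined inc (A \ F) x y := by
  intro hjoin
  rcases hF with hsub | hlarge
  · obtain ⟨q, hqA, hq⟩ := hjoin.exists_connector
    have hqQ : q ∈ Q := hQ.mem_of_disjoint q ⟨hqA.trans Set.sdiff_subset, hq⟩ fun q' hq' =>
      Finset.disjoint_left.2 fun e he he' => (hqA he).2 (hsub q' hq' he')
    obtain ⟨e, he, -⟩ := hq.exists_mem_cut hx hy
    exact (hqA he).2 (hsub q hqQ he)
  · refine hlarge.not_ge ((mk_le_of_pairwiseDisjoint hQ.disjoint
      (Y := F ∪ A \ F ∩ cut inc X) fun q hq => ?_).trans ?_)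
    · obtain ⟨hqA, hq⟩ := hQ.subset hq
      obtain ⟨e, he, heX⟩ := hq.exists_mem_cut hx hy
      by_cases heF : e ∈ F
      · exact ⟨e, he, Or.inl heF⟩
      · exact ⟨e, he, Or.inr ⟨⟨hqA he, heF⟩, heX⟩⟩
    · exact (mk_union_le _ _).trans (add_le_of_le (le_max_left _ _) (le_max_right _ _)
        (hX.lt_aleph0.le.trans (le_max_left _ _)))

end Packings

section Hulls

open Cardinal Ordinal

variable {inc : E → Sym2 V} {S F F' : Set E}
  {Q : V → V → Set (Finset E)} {r : E → Ordinal.{v}} {ρ : V → V → Finset E → Ordinal.{v}}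
  {o : Ordinal.{v}}

/-- `F'` is a hull of `F` in `S` at stage `o`: it has at most `|o|` edges, contains the edges and
the members of the packings `Q x y` of rank at most `o`, and finite sets of edges of `F' \ F`
separate vertices of `F'` in `F' \ F` only if they do so in `S \ F`. -/
structure IsHull (inc : E → Sym2 V) (S : Set E) (Q : V → V → Set (Finset E)) (r : E → Ordinal.{v})
    (ρ : V → V → Finset E → Ordinal.{v}) (o : Ordinal.{v}) (F F' : Set E) : Prop where
  subset : F ⊆ F'
  subset_ground : F' ⊆ S
  mk_le : #F' ≤ o.card
  mem_of_rank_le : ∀ e ∈ S, r e ≤ o → e ∈ F'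
  subset_of_rank_le : ∀ x ∈ support inc F', ∀ y ∈ support inc F', ∀ q ∈ Q x y, ρ x y q ≤ o →
    ↑q ⊆ F'
  joined : ∀ x ∈ support inc F', ∀ y ∈ support inc F', ∀ C : Finset E, ↑C ⊆ F' \ F →
    Joined inc ((S \ F) \ C) x y → Joined inc ((F' \ F) \ C) x y

lemma exists_closed_on_support {μ : Cardinal.{v}} (hμ : ℵ₀ ≤ μ) (inc : E → Sym2 V)
    {J : V → V → Finset E → Set E} (hJ : ∀ x y C, #(J x y C) ≤ μ) {Y : Set E} (hY : #Y ≤ μ) :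
    ∃ Y' ⊇ Y, #Y' ≤ μ ∧ ∀ x ∈ support inc Y', ∀ y ∈ support inc Y', ∀ C : Finset E, ↑C ⊆ Y' →
      J x y C ⊆ Y' := by
  classical
  let J' : Finset E → Set E := fun Z => ⋃ x ∈ support inc Z, ⋃ y ∈ support inc Z,
    ⋃ C ∈ (Z.powerset : Set (Finset E)), J x y C
  have hJ' : ∀ Z, #(J' Z) ≤ μ := fun Z =>
    mk_biUnion_le_of_finite hμ (finite_support inc Z) fun x _ =>
      mk_biUnion_le_of_finite hμ (finite_support inc Z) fun y _ =>
        mk_biUnion_le_of_finite hμ (Finset.finite_toSet _) fun C _ => hJ x y C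
  obtain ⟨Y', hYY', hcard, hclosed⟩ := exists_closed_superset hμ hJ' hY
  refine ⟨Y', hYY', hcard, ?_⟩
  rintro x ⟨e, he, hx⟩ y ⟨f, hf, hy⟩ C hC h hh
  have hZ : ↑(insert e (insert f C)) ⊆ Y' := by
    simp only [Finset.coe_insert]
    exact Set.insert_subset he (Set.insert_subset hf hC)
  refine hclosed _ hZ ?_
  simp only [J', Set.mem_iUnion]
  exact ⟨x, ⟨e, by simp, hx⟩, y, ⟨f, by simp, hy⟩, C,
    Finset.mem_powerset.2 fun _ h => by simp [h], hh⟩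

lemma exists_isHull (inc : E → Sym2 V) (hr : S.InjOn r) (hρ : ∀ x y, (Q x y).InjOn (ρ x y))
    (hQ : ∀ x y, ∀ q ∈ Q x y, ↑q ⊆ S) (ho : ω ≤ o) (hFS : F ⊆ S) (hF : #F ≤ o.card) :
    ∃ F', IsHull inc S Q r ρ o F F' := by
  have hconn : ∀ x y (C : Finset E), ∃ q : Finset E, ↑q ⊆ (S \ F) \ C ∧
      (Joined inc ((S \ F) \ C) x y → Joined inc q x y) := by
    intro x y C
    by_cases h : Joined inc ((S \ F) \ C) x y
    · obtain ⟨q, hqS, hq⟩ := h.exists_connector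
      exact ⟨q, hqS, fun _ => hq⟩
    · exact ⟨∅, by simp, fun h' => absurd h' h⟩
  choose R hRS hR using hconn
  have hμ : ℵ₀ ≤ o.card := by simpa using card_le_card ho
  let J : V → V → Finset E → Set E := fun x y C =>
    (⋃ q ∈ {q | q ∈ Q x y ∧ ρ x y q ≤ o}, ↑q) ∪ ↑(R x y C)
  have hJ : ∀ x y C, #(J x y C) ≤ o.card := fun x y C => (mk_union_le _ _).trans
    (add_le_of_le hμ (mk_biUnion_finset_le hμ (mk_setOf_rank_le (hρ x y) ho))
      (mk_le_aleph0.trans hμ))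
  obtain ⟨Y, hFY, hY, hclosed⟩ := exists_closed_on_support hμ inc hJ
    (Y := F ∪ {e | e ∈ S ∧ r e ≤ o})
    ((mk_union_le _ _).trans (add_le_of_le hμ hF (mk_setOf_rank_le hr ho)))
  have hsupp : support inc (Y ∩ S) ⊆ support inc Y := support_mono Set.inter_subset_left
  refine ⟨Y ∩ S, Set.subset_inter (Set.subset_union_left.trans hFY) hFS, Set.inter_subset_right,
    (mk_le_mk_of_subset Set.inter_subset_left).trans hY,
    fun e he hre => ⟨hFY (Or.inr ⟨he, hre⟩), he⟩, fun x hx y hy q hq hqo => ?_,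
    fun x hx y hy C hC hjoin => (hR x y C hjoin).mono fun e he => ?_⟩
  · refine Set.subset_inter (fun e he => ?_) (hQ x y q hq)
    exact hclosed x (hsupp hx) y (hsupp hy) ∅ (by simp) (Or.inl (Set.mem_biUnion ⟨hq, hqo⟩ he))
  · have heR := hRS x y C he
    have heY := hclosed x (hsupp hx) y (hsupp hy) C (fun h hh => (hC hh).1.1) (Or.inr he)
    exact ⟨⟨⟨heY, heR.1.1⟩, heR.1.2⟩, heR.2⟩

lemma IsHull.evenCuts (h : IsHull inc S Q r ρ o F F') (hF : EvenCuts inc (S \ F) ∅) :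
    EvenCuts inc (F' \ F) ∅ :=
  hF.of_joined (Set.sdiff_subset_sdiff_left h.subset_ground) fun x hx y hy =>
    h.joined x (support_mono Set.sdiff_subset hx) y (support_mono Set.sdiff_subset hy)

/-- The union of the stages of `H` before `o`. -/
def below (H : Ordinal.{v} → Set E) (o : Ordinal.{v}) : Set E := ⋃ c < o, H c

lemma mem_below {H : Ordinal.{v} → Set E} {e : E} : e ∈ below H o ↔ ∃ c < o, e ∈ H c := by
  simp [below]

lemma eq_of_mem_sdiff_below {H : Ordinal.{v} → Set E} {b c : Ordinal.{v}} {e : E}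
    (hb : e ∈ H b \ below H b) (hc : e ∈ H c \ below H c) : b = c := by
  rcases lt_trichotomy b c with h | h | h
  · exact absurd (mem_below.2 ⟨b, h, hb.1⟩) hc.2
  · exact h
  · exact absurd (mem_below.2 ⟨c, h, hc.1⟩) hb.2

/-- The transfinite sequence in which every stage is the image under `hull` of the union of the
earlier ones. -/
noncomputable def stage (hull : Ordinal.{v} → Set E → Set E) (o : Ordinal.{v}) : Set E :=
  hull o (⋃ c : Set.Iio o, stage hull c.1)
termination_by o
decreasing_by exact c.2

lemma stage_eq (hull : Ordinal.{v} → Set E → Set E) (o : Ordinal.{v}) :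
    stage hull o = hull o (below (stage hull) o) := by
  rw [stage, below, Set.iUnion_subtype]
  rfl

/-- Every stage of `H` is a hull of the union of the earlier ones. Stage `o` uses `max ω o` since
all sizes are only controlled up to `ℵ₀`. -/
def IsHullSequence (inc : E → Sym2 V) (S : Set E) (Q : V → V → Set (Finset E))
    (r : E → Ordinal.{v}) (ρ : V → V → Finset E → Ordinal.{v}) (H : Ordinal.{v} → Set E) : Prop :=
  ∀ o, IsHull inc S Q r ρ (max ω o) (below H o) (H o)

lemma mk_below_le {H : Ordinal.{v} → Set E} (hH : ∀ c < o, #(H c) ≤ (max ω c).card) :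
    #(below H o) ≤ (max ω o).card :=
  mk_biUnion_le_of_le (card_le_card (le_max_right _ _))
    (by simp) H
    fun c hc => (hH c hc).trans (card_le_card (max_le_max le_rfl hc.le))

lemma exists_isHullSequence (inc : E → Sym2 V) (hr : S.InjOn r)
    (hρ : ∀ x y, (Q x y).InjOn (ρ x y)) (hQ : ∀ x y, ∀ q ∈ Q x y, ↑q ⊆ S) :
    ∃ H, IsHullSequence inc S Q r ρ H := by
  choose! hull hhull using fun (o : Ordinal.{v}) (F : Set E) (hF : F ⊆ S ∧ #F ≤ (max ω o).card) =>
    exists_isHull inc hr hρ hQ (le_max_left ω o) hF.1 hF.2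
  refine ⟨stage hull, fun o => ?_⟩
  induction o using WellFoundedLT.induction with
  | ind o ih =>
    rw [stage_eq]
    exact hhull o _ ⟨Set.iUnion₂_subset fun c hc => (ih c hc).subset_ground,
      mk_below_le fun c hc => (ih c hc).mk_le⟩

variable {H : Ordinal.{v} → Set E}

lemma IsHullSequence.mono (hH : IsHullSequence inc S Q r ρ H) : Monotone H := by
  intro b c hbc
  rcases hbc.eq_or_lt with rfl | hlt
  · rfl
  · exact fun e he => (hH c).subset (mem_below.2 ⟨b, hlt, he⟩)

lemma IsHullSequence.packing_below (hH : IsHullSequence inc S Q r ρ H) {x y : V}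
    (hρ : ∀ q ∈ Q x y, ρ x y q < (#(Q x y)).ord) (hx : x ∈ support inc (below H o))
    (hy : y ∈ support inc (below H o)) :
    (∀ q ∈ Q x y, ↑q ⊆ below H o) ∨ max ℵ₀ #(below H o) < #(Q x y) := by
  by_contra! hcon
  obtain ⟨⟨q, hq, hqo⟩, hsmall⟩ := hcon
  obtain ⟨e, he, hxe⟩ := hx
  obtain ⟨f, hf, hyf⟩ := hy
  obtain ⟨b, hb, he⟩ := mem_below.1 he
  obtain ⟨c, hc, hf⟩ := mem_below.1 hf
  have hrank : ∀ d < o, max ω d < ρ x y q := by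
    intro d hd
    by_contra! hle
    have hm : max (max b c) d < o := max_lt (max_lt hb hc) hd
    have hsub := (hH (max (max b c) d)).subset_of_rank_le x
      ⟨e, hH.mono ((le_max_left b c).trans (le_max_left _ d)) he, hxe⟩ y
      ⟨f, hH.mono ((le_max_right b c).trans (le_max_left _ d)) hf, hyf⟩ q hq
      (hle.trans (max_le_max le_rfl (le_max_right _ d)))
    exact hqo fun h hh => mem_below.2 ⟨_, hm, hsub hh⟩
  have ho : max ω o ≤ ρ x y q := max_le ((le_max_left ω b).trans (hrank b hb).le)
    (le_of_forall_lt fun d hd => (le_max_right ω d).trans_lt (hrank d hd))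
  have hcard : (max ω o).card < #(Q x y) := lt_ord.1 (ho.trans_lt (hρ q hq))
  have hω : ℵ₀ ≤ (max ω o).card := by simp
  exact hsmall.not_gt ((max_le hω (mk_below_le fun c _ => (hH c).mk_le)).trans_lt hcard)

lemma IsHullSequence.evenCuts (hH : IsHullSequence inc S Q r ρ H) (hS : EvenCuts inc S ∅)
    (hQ : ∀ x y, IsMaxPacking (connectors inc S x y) (Q x y))
    (hρ : ∀ x y, ∀ q ∈ Q x y, ρ x y q < (#(Q x y)).ord) (o : Ordinal.{v}) :
    EvenCuts inc (H o \ below H o) ∅ :=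
  (hH o).evenCuts <| hS.sdiff_of_not_joined fun _ hX x hx y hy =>
    (hQ x y).not_joined_sdiff (hH.packing_below (hρ x y) hx hy) hX

lemma IsHullSequence.exists_mem (hH : IsHullSequence inc S Q r ρ H) {e : E} (he : e ∈ S) :
    ∃ o ≤ r e, e ∈ H o \ below H o := by
  have hre : e ∈ H (r e) := (hH (r e)).mem_of_rank_le e he (le_max_right _ _)
  obtain ⟨o, ho, hmin⟩ := wellFounded_lt.has_min {o | e ∈ H o} ⟨_, hre⟩
  refine ⟨o, not_lt.1 (hmin _ hre), ho, fun h => ?_⟩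
  obtain ⟨c, hc, hec⟩ := mem_below.1 h
  exact hmin c hec hc

end Hulls

section CountablePieces

open Cardinal Ordinal

/-- A partition of `S` into countable sets of edges, none of which has an odd finite cut around a
set of vertices avoiding `T`. -/
structure IsEvenPartition (inc : E → Sym2 V) (S : Set E) (T : Set V)
    (P : Set (Set E)) : Prop where
  countable : ∀ D ∈ P, D.Countable
  evenCuts : ∀ D ∈ P, EvenCuts inc D T
  disjoint : P.PairwiseDisjoint id
  sUnion_eq : ⋃₀ P = S

variable {inc : E → Sym2 V} {S : Set E}

/-- Every uncountable `S` is split into smaller sets by a hull sequence. -/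
theorem EvenCuts.exists_isEvenPartition_empty (hS : EvenCuts inc S ∅) :
    ∃ P, IsEvenPartition inc S ∅ P := by
  induction hκ : #S using WellFoundedLT.induction generalizing S with
  | ind κ ih =>
  subst hκ
  rcases le_or_gt #S ℵ₀ with hcount | hcount
  · exact ⟨{S}, by simpa using hcount, by simpa using hS, by simp, by simp⟩
  choose Q hQ using fun x y => exists_isMaxPacking (connectors inc S x y)
  choose ρ hρ hρlt using fun x y => exists_rank (Q x y)
  obtain ⟨r, hr, hrlt⟩ := exists_rank S
  obtain ⟨H, hH⟩ := exists_isHullSequence inc hr hρ fun x y q hq => ((hQ x y).subset hq).1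
  have hlt : ∀ o < (#S).ord, #(H o \ below H o : Set E) < #S := fun o ho =>
    ((mk_le_mk_of_subset Set.sdiff_subset).trans (hH o).mk_le).trans_lt
      (lt_ord.1 (max_lt (omega0_lt_ord.2 hcount) ho))
  choose! P hP using fun o ho => ih _ (hlt o ho) (hH.evenCuts hS hQ hρlt o) rfl
  have hpiece : ∀ o < (#S).ord, ∀ D ∈ P o, D ⊆ H o \ below H o := fun o ho D hD =>
    (hP o ho).sUnion_eq ▸ Set.subset_sUnion_of_mem hD
  refine ⟨{D | ∃ o < (#S).ord, D ∈ P o}, fun D ⟨o, ho, hD⟩ => (hP o ho).countable D hD,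
    fun D ⟨o, ho, hD⟩ => (hP o ho).evenCuts D hD, ?_, ?_⟩
  · rintro D ⟨b, hb, hD⟩ D' ⟨c, hc, hD'⟩ hne
    refine Set.disjoint_left.2 fun e he he' => ?_
    obtain rfl := eq_of_mem_sdiff_below (hpiece b hb D hD he) (hpiece c hc D' hD' he')
    exact Set.disjoint_left.1 ((hP b hb).disjoint hD hD' hne) he he'
  · refine Set.Subset.antisymm (Set.sUnion_subset fun D ⟨o, ho, hD⟩ => (hpiece o ho D hD).trans
      (Set.sdiff_subset.trans (hH o).subset_ground)) fun e he => ?_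
    obtain ⟨o, ho, heo⟩ := hH.exists_mem he
    have ho' := ho.trans_lt (hrlt e he)
    obtain ⟨D, hD, heD⟩ := (hP o ho').sUnion_eq.symm.subset heo
    exact ⟨D, ⟨o, ho', hD⟩, heD⟩

end CountablePieces

section Collapse

variable {inc : E → Sym2 V} {A : Set E} {T X : Set V} {x : V}

lemma cut_map {U : Type*} (inc : E → Sym2 V) (f : V → U) (X : Set U) :
    cut (fun e => (inc e).map f) X = cut inc (f ⁻¹' X) := by
  ext e
  obtain ⟨a, b, hab⟩ := exists_inc_eq inc e
  rw [mem_cut_iff hab, mem_cut_iff (u := f a) (x := f b) (by rw [hab, Sym2.map_mk])]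
  rfl

lemma cut_compl (inc : E → Sym2 V) (X : Set V) : cut inc Xᶜ = cut inc X := by
  ext e
  obtain ⟨a, b, hab⟩ := exists_inc_eq inc e
  simp only [mem_cut_iff hab, Set.mem_compl_iff]
  tauto

open Classical in
/-- The identification of all vertices of `T` to the single vertex `none`. -/
noncomputable def collapse (T : Set V) (x : V) : Option V := if x ∈ T then none else some x

lemma collapse_of_mem (hx : x ∈ T) : collapse T x = none := if_pos hx

lemma collapse_of_notMem (hx : x ∉ T) : collapse T x = some x := if_neg hx

lemma preimage_collapse_image_some (hX : X ⊆ Tᶜ) : collapse T ⁻¹' (some '' X) = X := by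
  ext x
  by_cases hx : x ∈ T
  · simpa [collapse_of_mem hx] using fun h => hX h hx
  · simp [collapse_of_notMem hx]

lemma evenCuts_collapse_iff :
    EvenCuts (fun e => (inc e).map (collapse T)) A ∅ ↔ EvenCuts inc A T := by
  constructor
  · intro h X hX
    have hcut := h (some '' X) (by simp)
    rwa [cut_map, preimage_collapse_image_some hX] at hcut
  · intro h X _
    wlog hX : none ∉ X generalizing X
    · exact cut_compl (fun e => (inc e).map (collapse T)) X ▸ this Xᶜ (by simp) (by simpa using hX)
    rw [cut_map]
    exact h _ fun x hx hxT => hX (collapse_of_mem hxT ▸ hx)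

theorem EvenCuts.exists_isEvenPartition (hA : EvenCuts inc A T) :
    ∃ P, IsEvenPartition inc A T P := by
  obtain ⟨P, hP⟩ := (evenCuts_collapse_iff.2 hA).exists_isEvenPartition_empty
  exact ⟨P, hP.countable, fun D hD => evenCuts_collapse_iff.1 (hP.evenCuts D hD), hP.disjoint,
    hP.sUnion_eq⟩

end Collapse

section Assembly

open Cardinal

variable {inc : E → Sym2 V} {A C : Set E} {T : Set V} {t : V}
  {P 𝓑 : Set (Set E)} {W : E → List (E × V)}

lemma exists_countable_closed_superset (hcount : ∀ B ∈ 𝓑, B.Countable)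
    (hstar : ∀ e, {B ∈ 𝓑 | e ∈ B}.Countable) (e : E) :
    ∃ Y : Set E, e ∈ Y ∧ Y.Countable ∧ ∀ B ∈ 𝓑, ∀ h ∈ B, h ∈ Y → B ⊆ Y := by
  let J : Finset E → Set E := fun Z => ⋃ h ∈ Z, ⋃₀ {B ∈ 𝓑 | h ∈ B}
  have hJ : ∀ Z, #(J Z) ≤ ℵ₀ := fun Z => le_aleph0_iff_set_countable.2 <|
    Z.countable_toSet.biUnion fun h _ => (hstar h).sUnion fun B hB => hcount B hB.1
  obtain ⟨Y, heY, hY, hclosed⟩ := exists_closed_superset le_rfl hJ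
    (le_aleph0_iff_set_countable.2 (Set.countable_singleton e))
  refine ⟨Y, heY rfl, le_aleph0_iff_set_countable.1 hY, fun B hB h hh hhY => ?_⟩
  have hJY : J {h} ⊆ Y := hclosed {h} (by simpa using hhY)
  exact fun k hk => hJY (by simpa [J] using ⟨B, ⟨hB, hh⟩, hk⟩)

lemma exists_countable_fibers (hcount : ∀ B ∈ 𝓑, B.Countable)
    (hstar : ∀ e, {B ∈ 𝓑 | e ∈ B}.Countable) :
    ∃ (ι : Type v) (π : E → ι), (∀ i, (π ⁻¹' {i}).Countable) ∧
      ∀ B ∈ 𝓑, ∀ e ∈ B, ∀ h ∈ B, π e = π h := by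
  let R : E → E → Prop := fun e h => ∃ B ∈ 𝓑, e ∈ B ∧ h ∈ B
  refine ⟨Quot R, Quot.mk R, fun i => ?_, fun B hB e he h hh => Quot.sound ⟨B, hB, he, hh⟩⟩
  induction i using Quot.ind with
  | mk e =>
  obtain ⟨Y, heY, hY, hclosed⟩ := exists_countable_closed_superset hcount hstar e
  have hR : ∀ h k, R h k → (h ∈ Y) = (k ∈ Y) := fun h k ⟨B, hB, hh, hk⟩ =>
    propext ⟨fun hY => hclosed B hB h hh hY hk, fun hY => hclosed B hB k hk hY hh⟩
  refine hY.mono fun h hh => ?_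
  have hmem : (h ∈ Y) = (e ∈ Y) := congrArg (Quot.lift (· ∈ Y) hR) hh
  exact hmem.mpr heY

lemma IsEvenPartition.evenCuts_of_saturated (hP : IsEvenPartition inc A T P) (hCA : C ⊆ A)
    (hC : ∀ D ∈ P, ∀ e ∈ D, e ∈ C → D ⊆ C) : EvenCuts inc C T := by
  intro X hX hfin
  refine even_ncard_of_forall_inter hfin (C := fun D : P => D.1) (fun D D' e he he' => ?_) ?_ ?_
  · exact Subtype.ext (hP.disjoint.elim_set D.2 D'.2 e he he')
  · rw [← Set.sUnion_eq_iUnion, hP.sUnion_eq]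
    exact Set.inter_subset_left.trans hCA
  · rintro ⟨D, hD⟩
    by_cases hDC : D ⊆ C
    · have hset : C ∩ cut inc X ∩ D = D ∩ cut inc X := by
        rw [Set.inter_right_comm, Set.inter_eq_self_of_subset_right hDC]
      exact hset ▸ hP.evenCuts D hD X hX (hset ▸ hfin.inter_of_left D)
    · have hset : C ∩ cut inc X ∩ D = ∅ := by
        rw [← Set.disjoint_iff_inter_eq_empty, Set.disjoint_left]
        exact fun e he heD => hDC (hC D hD e heD he.1)
      simp [hset]

lemma IsFan.linked_of_saturated (hW : IsFan inc A t W)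
    (hend : ∀ e ∈ edgesAt inc A t, endpoint t (W e) ∈ T) (hCA : C ⊆ A)
    (hC : ∀ e ∈ edgesAt inc C t, ∀ h ∈ edges (W e), h ∈ C) : Linked inc C T t := by
  have hat : edgesAt inc C t ⊆ edgesAt inc A t := fun e he => ⟨hCA he.1, he.2⟩
  exact ⟨W, hW.transfer hat fun e he h hh => ⟨hC e he h hh, rfl⟩, fun e he => hend e (hat he)⟩

lemma IsFan.countable_routes_through (hW : IsFan inc A t W) (h : E) :
    {B ∈ (fun e => {h | h ∈ edges (W e)}) '' edgesAt inc A t | h ∈ B}.Countable := by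
  refine Set.Subsingleton.countable ?_
  rintro _ ⟨⟨i, hi, rfl⟩, hhi⟩ _ ⟨⟨j, hj, rfl⟩, hhj⟩
  rw [hW.eq_of_mem i hi j hj h hhi hhj]

/-- The fibers are generated by the members of an even partition and by the routes of one fan for
every vertex of `T`. -/
lemma EvenLinked.exists_fibers (hA : EvenLinked inc A T) (hT : T.Countable) :
    ∃ (ι : Type v) (π : E → ι), ∀ i,
      (A ∩ π ⁻¹' {i}).Countable ∧ EvenLinked inc (A ∩ π ⁻¹' {i}) T := by
  obtain ⟨P, hP⟩ := hA.evenCuts.exists_isEvenPartition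
  choose! W hW hend using hA.linked
  let routes : V → Set (Set E) := fun t => (fun e => {h | h ∈ edges (W t e)}) '' edgesAt inc A t
  have hcount : ∀ B ∈ P ∪ ⋃ t ∈ T, routes t, B.Countable := by
    rintro B (hB | hB)
    · exact hP.countable B hB
    · obtain ⟨t, -, e, -, rfl⟩ := Set.mem_iUnion₂.1 hB
      exact (List.finite_toSet _).countable
  have hstar : ∀ h, {B ∈ P ∪ ⋃ t ∈ T, routes t | h ∈ B}.Countable := by
    intro h
    have hPh : {B ∈ P | h ∈ B}.Countable := Set.Subsingleton.countable fun B hB B' hB' =>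
      hP.disjoint.elim_set hB.1 hB'.1 h hB.2 hB'.2
    refine (hPh.union (hT.biUnion fun t ht => (hW t ht).countable_routes_through h)).mono ?_
    rintro B ⟨hB | hB, hhB⟩
    · exact Or.inl ⟨hB, hhB⟩
    · obtain ⟨t, ht, hB⟩ := Set.mem_iUnion₂.1 hB
      exact Or.inr (Set.mem_biUnion ht ⟨hB, hhB⟩)
  obtain ⟨ι, π, hπ, hconst⟩ := exists_countable_fibers hcount hstar
  refine ⟨ι, π, fun i => ⟨(hπ i).mono Set.inter_subset_right, ?_, fun t ht => ?_⟩⟩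
  · refine hP.evenCuts_of_saturated Set.inter_subset_left fun D hD h hh hhi k hk => ⟨?_, ?_⟩
    · exact hP.sUnion_eq.subset ⟨D, hD, hk⟩
    · exact (hconst D (Or.inl hD) k hk h hh).trans hhi.2
  · refine (hW t ht).linked_of_saturated (hend t ht) Set.inter_subset_left fun h hh k hk => ?_
    have hhA : h ∈ edgesAt inc A t := ⟨hh.1.1, hh.2⟩
    have hroute := (hW t ht).route h hhA
    refine ⟨hroute.subset k hk, (hconst {k | k ∈ edges (W t h)} ?_ k hk h hroute.mem_edges).trans
      hh.1.2⟩
    exact Or.inr (Set.mem_biUnion ht ⟨h, hhA, rfl⟩)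

lemma IsTrailSystem.subset {F : Set (Set E)} (hF : IsTrailSystem inc A T F) {D : Set E}
    (hD : D ∈ F) : D ⊆ A := by
  obtain ⟨s, -, e, l, hl, rfl⟩ := hF.exists_trail D hD
  exact hl.subset

theorem EvenLinked.exists_isTrailSystem (hA : EvenLinked inc A T) (hT : T.Countable) :
    ∃ F, IsTrailSystem inc A T F := by
  obtain ⟨ι, π, hπ⟩ := hA.exists_fibers hT
  choose F hF using fun i => (hπ i).2.exists_isTrailSystem_of_countable (hπ i).1
  refine ⟨⋃ i, F i, ?_, fun D hD => ?_, fun t ht e he => ?_⟩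
  · intro D hD D' hD' hne
    obtain ⟨i, hi⟩ := Set.mem_iUnion.1 hD
    obtain ⟨j, hj⟩ := Set.mem_iUnion.1 hD'
    refine Set.disjoint_left.2 fun e he he' => ?_
    obtain rfl : π e = i := ((hF i).subset hi he).2
    obtain rfl : π e = j := ((hF j).subset hj he').2
    exact Set.disjoint_left.1 ((hF _).disjoint hi hj hne) he he'
  · obtain ⟨i, hi⟩ := Set.mem_iUnion.1 hD
    obtain ⟨s, hs, e, l, hl, hDl⟩ := (hF i).exists_trail D hi
    exact ⟨s, hs, e, l, hl.mono Set.inter_subset_left, hDl⟩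
  · obtain ⟨D, hD, heD⟩ := (hF (π e)).covers t ht ⟨⟨he.1, rfl⟩, he.2⟩
    exact ⟨D, Set.mem_iUnion.2 ⟨_, hD⟩, heD⟩

end Assembly

section TPaths

variable {G : Multigraph V E} {inc : E → Sym2 V} {A D : Set E} {T : Set V} {s t u w x : V}
  {e h k : E} {l m : List (E × V)}

lemma exists_isWalk_of_walk (p : G.Walk u w) :
    ∃ l, IsWalk G.inc u l ∧ endpoint u l = w ∧ edges l = p.edges ∧ u :: verts l = p.support := by
  induction p with
  | nil v => exact ⟨[], trivial, rfl, rfl, rfl⟩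
  | @cons u v w e he p ih =>
    obtain ⟨l, hl, hend, hedges, hsupp⟩ := ih
    exact ⟨(e, v) :: l, ⟨he, hl⟩, hend, by simp [Multigraph.Walk.edges, hedges],
      by simp [Multigraph.Walk.support, hsupp]⟩

lemma IsWalk.exists_walk (hl : IsWalk G.inc u l) :
    ∃ p : G.Walk u (endpoint u l), p.edges = edges l ∧ p.support = u :: verts l := by
  induction l generalizing u with
  | nil => exact ⟨.nil u, rfl, rfl⟩
  | cons q l ih =>
    obtain ⟨p, hedges, hsupp⟩ := ih hl.2
    exact ⟨.cons q.1 hl.1 p, by simp [Multigraph.Walk.edges, hedges],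
      by simp [Multigraph.Walk.support, hsupp]⟩

lemma IsWalk.exists_mem_edges (hl : IsWalk inc u l) (hne : l ≠ []) (hx : x ∈ u :: verts l) :
    ∃ e ∈ edges l, x ∈ inc e := by
  cases l with
  | nil => exact absurd rfl hne
  | cons p l =>
    have hp : inc p.1 = s(u, p.2) := hl.1
    rcases List.mem_cons.1 hx with rfl | hx
    · exact ⟨p.1, by simp, by simp [hp]⟩
    obtain ⟨a, b, hab, rfl, ha⟩ := exists_append_of_mem_verts u hx
    obtain ⟨a, ⟨e, y⟩, rfl⟩ := List.eq_nil_or_concat' a |>.resolve_left ha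
    rw [hab] at hl ⊢
    simp only [isChainFrom_append, isChainFrom_cons] at hl
    exact ⟨e, by simp, by simp [hl.1.2.1]⟩

lemma IsWalk.isRoute_of_nodup (hl : IsWalk inc t l) (hnd : (t :: verts l).Nodup)
    (he : e ∈ edges l) (ht : t ∈ inc e) (hA : ∀ h ∈ edges l, h ∈ A) : IsRoute inc A t e l where
  isWalk := hl
  head := by
    obtain ⟨a, x, b, rfl⟩ := exists_append_of_mem_edges he
    rcases List.eq_nil_or_concat' a with rfl | ⟨a, ⟨f, y⟩, rfl⟩
    · rfl
    · have htail : t ∉ verts ((a ++ [(f, y)]) ++ (e, x) :: b) := (List.nodup_cons.1 hnd).1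
      simp only [isChainFrom_append, isChainFrom_cons, endpoint_append, endpoint_cons,
        endpoint_nil] at hl
      rw [hl.2.1] at ht
      rcases Sym2.mem_iff.1 ht with rfl | rfl <;> simp at htail
  nodup := IsWalk.edges_nodup hl hnd
  notMem := (List.nodup_cons.1 hnd).1
  subset := hA

lemma exists_isRoute_of_tPath (p : G.TPath T) (ht : t ∈ T) (he : e ∈ p.walk.edges)
    (hte : t ∈ G.inc e) :
    ∃ l, IsRoute G.inc Set.univ t e l ∧ endpoint t l ∈ T ∧ ∀ h, h ∈ edges l ↔ h ∈ p.walk.edges := by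
  obtain ⟨l, hl, hend, hedges, hsupp⟩ := exists_isWalk_of_walk p.walk
  have hnd : (p.first :: verts l).Nodup := hsupp ▸ p.support_nodup
  have htl : t ∈ p.walk.support := hsupp ▸ IsWalk.mem_cons_verts hl (hedges ▸ he) hte
  rcases p.internal t htl ht with rfl | rfl
  · exact ⟨l, IsWalk.isRoute_of_nodup hl hnd (hedges ▸ he) hte fun _ _ => trivial,
      hend ▸ p.last_mem, fun h => hedges ▸ Iff.rfl⟩
  · obtain ⟨m, hm, hmend, hmedges, hmverts⟩ := IsWalk.exists_reverse hl
    rw [hend] at hm hmend hmverts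
    refine ⟨m, IsWalk.isRoute_of_nodup hm (hmverts ▸ List.nodup_reverse.2 hnd) ?_ hte
      fun _ _ => trivial, hmend ▸ p.first_mem, fun h => ?_⟩
    · simpa [hmedges, hedges] using he
    · simp [hmedges, hedges]

lemma linked_of_tPaths (ht : t ∈ T) {P : Set (G.TPath T)} (hP : G.TPathDisjoint P)
    (hcover : ∀ e ∈ G.inci t, ∃ p ∈ P, e ∈ p.walk.edges) : Linked G.inc Set.univ T t := by
  have hroute : ∀ e ∈ G.inci t, ∃ l, IsRoute G.inc Set.univ t e l ∧ endpoint t l ∈ T ∧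
      ∃ p ∈ P, ∀ h, h ∈ edges l ↔ h ∈ p.walk.edges := by
    intro e he
    obtain ⟨p, hp, hep⟩ := hcover e he
    obtain ⟨l, hl, hend, hedges⟩ := exists_isRoute_of_tPath p ht hep he
    exact ⟨l, hl, hend, p, hp, hedges⟩
  choose! W hW hend hWP using hroute
  refine ⟨W, ⟨fun e he => hW e he.2, fun i hi j hj h hhi hhj => ?_⟩, fun e he => hend e he.2⟩
  obtain ⟨p, hp, hpi⟩ := hWP i hi.2
  obtain ⟨q, hq, hqj⟩ := hWP j hj.2
  obtain rfl : p = q := by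
    by_contra hne
    exact hP p hp q hq hne h ((hpi h).1 hhi) ((hqj h).1 hhj)
  have hji : j ∈ edges (W i) := (hpi j).2 ((hqj j).1 (hW j hj.2).mem_edges)
  exact ((hW i hi.2).eq_of_mem hji hj.2).symm

lemma IsTTrail.eq_of_mem_of_mem (hl : IsTTrail inc A T s e l) (ht : t ∈ T) (hh : h ∈ edges l)
    (hth : t ∈ inc h) (hk : k ∈ edges l) (htk : t ∈ inc k) : h = k := by
  by_cases hts : t = s
  · subst hts
    exact (hl.toIsRoute.eq_of_mem hh hth).trans (hl.toIsRoute.eq_of_mem hk htk).symm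
  · obtain ⟨l, ⟨f, y⟩, rfl⟩ := List.eq_nil_or_concat' l |>.resolve_left hl.ne_nil
    have hlast : ∀ g ∈ edges (l ++ [(f, y)]), t ∈ inc g → g = f := by
      intro g hg htg
      by_contra hgf
      have hgl : g ∈ edges l := by simpa [hgf] using hg
      have htl := IsWalk.mem_cons_verts (isChainFrom_append.1 hl.isWalk).1 hgl htg
      exact hl.internal t (by simpa [hts] using htl) ht
    exact (hlast h hh hth).trans (hlast k hk htk).symm

lemma IsTTrail.exists_tPath (hl : IsTTrail G.inc A T s e l) (hs : s ∈ T) :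
    ∃ p : G.TPath T, (∀ h ∈ p.walk.edges, h ∈ edges l) ∧
      ∀ t ∈ T, ∀ h ∈ edges l, t ∈ G.inc h → h ∈ p.walk.edges := by
  obtain ⟨m, hm, hend, hsub, hnd⟩ := IsChainFrom.exists_loopErasure hl.isWalk
  obtain ⟨p, hedges, hsupp⟩ := IsWalk.exists_walk hm
  have hverts : ∀ x ∈ verts l, x ∈ T → x = endpoint s l := by
    intro x hx hxT
    obtain ⟨l, ⟨f, y⟩, rfl⟩ := List.eq_nil_or_concat' l |>.resolve_left hl.ne_nil
    have hxl : x ∉ verts l := fun h => hl.internal x (by simpa using h) hxT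
    simpa [hxl] using hx
  have hne : m ≠ [] := by
    rintro rfl
    exact hl.endpoint_ne hend.symm
  refine ⟨⟨s, _, p, hs, hend ▸ hl.endpoint_mem, hend ▸ hl.endpoint_ne.symm, hsupp ▸ hnd, ?_⟩,
    fun h hh => edges_subset hsub (hedges ▸ hh), fun t ht h hh hth => ?_⟩
  · intro x hx hxT
    rw [hsupp, List.mem_cons] at hx
    exact hx.imp_right fun hx => hend ▸ hverts x (List.map_subset _ hsub hx) hxT
  · have htm : t ∈ s :: verts m := by
      rcases List.mem_cons.1 (IsWalk.mem_cons_verts hl.isWalk hh hth) with rfl | htl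
      · simp
      · exact hverts t htl ht ▸ hend ▸ endpoint_mem_cons_verts
    obtain ⟨k, hk, htk⟩ := IsWalk.exists_mem_edges hm hne htm
    rw [hl.eq_of_mem_of_mem ht hh hth (edges_subset hsub hk) htk]
    exact hedges ▸ hk

lemma IsTrailSystem.exists_tPaths {F : Set (Set E)} (hF : IsTrailSystem G.inc Set.univ T F) :
    ∃ P : Set (G.TPath T), G.TPathDisjoint P ∧
      ∀ t ∈ T, ∀ e ∈ G.inci t, ∃ p ∈ P, e ∈ p.walk.edges := by
  have hpath : ∀ D ∈ F, ∃ p : G.TPath T, (∀ h ∈ p.walk.edges, h ∈ D) ∧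
      ∀ t ∈ T, ∀ h ∈ D, t ∈ G.inc h → h ∈ p.walk.edges := by
    intro D hD
    obtain ⟨s, hs, e, l, hl, rfl⟩ := hF.exists_trail D hD
    exact hl.exists_tPath hs
  choose p hsub hcov using fun D : F => hpath D D.2
  refine ⟨Set.range p, ?_, fun t ht e he => ?_⟩
  · rintro _ ⟨D, rfl⟩ _ ⟨D', rfl⟩ hne e he he'
    have hD : D.1 = D'.1 := hF.disjoint.elim_set D.2 D'.2 e (hsub D e he) (hsub D' e he')
    exact hne (congrArg p (Subtype.ext hD))
  · obtain ⟨D, hD, heD⟩ := hF.covers t ht ⟨trivial, he⟩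
    exact ⟨p ⟨D, hD⟩, ⟨_, rfl⟩, hcov ⟨D, hD⟩ t ht e heD he⟩

end TPaths

end LovaszCherkassky

/-- If `T` is countable, no `X ⊆ V ∖ T` has odd finite cut, and for each
`t ∈ T` some system of pairwise edge-disjoint `T`-paths covers all edges
incident with `t`, then a single system of pairwise edge-disjoint `T`-paths
covers all edges incident with any vertex of `T`. -/
theorem lovasz_cherkassky_linked {V : Type u} {E : Type v}
    (G : Multigraph V E) (T : Set V) (hT : T.Countable)
    (hEul : ∀ X : Set V, X ⊆ Tᶜ → ¬ ((G.cut X).Finite ∧ Odd (G.cut X).ncard))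
    (hlink : ∀ t ∈ T, ∃ Pt : Set (G.TPath T), G.TPathDisjoint Pt ∧
      ∀ e ∈ G.inci t, ∃ p ∈ Pt, e ∈ p.walk.edges) :
    ∃ P : Set (G.TPath T), G.TPathDisjoint P ∧
      ∀ t ∈ T, ∀ e ∈ G.inci t, ∃ p ∈ P, e ∈ p.walk.edges := by
  have heven : LovaszCherkassky.EvenCuts G.inc Set.univ T := by
    intro X hX hfin
    rw [Set.univ_inter] at hfin ⊢
    exact Nat.not_odd_iff_even.1 fun hodd => hEul X hX ⟨hfin, hodd⟩
  have hlinked : ∀ t ∈ T, LovaszCherkassky.Linked G.inc Set.univ T t := by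
    intro t ht
    obtain ⟨Pt, hdisj, hcover⟩ := hlink t ht
    exact LovaszCherkassky.linked_of_tPaths ht hdisj hcover
  obtain ⟨F, hF⟩ := LovaszCherkassky.EvenLinked.exists_isTrailSystem ⟨heven, hlinked⟩ hT
  exact hF.exists_tPaths
end

section
/- Let G be a connected (possibly infinite) graph and let s, t ∈ V(G) be distinct. Then the set 𝔠⁻(s,t) of ⊆-minimal st-cuts C for which there is an st-wave 𝒲 with C_𝒲 = C, ordered by ≼, is a complete lattice and a sup-sublattice of the lattice of all ⊆-minimal st-cuts. Moreover, after contracting the s-side of its largest element to s, the resulting graph admits exactly one st-wave, namely the trivial one. -/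
/-!
Common definitions: multigraphs (parallel edges allowed, no loops), walks,
paths, cuts, waves and related notions used in the statements below.
-/

universe u v

/-!
A wave whose last edges form `δ(X)` is the same thing as a *linking* of `s` to `δ(X)`: a choice of
edge-disjoint walks from `s` inside `X`, one for every edge of `δ(X)`. Linkings are more flexible
than waves, since `δ(X)` need not be a minimal cut. Two facts about them drive the proof.

* Splicing: if every `X i` is linked from `s`, so is `⋃ i, X i`. Well-order the indices. To reach an
  edge of the boundary of the union, follow the walk of the first set it leaves backwards until it
  meets an earlier set, continue with the walk of that set, and so on. An edge is only used at the
  stage at which it first lies inside a set, so it belongs to at most one of the spliced walks.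
* Hulls: if `U` is linked from `s` and `t ∉ U`, adding to `U` everything that it separates from `t`
  yields a set whose boundary is a minimal `st`-cut and is part of `δ(U)`, hence is a wave cut.

The supremum of a family of wave cuts is the boundary of the hull of the union of their `s`-sides,
and the infimum is the supremum of the lower bounds. If `X` is the `s`-side of the largest wave cut,
a wave of `G / X` with cut `δ(Y)` lifts to a linking of the preimage `Z` of `Y` from `X`, which
splices with the linking of `X`. By maximality the hull of `Z` has boundary `δ(X)`, so
`δ(X) ⊆ δ(Z)`, and minimality of `δ(Y)` in `G / X` forces `δ(Y) = δ(s)`.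
-/

namespace Multigraph

variable {V : Type u} {E : Type v} {G : Multigraph V E}

theorem mem_cut_iff {X : Set V} {e : E} {x y : V} (h : G.inc e = s(x, y)) :
    e ∈ G.cut X ↔ ¬(x ∈ X ↔ y ∈ X) := by
  constructor
  · rintro ⟨x', y', h', hx', hy'⟩
    rcases Sym2.eq_iff.1 (h.symm.trans h') with ⟨rfl, rfl⟩ | ⟨rfl, rfl⟩ <;> tauto
  · intro hne
    by_cases hx : x ∈ X
    · exact ⟨x, y, h, hx, by tauto⟩
    · exact ⟨y, x, h.trans Sym2.eq_swap, by tauto, hx⟩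

theorem mem_cut_of_mem_of_notMem {X : Set V} {e : E} {x y : V} (h : G.inc e = s(x, y))
    (hx : x ∈ X) (hy : y ∉ X) : e ∈ G.cut X :=
  ⟨x, y, h, hx, hy⟩

theorem notMem_cut_of_forall_mem {X : Set V} {e : E} (h : ∀ v ∈ G.inc e, v ∈ X) :
    e ∉ G.cut X := by
  rintro ⟨x, y, hxy, -, hy⟩
  exact hy (h y (by simp [hxy]))

theorem cut_compl (X : Set V) : G.cut Xᶜ = G.cut X := by
  ext e
  induction he : G.inc e with
  | _ x y =>
    simp only [mem_cut_iff he, Set.mem_compl_iff]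
    tauto

theorem inci_eq_cut_singleton (s : V) : G.inci s = G.cut {s} := by
  ext e
  induction he : G.inc e with
  | _ x y =>
    have hne : x ≠ y := fun h => G.not_isDiag e (by simp [he, h])
    simp only [mem_cut_iff he, inci, Set.mem_ofPred_eq, he, Sym2.mem_iff, Set.mem_singleton_iff]
    grind

namespace Walk

@[simp] theorem support_nil (v : V) : (nil v : G.Walk v v).support = [v] := rfl

@[simp] theorem support_cons {a b c : V} (e : E) (he : G.inc e = s(a, b)) (p : G.Walk b c) :
    (cons e he p).support = a :: p.support := rfl

@[simp] theorem edges_nil (v : V) : (nil v : G.Walk v v).edges = [] := rfl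

@[simp] theorem edges_cons {a b c : V} (e : E) (he : G.inc e = s(a, b)) (p : G.Walk b c) :
    (cons e he p).edges = e :: p.edges := rfl

/-- Concatenation of walks. -/
def append : ∀ {a b c : V}, G.Walk a b → G.Walk b c → G.Walk a c
  | _, _, _, .nil _, q => q
  | _, _, _, .cons e he p, q => .cons e he (p.append q)

theorem support_append {a b c : V} (p : G.Walk a b) (q : G.Walk b c) :
    (p.append q).support = p.support ++ q.support.tail := by
  induction p with
  | nil v => cases q <;> rfl
  | cons e he p ih => simp [append, ih]

theorem edges_append {a b c : V} (p : G.Walk a b) (q : G.Walk b c) :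
    (p.append q).edges = p.edges ++ q.edges := by
  induction p with
  | nil v => rfl
  | cons e he p ih => simp [append, ih]

theorem start_mem_support {a b : V} (p : G.Walk a b) : a ∈ p.support := by
  cases p <;> simp

theorem mem_support_of_mem_edges {a b : V} (p : G.Walk a b) {e : E} (he : e ∈ p.edges) {v : V}
    (hv : v ∈ G.inc e) : v ∈ p.support := by
  induction p with
  | nil => simp at he
  | cons f hf p ih =>
    rcases List.mem_cons.1 he with rfl | he
    · rw [hf, Sym2.mem_iff] at hv
      rcases hv with rfl | rfl
      · simp
      · simp [p.start_mem_support]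
    · exact List.mem_cons_of_mem _ (ih he)

theorem exists_suffix {a b : V} (p : G.Walk a b) {z : V} (hz : z ∈ p.support) :
    ∃ q : G.Walk z b, q.support.Sublist p.support ∧ q.edges ⊆ p.edges := by
  induction p with
  | nil v =>
    obtain rfl := List.mem_singleton.1 hz
    exact ⟨.nil z, List.Sublist.refl _, List.Subset.refl _⟩
  | cons f hf p ih =>
    rcases List.mem_cons.1 hz with rfl | hz
    · exact ⟨.cons f hf p, List.Sublist.refl _, List.Subset.refl _⟩
    · obtain ⟨q, hq, hqe⟩ := ih hz
      exact ⟨q, hq.trans (List.sublist_cons_self _ _), List.subset_cons_of_subset _ hqe⟩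

theorem exists_nodup {a b : V} (p : G.Walk a b) :
    ∃ q : G.Walk a b, q.support.Nodup ∧ q.support ⊆ p.support ∧ q.edges ⊆ p.edges := by
  induction p with
  | nil v => exact ⟨.nil v, by simp, List.Subset.refl _, List.Subset.refl _⟩
  | @cons a _ _ f hf p ih =>
    obtain ⟨q, hnodup, hqs, hqe⟩ := ih
    by_cases ha : a ∈ q.support
    · obtain ⟨r, hrs, hre⟩ := q.exists_suffix ha
      exact ⟨r, hnodup.sublist hrs, List.subset_cons_of_subset _ (List.Subset.trans hrs.subset hqs),
        List.subset_cons_of_subset _ (List.Subset.trans hre hqe)⟩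
    · exact ⟨.cons f hf q, List.nodup_cons.2 ⟨ha, hnodup⟩, List.cons_subset_cons _ hqs,
        List.cons_subset_cons _ hqe⟩

theorem mem_of_forall_notMem_cut {a b : V} (p : G.Walk a b) {Z : Set V} (ha : a ∈ Z)
    (h : ∀ e ∈ p.edges, e ∉ G.cut Z) : b ∈ Z := by
  induction p with
  | nil => exact ha
  | cons f hf p ih =>
    rw [edges_cons, List.forall_mem_cons] at h
    exact ih (by_contra fun hb => h.1 (mem_cut_of_mem_of_notMem hf ha hb)) h.2

theorem exists_first_exit {a b : V} (p : G.Walk a b) {X : Set V} (ha : a ∈ X) {e : E}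
    (he : e ∈ p.edges) (heX : e ∈ G.cut X) :
    ∃ f ∈ p.edges, ∃ x y, G.inc f = s(x, y) ∧ x ∈ X ∧ y ∉ X ∧
      ∃ q : G.Walk a x, (∀ w ∈ q.support, w ∈ X) ∧ q.edges ⊆ p.edges := by
  induction p with
  | nil => simp at he
  | @cons a a' _ f hf p ih =>
    by_cases ha' : a' ∈ X
    · have hfe : e ≠ f := by
        rintro rfl
        exact (mem_cut_iff hf).1 heX (iff_of_true ha ha')
      obtain ⟨g, hg, x, y, hxy, hx, hy, q, hqX, hqe⟩ :=
        ih ha' (List.mem_of_ne_of_mem hfe he)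
      exact ⟨g, List.mem_cons_of_mem _ hg, x, y, hxy, hx, hy, .cons f hf q,
        List.forall_mem_cons.2 ⟨ha, hqX⟩, List.cons_subset_cons _ hqe⟩
    · exact ⟨f, List.mem_cons_self, a, a', hf, ha, ha', .nil a, by simpa using ha, by simp⟩

theorem exists_last_entry {a b : V} (p : G.Walk a b) {Y : Set V} (hb : b ∉ Y) :
    (∀ w ∈ p.support, w ∉ Y) ∨ ∃ (f : E) (x y : V) (hf : G.inc f = s(x, y)) (q : G.Walk y b),
      x ∈ Y ∧ (∀ w ∈ q.support, w ∉ Y) ∧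
        (cons f hf q).support ⊆ p.support ∧ (cons f hf q).edges ⊆ p.edges := by
  induction p with
  | nil v => exact Or.inl (by simpa using hb)
  | @cons a a' _ f hf p ih =>
    rcases ih hb with hp | ⟨g, x, y, hg, q, hx, hq, hqs, hqe⟩
    · by_cases ha : a ∈ Y
      · exact Or.inr ⟨f, a, a', hf, p, ha, hp, List.Subset.refl _, List.Subset.refl _⟩
      · exact Or.inl (List.forall_mem_cons.2 ⟨ha, hp⟩)
    · exact Or.inr ⟨g, x, y, hg, q, hx, hq, List.subset_cons_of_subset _ hqs,
        List.subset_cons_of_subset _ hqe⟩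

end Walk

/-! ### Sides and hulls -/

/-- The `A`-side of an edge set `C`: the set of vertices reachable from `A` without using `C`,
encoded as the least superset of `A` that is left only by edges of `C`. -/
def side (G : Multigraph V E) (A : Set V) (C : Set E) : Set V :=
  ⋂₀ {Z | A ⊆ Z ∧ G.cut Z ⊆ C}

theorem subset_side (A : Set V) (C : Set E) : A ⊆ G.side A C :=
  Set.subset_sInter fun _ hZ => hZ.1

theorem side_subset {A Z : Set V} {C : Set E} (hA : A ⊆ Z) (hC : G.cut Z ⊆ C) :
    G.side A C ⊆ Z :=
  Set.sInter_subset_of_mem ⟨hA, hC⟩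

theorem cut_side_subset (A : Set V) (C : Set E) : G.cut (G.side A C) ⊆ C := by
  rintro e ⟨x, y, hxy, hx, hy⟩
  obtain ⟨Z, hZ, hyZ⟩ : ∃ Z ∈ {Z | A ⊆ Z ∧ G.cut Z ⊆ C}, y ∉ Z := by
    simpa only [side, Set.mem_sInter, not_forall, exists_prop] using hy
  exact hZ.2 (mem_cut_of_mem_of_notMem hxy (hx Z hZ) hyZ)

theorem side_anti (A : Set V) {C D : Set E} (h : C ⊆ D) : G.side A D ⊆ G.side A C :=
  side_subset (subset_side A C) ((cut_side_subset A C).trans h)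

theorem Walk.mem_side {a v : V} (p : G.Walk a v) {A : Set V} {C : Set E} (ha : a ∈ A)
    (h : ∀ e ∈ p.edges, e ∉ C) : v ∈ G.side A C :=
  p.mem_of_forall_notMem_cut (subset_side A C ha) fun e he heC =>
    h e he (cut_side_subset A C heC)

theorem side_cut_mono {A X Y : Set V} (hA : A ⊆ X) (hXY : X ⊆ Y) :
    G.side A (G.cut X) ⊆ G.side A (G.cut Y) := by
  have hcut : G.cut (X ∩ G.side A (G.cut Y)) ⊆ G.cut X := by
    rintro e ⟨x, y, hxy, ⟨hxX, hx⟩, hy⟩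
    refine mem_cut_of_mem_of_notMem hxy hxX fun hyX => ?_
    exact (mem_cut_iff hxy).1
      (cut_side_subset A _ (mem_cut_of_mem_of_notMem hxy hx fun h => hy ⟨hyX, h⟩))
      (iff_of_true (hXY hxX) (hXY hyX))
  exact (side_subset (Set.subset_inter hA (subset_side A _)) hcut).trans Set.inter_subset_right

theorem SepCut.disjoint_side {A B : Set V} {C : Set E} (h : G.SepCut A B C) :
    Disjoint B (G.side A C) := by
  obtain ⟨X, hA, hB, rfl⟩ := h
  exact Set.disjoint_left.2 fun b hb hbs => hB b hb (side_subset hA subset_rfl hbs)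

theorem IsMinSepCut.cut_side {A B : Set V} {C : Set E} (h : G.IsMinSepCut A B C) :
    G.cut (G.side A C) = C :=
  h.2 _ ⟨G.side A C, subset_side A C, fun _ hb => Set.disjoint_left.1 h.1.disjoint_side hb, rfl⟩
    (cut_side_subset A C)

theorem isMinSepCut_cut_of_forall_mem_side {A B X : Set V} (hA : A ⊆ X) (hB : Disjoint B X)
    (h : ∀ ⦃e x y⦄, G.inc e = s(x, y) → x ∈ X → y ∉ X →
      x ∈ G.side A (G.cut X) ∧ y ∈ G.side B (G.cut X)) :
    G.IsMinSepCut A B (G.cut X) := by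
  refine ⟨⟨X, hA, fun b hb => Set.disjoint_left.1 hB hb, rfl⟩, ?_⟩
  rintro _ ⟨Z, hAZ, hBZ, rfl⟩ hsub
  refine hsub.antisymm ?_
  rintro e ⟨x, y, hxy, hx, hy⟩
  obtain ⟨hxA, hyB⟩ := h hxy hx hy
  exact mem_cut_of_mem_of_notMem hxy (side_subset hAZ hsub hxA)
    (side_subset (Z := Zᶜ) hBZ (by rwa [cut_compl]) hyB)

theorem CutLE.side_subset_side {s t : V} {C D : Set E} (h : G.CutLE s t C D) :
    G.side {s} C ⊆ G.side {s} D := by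
  obtain ⟨X, Y, hsX, -, rfl, -, -, rfl, hXY⟩ := h
  exact side_cut_mono (Set.singleton_subset_iff.2 hsX) hXY

theorem CutLE.antisymm {s t : V} {C D : Set E} (hC : G.IsMinSepCut {s} {t} C)
    (hD : G.IsMinSepCut {s} {t} D) (hCD : G.CutLE s t C D) (hDC : G.CutLE s t D C) : C = D := by
  rw [← hC.cut_side, ← hD.cut_side, hCD.side_subset_side.antisymm hDC.side_subset_side]

/-- The complement of the `B`-side of `δ(U)`: the set `U` together with everything that `U`
separates from `B`. -/
def hull (G : Multigraph V E) (B U : Set V) : Set V := (G.side B (G.cut U))ᶜ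

theorem subset_hull {B U : Set V} (h : Disjoint B U) : U ⊆ G.hull B U :=
  Set.subset_compl_comm.1 (side_subset h.subset_compl_right (cut_compl U).subset)

theorem disjoint_hull (B U : Set V) : Disjoint B (G.hull B U) :=
  Set.disjoint_compl_right_iff_subset.2 (subset_side B _)

theorem hull_mono {B U Y : Set V} (hB : Disjoint B Y) (h : U ⊆ Y) : G.hull B U ⊆ G.hull B Y := by
  have hmono := G.side_cut_mono hB.subset_compl_right (Set.compl_subset_compl.2 h)
  rw [cut_compl, cut_compl] at hmono
  exact Set.compl_subset_compl.2 hmono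

theorem cut_hull_subset (B U : Set V) : G.cut (G.hull B U) ⊆ G.cut U := by
  rw [hull, cut_compl]
  exact cut_side_subset B _

theorem mem_and_notMem_of_cut_hull {B U : Set V} (hB : Disjoint B U) {e : E} {x y : V}
    (hxy : G.inc e = s(x, y)) (hx : x ∈ G.hull B U) (hy : y ∉ G.hull B U) : x ∈ U ∧ y ∉ U := by
  have hyU : y ∉ U := fun h => hy (subset_hull hB h)
  have heU := (mem_cut_iff hxy).1 (cut_hull_subset B U (mem_cut_of_mem_of_notMem hxy hx hy))
  exact ⟨by tauto, hyU⟩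

theorem IsMinSepCut.cut_hull_side {A B : Set V} {C : Set E} (h : G.IsMinSepCut A B C) :
    G.cut (G.hull B (G.side A C)) = C := by
  have hB := h.1.disjoint_side
  refine h.2 _ ⟨_, (subset_side A C).trans (subset_hull hB),
    fun b hb => Set.disjoint_left.1 (disjoint_hull B _) hb, rfl⟩ ?_
  exact (cut_hull_subset B _).trans (cut_side_subset A C)

/-! ### Linkings -/

/-- `F` links `A` to the cut `δ(X)`: the sets `F e`, for `e ∈ δ(X)`, are pairwise disjoint, and
`F e` contains the edges of a walk that starts in `A`, stays in `X` and finally traverses `e`.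
A wave is a linking of `{s}` in which these walks are the members of the wave. -/
structure IsLinking (G : Multigraph V E) (A X : Set V) (F : E → Set E) : Prop where
  self_mem : ∀ e ∈ G.cut X, e ∈ F e
  exists_walk : ∀ ⦃e x y⦄, G.inc e = s(x, y) → x ∈ X → y ∉ X →
    ∃ a ∈ A, ∃ p : G.Walk a x, (∀ w ∈ p.support, w ∈ X) ∧ ∀ f ∈ p.edges, f ∈ F e
  pairwiseDisjoint : (G.cut X).PairwiseDisjoint F

/-- `A` can be linked to the whole cut `δ(X)` by edge-disjoint walks inside `X`. -/
def Linked (G : Multigraph V E) (A X : Set V) : Prop := ∃ F, G.IsLinking A X F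

theorem Linked.mono_left {A B X : Set V} (h : G.Linked A X) (hAB : A ⊆ B) : G.Linked B X := by
  obtain ⟨F, hF⟩ := h
  refine ⟨F, hF.self_mem, fun e x y hxy hx hy => ?_, hF.pairwiseDisjoint⟩
  obtain ⟨a, ha, p⟩ := hF.exists_walk hxy hx hy
  exact ⟨a, hAB ha, p⟩

theorem Linked.refl (A : Set V) : G.Linked A A := by
  refine ⟨fun e => {e}, fun e _ => rfl, fun e x y _ hx _ => ⟨x, hx, .nil x, ?_, ?_⟩, ?_⟩
  · simpa using hx
  · simp
  · exact Set.pairwiseDisjoint_iff.2 fun e _ e' _ ⟨f, hf, hf'⟩ => hf.symm.trans hf'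

section Splice

variable {ι : Type*} [LinearOrder ι] {A : Set V} {X : ι → Set V} {F : ι → E → Set E}

theorem exists_mem_notMem_iUnion_lt [WellFoundedLT ι] {x : V} (hx : x ∈ ⋃ i, X i) :
    ∃ i, x ∈ X i ∧ x ∉ ⋃ j < i, X j := by
  obtain ⟨i, hi, hmin⟩ := wellFounded_lt.has_min {i | x ∈ X i} (Set.mem_iUnion.1 hx)
  refine ⟨i, hi, fun h => ?_⟩
  obtain ⟨j, hj, hxj⟩ := Set.mem_iUnion₂.1 h
  exact hmin j hxj hj

/-- The edge `f` lies inside `X i`, but not inside the union of the earlier sets. -/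
def IsNewEdge (G : Multigraph V E) (X : ι → Set V) (i : ι) (f : E) : Prop :=
  (∀ v ∈ G.inc f, v ∈ X i) ∧ ∃ v ∈ G.inc f, v ∉ ⋃ j < i, X j

/-- One step of splicing the linkings `F i` of the sets `X i`: `f` is used by the `i`-th linking
to reach `e`, where `i` is the stage at which `f` is new. -/
def SpliceStep (G : Multigraph V E) (X : ι → Set V) (F : ι → E → Set E) (f e : E) : Prop :=
  ∃ i, G.IsNewEdge X i f ∧ f ∈ F i e ∧ e ∈ G.cut (X i)

theorem IsNewEdge.index_unique {i j : ι} {f : E} (hi : G.IsNewEdge X i f)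
    (hj : G.IsNewEdge X j f) : i = j := by
  have le_of_isNewEdge {k l : ι} (hk : G.IsNewEdge X k f) (hl : G.IsNewEdge X l f) : k ≤ l := by
    obtain ⟨-, v, hv, hnew⟩ := hk
    exact not_lt.1 fun hlt => hnew (Set.mem_biUnion hlt (hl.1 v hv))
  exact le_antisymm (le_of_isNewEdge hi hj) (le_of_isNewEdge hj hi)

theorem Walk.isNewEdge_of_mem_edges {a b : V} (p : G.Walk a b) {i : ι}
    (hX : ∀ w ∈ p.support, w ∈ X i) (hnew : ∀ w ∈ p.support, w ∉ ⋃ j < i, X j) {f : E}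
    (hf : f ∈ p.edges) : G.IsNewEdge X i f :=
  ⟨fun _ hv => hX _ (p.mem_support_of_mem_edges hf hv), _, (G.inc f).out_fst_mem,
    hnew _ (p.mem_support_of_mem_edges hf (G.inc f).out_fst_mem)⟩

theorem rightUnique_spliceStep (hF : ∀ i, (G.cut (X i)).PairwiseDisjoint (F i)) :
    Relator.RightUnique (G.SpliceStep X F) := by
  rintro f e e' ⟨i, hi, hfe, he⟩ ⟨j, hj, hfe', he'⟩
  obtain rfl := hi.index_unique hj
  exact (hF i).elim_set he he' f hfe hfe'

theorem not_spliceStep_of_mem_cut_iUnion {e e' : E} (he : e ∈ G.cut (⋃ i, X i)) :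
    ¬G.SpliceStep X F e e' := by
  rintro ⟨i, hi, -⟩
  exact notMem_cut_of_forall_mem (fun v hv => Set.mem_iUnion_of_mem i (hi.1 v hv)) he

-- Follow the walk of the `i`-th linking backwards until it meets an earlier set `X j`, for the
-- least possible `j`; it does so through an edge of `δ(X j)`, where the `j`-th linking takes over.
theorem exists_walk_spliceStep [WellFoundedLT ι]
    (hF : ∀ i, G.IsLinking (A ∪ ⋃ j < i, X j) (X i) (F i)) (i : ι) {e : E} {x y : V}
    (hxy : G.inc e = s(x, y)) (hx : x ∈ X i) (hxnew : x ∉ ⋃ j < i, X j) (hy : y ∉ X i) :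
    ∃ a ∈ A, ∃ p : G.Walk a x, (∀ w ∈ p.support, w ∈ ⋃ i, X i) ∧
      ∀ f ∈ p.edges, Relation.ReflTransGen (G.SpliceStep X F) f e := by
  induction i using WellFoundedLT.induction generalizing e x y with
  | ind i IH =>
    have heX : e ∈ G.cut (X i) := mem_cut_of_mem_of_notMem hxy hx hy
    obtain ⟨a, ha, p, hpX, hpF⟩ := (hF i).exists_walk hxy hx hy
    rcases p.exists_last_entry hxnew with hpnew | ⟨f, b, c, hf, q, hb, hqnew, hqs, hqe⟩
    · refine ⟨a, ha.resolve_right (hpnew a p.start_mem_support), p,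
        fun w hw => Set.mem_iUnion_of_mem i (hpX w hw), fun f hf => .single ?_⟩
      exact ⟨i, p.isNewEdge_of_mem_edges hpX hpnew hf, hpF f hf, heX⟩
    · have hqX : ∀ w ∈ (Walk.cons f hf q).support, w ∈ X i := fun w hw => hpX w (hqs hw)
      have hstep : ∀ g ∈ (Walk.cons f hf q).edges, G.SpliceStep X F g e := by
        intro g hg
        refine ⟨i, ⟨fun v hv => hqX v (Walk.mem_support_of_mem_edges _ hg hv), ?_⟩,
          hpF g (hqe hg), heX⟩
        rcases List.mem_cons.1 hg with rfl | hg
        · exact ⟨c, by simp [hf], hqnew c q.start_mem_support⟩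
        · exact (q.isNewEdge_of_mem_edges (fun w hw => hqX w (List.mem_cons_of_mem _ hw))
            hqnew hg).2
      obtain ⟨k, hki, hbk⟩ := Set.mem_iUnion₂.1 hb
      obtain ⟨j, hbj, hbnew⟩ := exists_mem_notMem_iUnion_lt (Set.mem_iUnion_of_mem k hbk)
      have hji : j < i := (not_lt.1 fun hkj => hbnew (Set.mem_biUnion hkj hbk)).trans_lt hki
      have hcj : c ∉ X j := fun hc => hqnew c q.start_mem_support (Set.mem_biUnion hji hc)
      obtain ⟨a', ha', r, hrX, hrF⟩ := IH j hji hf hbj hbnew hcj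
      refine ⟨a', ha', r.append (.cons f hf q), fun w hw => ?_, fun g hg => ?_⟩
      · rw [Walk.support_append, List.mem_append] at hw
        exact hw.elim (hrX w) fun hw => Set.mem_iUnion_of_mem i (hqX w (List.mem_of_mem_tail hw))
      · rw [Walk.edges_append, List.mem_append] at hg
        exact hg.elim (fun hg => (hrF g hg).tail (hstep f List.mem_cons_self))
          fun hg => .single (hstep g hg)

theorem Linked.iUnion_of_wellFoundedLT [WellFoundedLT ι]
    (h : ∀ i, G.Linked (A ∪ ⋃ j < i, X j) (X i)) : G.Linked A (⋃ i, X i) := by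
  choose F hF using h
  refine ⟨fun e => {f | Relation.ReflTransGen (G.SpliceStep X F) f e}, fun e _ => .refl, ?_, ?_⟩
  · intro e x y hxy hx hy
    obtain ⟨i, hi, hinew⟩ := exists_mem_notMem_iUnion_lt hx
    exact exists_walk_spliceStep hF i hxy hi hinew fun h => hy (Set.mem_iUnion_of_mem i h)
  · refine Set.pairwiseDisjoint_iff.2 fun e he e' he' ⟨f, hfe, hfe'⟩ => ?_
    have eq_of_reach : ∀ {g g'}, g ∈ G.cut (⋃ i, X i) →
        Relation.ReflTransGen (G.SpliceStep X F) g g' → g = g' := fun hg hgg' =>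
      hgg'.cases_head.resolve_right fun ⟨_, hstep, _⟩ => not_spliceStep_of_mem_cut_iUnion hg hstep
    rcases Relation.ReflTransGen.total_of_right_unique
      (rightUnique_spliceStep fun i => (hF i).pairwiseDisjoint) hfe hfe' with hee' | he'e
    · exact eq_of_reach he hee'
    · exact (eq_of_reach he' he'e).symm

end Splice

theorem Linked.iUnion {ι : Type*} {A : Set V} {X : ι → Set V} (h : ∀ i, G.Linked A (X i)) :
    G.Linked A (⋃ i, X i) := by
  obtain ⟨_, _⟩ := exists_wellFoundedLT ι
  exact Linked.iUnion_of_wellFoundedLT fun i => (h i).mono_left Set.subset_union_left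

theorem Linked.trans {A X Y : Set V} (hA : G.Linked A X) (hX : G.Linked X Y) (hXY : X ⊆ Y) :
    G.Linked A Y := by
  have h : G.Linked A (⋃ b : Bool, cond b Y X) := by
    refine Linked.iUnion_of_wellFoundedLT (Bool.forall_bool.2 ⟨?_, ?_⟩)
    · exact hA.mono_left Set.subset_union_left
    · exact hX.mono_left fun x hx => Or.inr (Set.mem_biUnion Bool.false_lt_true hx)
  rwa [← Set.union_eq_iUnion, Set.union_eq_self_of_subset_right hXY] at h

theorem Linked.hull {A B U : Set V} (h : G.Linked A U) (hB : Disjoint B U) :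
    G.Linked A (G.hull B U) := by
  obtain ⟨F, hF⟩ := h
  refine ⟨F, fun e he => hF.self_mem e (cut_hull_subset B U he), fun e x y hxy hx hy => ?_,
    hF.pairwiseDisjoint.subset (cut_hull_subset B U)⟩
  obtain ⟨hxU, hyU⟩ := mem_and_notMem_of_cut_hull hB hxy hx hy
  obtain ⟨a, ha, p, hpU, hpF⟩ := hF.exists_walk hxy hxU hyU
  exact ⟨a, ha, p, fun w hw => subset_hull hB (hpU w hw), hpF⟩

theorem Linked.isMinSepCut_cut_hull {A B U : Set V} (h : G.Linked A U) (hA : A ⊆ U)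
    (hB : Disjoint B U) : G.IsMinSepCut A B (G.cut (G.hull B U)) := by
  obtain ⟨F, hF⟩ := h
  refine isMinSepCut_cut_of_forall_mem_side (hA.trans (subset_hull hB)) (disjoint_hull B U)
    fun e x y hxy hx hy => ⟨?_, side_anti B (cut_hull_subset B U) (Set.notMem_compl_iff.1 hy)⟩
  obtain ⟨hxU, hyU⟩ := mem_and_notMem_of_cut_hull hB hxy hx hy
  obtain ⟨a, ha, p, hpU, -⟩ := hF.exists_walk hxy hxU hyU
  refine p.mem_side ha fun f hf hfU => ?_
  exact notMem_cut_of_forall_mem (fun v hv => hpU v (p.mem_support_of_mem_edges hf hv))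
    (cut_hull_subset B U hfU)

/-! ### Wave cuts -/

theorem SPathDisjoint.eq_of_mem_edges {s : V} {W : Set (G.SPath s)} (hW : G.SPathDisjoint W)
    {p q : G.SPath s} (hp : p ∈ W) (hq : q ∈ W) {e : E} (hep : e ∈ p.walk.edges)
    (heq : e ∈ q.walk.edges) : p = q :=
  by_contra fun hne => hW p hp q hq hne e hep heq

theorem SPathDisjoint.linked {s : V} {W : Set (G.SPath s)} (hW : G.SPathDisjoint W) {X : Set V}
    (hs : s ∈ X) (hX : G.lastEdges W = G.cut X) : G.Linked {s} X := by
  refine ⟨fun e => {f | ∃ p ∈ W, p.walk.edges.getLast? = some e ∧ f ∈ p.walk.edges}, ?_, ?_, ?_⟩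
  · intro e he
    obtain ⟨p, hp, hpe⟩ := hX.symm.subset he
    exact ⟨p, hp, hpe, List.mem_of_getLast? hpe⟩
  · intro e x y hxy hx hy
    have he : e ∈ G.cut X := mem_cut_of_mem_of_notMem hxy hx hy
    obtain ⟨p, hp, hpe⟩ := hX.symm.subset he
    obtain ⟨f, hf, x', y', hxy', hx', hy', q, hqX, hqe⟩ :=
      p.walk.exists_first_exit hs (List.mem_of_getLast? hpe) he
    obtain ⟨p', hp', hpf⟩ := hX.symm.subset (mem_cut_of_mem_of_notMem hxy' hx' hy')
    obtain rfl := hW.eq_of_mem_edges hp hp' hf (List.mem_of_getLast? hpf)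
    obtain rfl : e = f := Option.some.inj (hpe.symm.trans hpf)
    obtain rfl : x = x' := by
      rcases Sym2.eq_iff.1 (hxy.symm.trans hxy') with ⟨h, -⟩ | ⟨rfl, -⟩
      · exact h
      · exact absurd hx hy'
    exact ⟨s, rfl, q, hqX, fun f hf => ⟨p, hp, hpe, hqe hf⟩⟩
  · refine Set.pairwiseDisjoint_iff.2 ?_
    rintro e - e' - ⟨f, ⟨p, hp, hpe, hfp⟩, q, hq, hqe, hfq⟩
    obtain rfl := hW.eq_of_mem_edges hp hq hfp hfq
    exact Option.some.inj (hpe.symm.trans hqe)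

theorem IsLinking.exists_sPath {s : V} {X : Set V} {F : E → Set E} (h : G.IsLinking {s} X F)
    {e : E} (he : e ∈ G.cut X) :
    ∃ p : G.SPath s, p.walk.edges.getLast? = some e ∧ ∀ f ∈ p.walk.edges, f ∈ F e := by
  have heF := h.self_mem e he
  obtain ⟨x, y, hxy, hx, hy⟩ := he
  obtain ⟨_, rfl, p, hpX, hpF⟩ := h.exists_walk hxy hx hy
  obtain ⟨q, hnodup, hqs, hqe⟩ := p.exists_nodup
  have hyq : y ∉ q.support := fun hyq => hy (hpX y (hqs hyq))
  have hedges : (q.append (.cons e hxy (.nil y))).edges = q.edges ++ [e] := Walk.edges_append _ _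
  refine ⟨⟨y, q.append (.cons e hxy (.nil y)), ?_, by simp [hedges]⟩, by simp [hedges], ?_⟩
  · rw [Walk.support_append]
    simpa using hnodup.concat hyq
  · intro f hf
    rw [hedges, List.mem_append, List.mem_singleton] at hf
    rcases hf with hf | rfl
    · exact hpF f (hqe hf)
    · exact heF

theorem Linked.exists_sPathDisjoint {s : V} {X : Set V} (h : G.Linked {s} X) :
    ∃ W : Set (G.SPath s), G.SPathDisjoint W ∧ G.lastEdges W = G.cut X := by
  obtain ⟨F, hF⟩ := h
  choose P hPlast hPF using fun e : G.cut X => hF.exists_sPath e.2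
  refine ⟨Set.range P, ?_, ?_⟩
  · rintro _ ⟨e, rfl⟩ _ ⟨e', rfl⟩ hne f hf hf'
    exact hne (congrArg P (Subtype.ext
      (hF.pairwiseDisjoint.elim_set e.2 e'.2 f (hPF e f hf) (hPF e' f hf'))))
  · ext e
    constructor
    · rintro ⟨_, ⟨e', rfl⟩, he⟩
      exact Option.some.inj ((hPlast e').symm.trans he) ▸ e'.2
    · exact fun he => ⟨P ⟨e, he⟩, ⟨_, rfl⟩, hPlast _⟩

theorem Linked.isWaveCut_cut_hull {s t : V} {U : Set V} (h : G.Linked {s} U) (hs : s ∈ U)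
    (ht : t ∉ U) : G.IsWaveCut s t (G.cut (G.hull {t} U)) := by
  have hdisj : Disjoint {t} U := Set.disjoint_singleton_left.2 ht
  obtain ⟨W, hW, hlast⟩ := (h.hull hdisj).exists_sPathDisjoint
  refine ⟨W, ⟨hW, ?_⟩, hlast⟩
  rw [hlast]
  exact h.isMinSepCut_cut_hull (Set.singleton_subset_iff.2 hs) hdisj

theorem IsWaveCut.isMinSepCut {s t : V} {C : Set E} (h : G.IsWaveCut s t C) :
    G.IsMinSepCut {s} {t} C := by
  obtain ⟨W, hW, rfl⟩ := h
  exact hW.2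

theorem IsWaveCut.linked {s t : V} {X : Set V} (h : G.IsWaveCut s t (G.cut X)) (hs : s ∈ X) :
    G.Linked {s} X := by
  obtain ⟨W, hW, hlast⟩ := h
  exact hW.1.linked hs hlast

theorem IsMinSepCut.cutLE_cut_hull {s t : V} {D : Set E} (hD : G.IsMinSepCut {s} {t} D)
    {U : Set V} (hU : G.side {s} D ⊆ U) (ht : t ∉ U) :
    G.CutLE s t D (G.cut (G.hull {t} U)) := by
  have hs : s ∈ G.side {s} D := subset_side {s} D rfl
  have hUhull : U ⊆ G.hull {t} U := subset_hull (Set.disjoint_singleton_left.2 ht)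
  exact ⟨G.side {s} D, G.hull {t} U, hs, fun h => ht (hU h), hD.cut_side.symm, hUhull (hU hs),
    Set.disjoint_singleton_left.1 (disjoint_hull {t} U), rfl, hU.trans hUhull⟩

theorem IsMinSepCut.cut_hull_cutLE {s t : V} {D : Set E} (hD : G.IsMinSepCut {s} {t} D)
    {U : Set V} (hs : s ∈ U) (hU : U ⊆ G.side {s} D) :
    G.CutLE s t (G.cut (G.hull {t} U)) D := by
  have hdisj : Disjoint {t} (G.side {s} D) := hD.1.disjoint_side
  have hmono : G.hull {t} U ⊆ G.hull {t} (G.side {s} D) := hull_mono hdisj hU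
  have hsU : s ∈ G.hull {t} U := subset_hull (hdisj.mono_right hU) hs
  exact ⟨G.hull {t} U, G.hull {t} (G.side {s} D), hsU,
    Set.disjoint_singleton_left.1 (disjoint_hull {t} _), rfl, hmono hsU,
    Set.disjoint_singleton_left.1 (disjoint_hull {t} _), hD.cut_hull_side.symm, hmono⟩

theorem exists_isWaveCut_sup {s t : V} (hst : s ≠ t) {S : Set (Set E)}
    (hS : ∀ C ∈ S, G.IsWaveCut s t C) :
    ∃ C, G.IsWaveCut s t C ∧ (∀ D ∈ S, G.CutLE s t D C) ∧
      ∀ C', G.IsMinSepCut {s} {t} C' → (∀ D ∈ S, G.CutLE s t D C') → G.CutLE s t C C' := by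
  set X : Option S → Set V := fun i => i.elim {s} fun D => G.side {s} D with hX
  have hlinked : G.Linked {s} (⋃ i, X i) := by
    refine Linked.iUnion (Option.forall.2 ⟨Linked.refl {s}, fun D => ?_⟩)
    have hD := hS D D.2
    exact (hD.isMinSepCut.cut_side.symm ▸ hD).linked (subset_side {s} _ rfl)
  have hs : s ∈ ⋃ i, X i := Set.mem_iUnion_of_mem none rfl
  have ht : t ∉ ⋃ i, X i := by
    simp only [Set.mem_iUnion, not_exists, Option.forall, hX]
    exact ⟨hst.symm, fun D =>
      Set.disjoint_singleton_left.1 (hS D D.2).isMinSepCut.1.disjoint_side⟩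
  refine ⟨_, hlinked.isWaveCut_cut_hull hs ht, fun D hD => ?_, fun C' hC' hub => ?_⟩
  · exact (hS D hD).isMinSepCut.cutLE_cut_hull (Set.subset_iUnion X (some ⟨D, hD⟩)) ht
  · refine hC'.cut_hull_cutLE hs (Set.iUnion_subset (Option.forall.2 ⟨?_, fun D => ?_⟩))
    · exact subset_side {s} C'
    · exact (hub D D.2).side_subset_side

theorem exists_isWaveCut_inf {s t : V} (hst : s ≠ t) {S : Set (Set E)}
    (hS : ∀ C ∈ S, G.IsWaveCut s t C) :
    ∃ C, G.IsWaveCut s t C ∧ (∀ D ∈ S, G.CutLE s t C D) ∧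
      ∀ C', G.IsWaveCut s t C' → (∀ D ∈ S, G.CutLE s t C' D) → G.CutLE s t C' C := by
  obtain ⟨C, hC, hub, hlub⟩ := exists_isWaveCut_sup (G := G) hst
    (S := {C | G.IsWaveCut s t C ∧ ∀ D ∈ S, G.CutLE s t C D}) fun _ h => h.1
  exact ⟨C, hC, fun D hD => hlub D (hS D hD).isMinSepCut fun _ h => h.2 D hD,
    fun C' hC' hle => hub C' ⟨hC', hle⟩⟩

theorem IsWaveCut.cut_subset_cut_of_linked {s t : V} {X Z : Set V}
    (hX : G.IsWaveCut s t (G.cut X)) (hmax : ∀ D, G.IsWaveCut s t D → G.CutLE s t D (G.cut X))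
    (hs : s ∈ X) (hXZ : X ⊆ Z) (ht : t ∉ Z) (h : G.Linked X Z) : G.cut X ⊆ G.cut Z := by
  have hZ : G.IsWaveCut s t (G.cut (G.hull {t} Z)) :=
    ((hX.linked hs).trans h hXZ).isWaveCut_cut_hull (hXZ hs) ht
  have hle : G.CutLE s t (G.cut X) (G.cut (G.hull {t} Z)) :=
    hX.isMinSepCut.cutLE_cut_hull
      ((side_subset (Set.singleton_subset_iff.2 hs) subset_rfl).trans hXZ) ht
  rw [hle.antisymm hX.isMinSepCut hZ.isMinSepCut (hmax _ hZ)]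
  exact cut_hull_subset {t} Z

/-! ### Contraction -/

section Contract

variable {X Y : Set V} {s : V}

open Classical in
/-- The map on vertices that underlies the contraction of `X` to `s`. -/
noncomputable def collapse (X : Set V) (s v : V) : V := if v ∈ X then s else v

theorem collapse_of_mem {v : V} (hv : v ∈ X) : collapse X s v = s := if_pos hv

theorem collapse_of_notMem {v : V} (hv : v ∉ X) : collapse X s v = v := if_neg hv

theorem subset_preimage_collapse (hs : s ∈ Y) : X ⊆ collapse X s ⁻¹' Y := fun v hv => by
  rwa [Set.mem_preimage, collapse_of_mem hv]

theorem notMem_preimage_collapse {v : V} (hvX : v ∉ X) (hvY : v ∉ Y) :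
    v ∉ collapse X s ⁻¹' Y := by
  rwa [Set.mem_preimage, collapse_of_notMem hvX]

theorem preimage_collapse_singleton (hs : s ∈ X) : collapse X s ⁻¹' {s} = X := by
  refine Set.Subset.antisymm (fun v hv => by_contra fun hvX => ?_) (subset_preimage_collapse rfl)
  rw [Set.mem_preimage, collapse_of_notMem hvX, Set.mem_singleton_iff] at hv
  exact hvX (hv ▸ hs)

theorem contract_inc (e) : (G.contract X s).inc e = Sym2.map (collapse X s) (G.inc e.1) := rfl

theorem mem_cut_contract {e} :
    e ∈ (G.contract X s).cut Y ↔ e.1 ∈ G.cut (collapse X s ⁻¹' Y) := by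
  induction he : G.inc e.1 with
  | _ x y =>
    have he' : (G.contract X s).inc e = s(collapse X s x, collapse X s y) := by
      rw [contract_inc, he, Sym2.map_mk]
    rw [mem_cut_iff he, mem_cut_iff he', Set.mem_preimage, Set.mem_preimage]

theorem image_val_cut_contract :
    Subtype.val '' (G.contract X s).cut Y = G.cut (collapse X s ⁻¹' Y) := by
  ext e
  refine ⟨fun ⟨e', he', h⟩ => h ▸ mem_cut_contract.1 he', fun he => ?_⟩
  have hdiag : ¬(Sym2.map (collapse X s) (G.inc e)).IsDiag := by
    obtain ⟨x, y, hxy, hx, hy⟩ := he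
    rw [hxy, Sym2.map_mk, Sym2.mk_isDiag_iff]
    exact fun h => hy (h ▸ hx : collapse X s y ∈ Y)
  exact ⟨⟨e, hdiag⟩, mem_cut_contract.2 he, rfl⟩

theorem IsMinSepCut.contract {B : Set V} (hsY : s ∈ Y) (hBX : Disjoint B X) (hBY : Disjoint B Y)
    (h : G.IsMinSepCut {s} B (G.cut (collapse X s ⁻¹' Y))) :
    (G.contract X s).IsMinSepCut {s} B ((G.contract X s).cut Y) := by
  refine ⟨⟨Y, Set.singleton_subset_iff.2 hsY, fun b hb => Set.disjoint_left.1 hBY hb, rfl⟩, ?_⟩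
  rintro _ ⟨Z, hsZ, hBZ, rfl⟩ hsub
  have hcollapse_s : collapse X s s = s := by unfold collapse; split_ifs <;> rfl
  refine Subtype.val_injective.image_injective (?_ : _ '' _ = _ '' _)
  rw [image_val_cut_contract, image_val_cut_contract]
  refine h.2 _ ⟨_, ?_, fun b hb => ?_, rfl⟩ ?_
  · rwa [Set.singleton_subset_iff, Set.mem_preimage, hcollapse_s, ← Set.singleton_subset_iff]
  · exact notMem_preimage_collapse (Set.disjoint_left.1 hBX hb) (hBZ b hb)
  · rw [← image_val_cut_contract, ← image_val_cut_contract]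
    exact Set.image_mono hsub

theorem exists_inc_eq_of_contract_inc_eq (hs : s ∈ X) {f} {a v : V} (hv : v ∉ X)
    (hf : (G.contract X s).inc f = s(a, v)) :
    ∃ u, G.inc f.1 = s(u, v) ∧ collapse X s u = a := by
  rw [contract_inc] at hf
  obtain ⟨w, hw, hwv⟩ := Sym2.mem_map.1 (hf ▸ Sym2.mem_mk_right a v)
  have hwX : w ∉ X := fun hwX => hv (hwv ▸ (collapse_of_mem hwX).symm ▸ hs)
  obtain rfl : w = v := (collapse_of_notMem hwX).symm.trans hwv
  obtain ⟨u, hu⟩ := hw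
  rw [Sym2.eq_swap] at hu
  rw [hu, Sym2.map_mk, hwv, Sym2.congr_left] at hf
  exact ⟨u, hu, hf⟩

-- Lift `q` from its end backwards; once the lift enters `X` it is stopped there.
theorem Walk.exists_lift_contract (hs : s ∈ X) {a b : V} (q : (G.contract X s).Walk a b) {b' : V}
    (hb : collapse X s b' = b) :
    ∃ a', (a' ∈ X ∨ collapse X s a' = a) ∧ ∃ p : G.Walk a' b',
      (∀ w ∈ p.support, collapse X s w ∈ q.support) ∧
        ∀ f ∈ p.edges, f ∈ q.edges.map Subtype.val := by
  induction q with
  | nil => exact ⟨b', Or.inr hb, .nil b', by simpa using hb, by simp⟩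
  | cons f hf q ih =>
    obtain ⟨a', ha', p, hpq, hpe⟩ := ih hb
    have hpq' : ∀ w ∈ p.support, collapse X s w ∈ (Walk.cons f hf q).support :=
      fun w hw => List.mem_cons_of_mem _ (hpq w hw)
    have hpe' : ∀ g ∈ p.edges, g ∈ (Walk.cons f hf q).edges.map Subtype.val :=
      fun g hg => List.mem_cons_of_mem _ (hpe g hg)
    by_cases haX : a' ∈ X
    · exact ⟨a', Or.inl haX, p, hpq', hpe'⟩
    · obtain rfl := (collapse_of_notMem haX).symm.trans (ha'.resolve_left haX)
      obtain ⟨u, hu, hua⟩ := exists_inc_eq_of_contract_inc_eq hs haX hf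
      exact ⟨u, Or.inr hua, .cons f.1 hu p,
        List.forall_mem_cons.2 ⟨hua ▸ List.mem_cons_self, hpq'⟩,
        List.forall_mem_cons.2 ⟨List.mem_cons_self, hpe'⟩⟩

theorem Linked.of_contract (hs : s ∈ X) (h : (G.contract X s).Linked {s} Y) :
    G.Linked X (collapse X s ⁻¹' Y) := by
  obtain ⟨F, hF⟩ := h
  refine ⟨fun e => {f | ∃ e' f', f' ∈ F e' ∧ e'.1 = e ∧ f'.1 = f}, fun e he => ?_,
    fun e x y hxy hx hy => ?_, Set.pairwiseDisjoint_iff.2 fun e₁ h₁ e₂ h₂ hne => ?_⟩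
  · obtain ⟨e', he', rfl⟩ := image_val_cut_contract.symm.subset he
    exact ⟨e', e', hF.self_mem e' he', rfl, rfl⟩
  · obtain ⟨e', -, rfl⟩ :=
      image_val_cut_contract.symm.subset (mem_cut_of_mem_of_notMem hxy hx hy)
    have hxy' : (G.contract X s).inc e' = s(collapse X s x, collapse X s y) := by
      rw [contract_inc, hxy, Sym2.map_mk]
    obtain ⟨_, rfl, q, hqY, hqF⟩ := hF.exists_walk hxy' hx hy
    obtain ⟨a, ha, p, hpq, hpe⟩ := q.exists_lift_contract hs rfl
    have haX : a ∈ X :=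
      by_contra fun haX => haX ((collapse_of_notMem haX).symm.trans (ha.resolve_left haX) ▸ hs)
    refine ⟨a, haX, p, fun w hw => hqY _ (hpq w hw), fun f hf => ?_⟩
    obtain ⟨f', hf', rfl⟩ := List.mem_map.1 (hpe f hf)
    exact ⟨e', f', hqF f' hf', rfl, rfl⟩
  · obtain ⟨_, ⟨e₁, f₁, hf₁, rfl, rfl⟩, e₂, f₂, hf₂, rfl, hf⟩ := hne
    obtain rfl := Subtype.val_injective hf
    exact congrArg _ (hF.pairwiseDisjoint.elim_set (mem_cut_contract.2 h₁)
      (mem_cut_contract.2 h₂) _ hf₁ hf₂)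

end Contract

/-- The path of length one along an edge at `s`. The trivial wave consists of these paths. -/
def SPath.ofEdge {s y : V} (e : E) (he : G.inc e = s(s, y)) : G.SPath s where
  last := y
  walk := .cons e he (.nil y)
  support_nodup := by
    have hne : s ≠ y := fun h => G.not_isDiag e (he ▸ h)
    simpa using hne
  edges_ne_nil := List.cons_ne_nil _ _

theorem SPath.exists_eq_ofEdge {s : V} (p : G.SPath s) (h : p.walk.edges.length = 1) :
    ∃ (y : V) (e : E) (he : G.inc e = s(s, y)), p = ofEdge e he := by
  obtain ⟨y, p, _, _⟩ := p
  cases p with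
  | nil => simp at h
  | cons e he q =>
    cases q with
    | nil => exact ⟨y, e, he, rfl⟩
    | cons => simp at h

theorem lastEdges_length_eq_one (s : V) :
    G.lastEdges {p : G.SPath s | p.walk.edges.length = 1} = G.cut {s} := by
  ext e
  constructor
  · rintro ⟨p, hp, hpe⟩
    obtain ⟨y, e, he, rfl⟩ := p.exists_eq_ofEdge hp
    obtain rfl := Option.some.inj hpe
    exact mem_cut_of_mem_of_notMem he rfl fun h => G.not_isDiag e (he ▸ h.symm)
  · rintro ⟨_, y, he, rfl, -⟩
    exact ⟨.ofEdge e he, rfl, rfl⟩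

theorem sPathDisjoint_length_eq_one (s : V) :
    G.SPathDisjoint {p : G.SPath s | p.walk.edges.length = 1} := by
  rintro p hp q hq hne e hep heq
  obtain ⟨y, f, hf, rfl⟩ := p.exists_eq_ofEdge hp
  obtain ⟨z, g, hg, rfl⟩ := q.exists_eq_ofEdge hq
  obtain rfl := List.mem_singleton.1 hep
  obtain rfl := List.mem_singleton.1 heq
  obtain rfl := Sym2.congr_right.1 (hf.symm.trans hg)
  exact hne rfl

theorem isWave_length_eq_one {s : V} {B : Set V} (h : G.IsMinSepCut {s} B (G.cut {s})) :
    G.IsWave s B {p | p.walk.edges.length = 1} :=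
  ⟨sPathDisjoint_length_eq_one s, (lastEdges_length_eq_one s).symm ▸ h⟩

theorem IsWaveCut.contract_lastEdges_eq {s t : V} {X : Set V} (hX : G.IsWaveCut s t (G.cut X))
    (hmax : ∀ D, G.IsWaveCut s t D → G.CutLE s t D (G.cut X)) (hs : s ∈ X) (ht : t ∉ X)
    {W : Set ((G.contract X s).SPath s)} (hW : (G.contract X s).IsWave s {t} W) :
    (G.contract X s).lastEdges W = (G.contract X s).inci s := by
  obtain ⟨hdisj, ⟨Y, hsY, htY, hWY⟩, hmin⟩ := hW
  rw [Set.singleton_subset_iff] at hsY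
  have hlinked : G.Linked X (collapse X s ⁻¹' Y) := (hdisj.linked hsY hWY).of_contract hs
  have hsub : G.cut X ⊆ G.cut (collapse X s ⁻¹' Y) :=
    hX.cut_subset_cut_of_linked hmax hs (subset_preimage_collapse hsY)
      (notMem_preimage_collapse ht (htY t rfl)) hlinked
  rw [inci_eq_cut_singleton]
  refine (hmin _ ⟨{s}, subset_rfl, fun b hb hbs => ht (hb ▸ hbs ▸ hs), rfl⟩ fun e he => ?_).symm
  rw [mem_cut_contract, preimage_collapse_singleton hs] at he
  exact hWY ▸ mem_cut_contract.2 (hsub he)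

theorem IsMinSepCut.isWave_contract {s : V} {B X : Set V} (h : G.IsMinSepCut {s} B (G.cut X))
    (hs : s ∈ X) (hB : Disjoint B X) :
    (G.contract X s).IsWave s B {p | p.walk.edges.length = 1} := by
  refine isWave_length_eq_one (IsMinSepCut.contract rfl hB ?_ ?_)
  · exact hB.mono_right (Set.singleton_subset_iff.2 hs)
  · rwa [preimage_collapse_singleton hs]

end Multigraph

theorem waveCuts_completeLattice_general {V : Type u} {E : Type v} (G : Multigraph V E)
    (s t : V) (hst : s ≠ t) :
    (∀ S : Set (Set E), (∀ C ∈ S, G.IsWaveCut s t C) →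
      (∃ C, G.IsWaveCut s t C ∧ (∀ D ∈ S, G.CutLE s t D C) ∧
        ∀ C', G.IsMinSepCut {s} {t} C' → (∀ D ∈ S, G.CutLE s t D C') →
          G.CutLE s t C C') ∧
      (∃ C, G.IsWaveCut s t C ∧ (∀ D ∈ S, G.CutLE s t C D) ∧
        ∀ C', G.IsWaveCut s t C' → (∀ D ∈ S, G.CutLE s t C' D) →
          G.CutLE s t C' C)) ∧
    (∀ (C : Set E) (X : Set V), G.IsWaveCut s t C →
      (∀ D, G.IsWaveCut s t D → G.CutLE s t D C) →
      s ∈ X → t ∉ X → C = G.cut X →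
      (∀ W : Set ((G.contract X s).SPath s), (G.contract X s).IsWave s {t} W →
        (G.contract X s).lastEdges W = (G.contract X s).inci s) ∧
      (G.contract X s).IsWave s {t}
        {p : (G.contract X s).SPath s | p.walk.edges.length = 1}) := by
  refine ⟨fun S hS =>
    ⟨Multigraph.exists_isWaveCut_sup hst hS, Multigraph.exists_isWaveCut_inf hst hS⟩, ?_⟩
  rintro _ X hX hmax hs ht rfl
  exact ⟨fun W hW => hX.contract_lastEdges_eq hmax hs ht hW,
    hX.isMinSepCut.isWave_contract hs (Set.disjoint_singleton_left.2 ht)⟩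

/-- The cuts of `st`-waves ordered by `≼` form a complete lattice which is a
sup-sublattice of the `⊆`-minimal `st`-cuts: every family of wave cuts has a
least upper bound among all minimal `st`-cuts which is itself a wave cut, and a
greatest lower bound among the wave cuts. Moreover, contracting the `s`-side of
the largest wave cut to `s` yields a graph in which every `st`-wave is trivial
(its set of last edges is `δ(s)`) and the trivial `st`-wave exists. -/
theorem waveCuts_completeLattice {V : Type u} {E : Type v} (G : Multigraph V E)
    (s t : V) (hconn : G.Connected) (hst : s ≠ t) :
    (∀ S : Set (Set E), (∀ C ∈ S, G.IsWaveCut s t C) →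
      (∃ C, G.IsWaveCut s t C ∧ (∀ D ∈ S, G.CutLE s t D C) ∧
        ∀ C', G.IsMinSepCut {s} {t} C' → (∀ D ∈ S, G.CutLE s t D C') →
          G.CutLE s t C C') ∧
      (∃ C, G.IsWaveCut s t C ∧ (∀ D ∈ S, G.CutLE s t C D) ∧
        ∀ C', G.IsWaveCut s t C' → (∀ D ∈ S, G.CutLE s t C' D) →
          G.CutLE s t C' C)) ∧
    (∀ (C : Set E) (X : Set V), G.IsWaveCut s t C →
      (∀ D, G.IsWaveCut s t D → G.CutLE s t D C) →
      s ∈ X → t ∉ X → C = G.cut X →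
      (∀ W : Set ((G.contract X s).SPath s), (G.contract X s).IsWave s {t} W →
        (G.contract X s).lastEdges W = (G.contract X s).inci s) ∧
      (G.contract X s).IsWave s {t}
        {p : (G.contract X s).SPath s | p.walk.edges.length = 1}) :=
  waveCuts_completeLattice_general G s t hst
end
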